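/- arXiv:2202.06759 — 2 statements merged into one kernel-verified Lean document; each statement's English description precedes it below -/
import Mathlib

section
/- Let ε > 0 be fixed, let p > 2 be a fixed prime, and let Φ : ℝ → ℝ be a nonnegative Schwartz-class function. For each n ∈ ℕ set q := pⁿ, and let α₁(n), α₂(n), α₃(n) be integers coprime to p (allowed to vary with n) satisfying p > s_p(α₁(n),α₂(n),α₃(n)) for every n. Let N = N(n) be any real number with N ≥ q^{11/18+ε}. Then, as n → ∞, the difference (q/N³) · Σ_{(x₁,x₂,x₃) ∈ ℤ³, gcd(x₁x₂x₃,p)=1, α₁(n)x₁²+α₂(n)x₂²+α₃(n)x₃² ≡ 0 (mod q)} Φ(x₁/N)Φ(x₂/N)Φ(x₃/N) − Φ̂(0)³ · C_p(α₁(n),α₂(n),α₃(n)) tends to 0. -/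
open Matrix
open scoped SchwartzMap FourierTransform

/-- The sup norm of an integer vector, as a natural number. -/
def ht (x : Fin 3 → ℤ) : ℕ := Finset.univ.sup fun i => (x i).natAbs

/-- The bilinear form of the diagonal quadratic form with coefficients `a`. -/
def diagBilin {R : Type*} [CommRing R] (a x y : Fin 3 → R) : R :=
  a 0 * x 0 * y 0 + a 1 * x 1 * y 1 + a 2 * x 2 * y 2

/-- The coefficients of the adjugate of the diagonal quadratic form with coefficients `a`. -/
def adjCoeff {R : Type*} [CommRing R] (a : Fin 3 → R) : Fin 3 → R :=
  ![a 1 * a 2, a 0 * a 2, a 0 * a 1]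

/-- Primitive integer vectors, in Bezout form. -/
def IsPrimVec (x : Fin 3 → ℤ) : Prop := ∃ h : Fin 3 → ℤ, h ⬝ᵥ x = 1

lemma natAbs_le_ht (x : Fin 3 → ℤ) (i : Fin 3) : (x i).natAbs ≤ ht x :=
  Finset.le_sup (f := fun i => (x i).natAbs) (Finset.mem_univ i)

lemma abs_le_ht (x : Fin 3 → ℤ) (i : Fin 3) : |x i| ≤ ht x := by
  rw [Int.abs_eq_natAbs]
  exact_mod_cast natAbs_le_ht x i

lemma exists_natAbs_eq_ht (x : Fin 3 → ℤ) : ∃ i, (x i).natAbs = ht x := by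
  obtain ⟨i, -, hi⟩ := Finset.exists_mem_eq_sup Finset.univ Finset.univ_nonempty
    (fun i => (x i).natAbs)
  exact ⟨i, hi.symm⟩

lemma ht_le_iff (x : Fin 3 → ℤ) (M : ℕ) : ht x ≤ M ↔ ∀ i, (x i).natAbs ≤ M := by
  simp [ht, Finset.sup_le_iff]

lemma ht_eq_zero_iff (x : Fin 3 → ℤ) : ht x = 0 ↔ x = 0 := by
  rw [← Nat.le_zero, ht_le_iff]
  simp [funext_iff]

lemma ht_smul (t : ℤ) (x : Fin 3 → ℤ) : ht (t • x) = t.natAbs * ht x := by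
  apply le_antisymm
  · rw [ht_le_iff]
    intro i
    simp only [Pi.smul_apply, smul_eq_mul, Int.natAbs_mul]
    exact Nat.mul_le_mul_left _ (natAbs_le_ht x i)
  · obtain ⟨i, hi⟩ := exists_natAbs_eq_ht x
    rw [← hi, ← Int.natAbs_mul]
    exact natAbs_le_ht (t • x) i

lemma ht_cross_le (x y : Fin 3 → ℤ) : ht (x ⨯₃ y) ≤ 2 * ht x * ht y := by
  rw [ht_le_iff]
  have key : ∀ i j k l, (x i * y j - x k * y l).natAbs ≤ 2 * ht x * ht y := by
    intro i j k l
    calc (x i * y j - x k * y l).natAbs ≤ (x i * y j).natAbs + (x k * y l).natAbs :=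
          Int.natAbs_sub_le _ _
      _ ≤ ht x * ht y + ht x * ht y := by
          rw [Int.natAbs_mul, Int.natAbs_mul]
          exact add_le_add (Nat.mul_le_mul (natAbs_le_ht _ _) (natAbs_le_ht _ _))
            (Nat.mul_le_mul (natAbs_le_ht _ _) (natAbs_le_ht _ _))
      _ = _ := by ring
  intro i
  fin_cases i <;> simp [cross_apply, key]

/-- Every nonzero integer vector is a positive multiple of a primitive one. -/
lemma exists_smul_isPrimVec {x : Fin 3 → ℤ} (hx : x ≠ 0) :
    ∃ (t : ℕ) (y : Fin 3 → ℤ), 0 < t ∧ IsPrimVec y ∧ x = (t : ℤ) • y := by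
  obtain ⟨t, ht⟩ := (IsPrincipalIdealRing.principal (Ideal.span (Set.range x))).principal
  have hdvd : ∀ i, t ∣ x i := fun i => by
    rw [← Ideal.mem_span_singleton]
    rw [Ideal.submodule_span_eq] at ht
    rw [← ht]
    exact Ideal.subset_span ⟨i, rfl⟩
  choose y hy using hdvd
  have ht0 : t ≠ 0 := by
    rintro rfl
    exact hx (funext fun i => by simp [hy i])
  have hmem : t ∈ Ideal.span (Set.range x) := by
    rw [ht]; exact Ideal.mem_span_singleton_self t
  rw [Ideal.mem_span_range_iff_exists_fun] at hmem
  obtain ⟨c, hc⟩ := hmem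
  have hcy : c ⬝ᵥ y = 1 := by
    apply mul_left_cancel₀ ht0
    rw [dotProduct, Finset.mul_sum, mul_one]
    conv_rhs => rw [← hc]
    exact Finset.sum_congr rfl fun i _ => by rw [hy i]; ring
  rcases lt_or_gt_of_ne ht0 with h | h
  · refine ⟨t.natAbs, -y, by omega, ⟨-c, by simpa using hcy⟩, ?_⟩
    ext i
    have : (t.natAbs : ℤ) = -t := by omega
    simp [this, hy i]
  · refine ⟨t.natAbs, y, by omega, ⟨c, hcy⟩, ?_⟩
    ext i
    have : (t.natAbs : ℤ) = t := by omega
    simp [this, hy i]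

lemma IsPrimVec.ne_zero {x : Fin 3 → ℤ} (hx : IsPrimVec x) : x ≠ 0 := by
  rintro rfl
  obtain ⟨h, hh⟩ := hx
  simp at hh

lemma IsPrimVec.exists_not_dvd {x : Fin 3 → ℤ} (hx : IsPrimVec x) {p : ℤ} (hp : Prime p) :
    ∃ i, ¬ p ∣ x i := by
  by_contra! hcon
  obtain ⟨h, hh⟩ := hx
  apply hp.not_isUnit
  rw [isUnit_iff_dvd_one, ← hh]
  exact Finset.dvd_sum fun i _ => (hcon i).mul_left _

/-- Vectors with vanishing cross product with a primitive vector are its multiples. -/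
lemma IsPrimVec.eq_smul_of_cross_eq_zero {x y h : Fin 3 → ℤ} (hx : h ⬝ᵥ x = 1)
    (hxy : x ⨯₃ y = 0) : y = (h ⬝ᵥ y) • x := by
  have h0 := congrFun hxy 0
  have h1 := congrFun hxy 1
  have h2 := congrFun hxy 2
  simp only [cross_apply, dotProduct, Fin.sum_univ_three] at *
  simp at h0 h1 h2
  ext i
  fin_cases i <;> simp
  · linear_combination -y 0 * hx - h 1 * h2 + h 2 * h1
  · linear_combination -y 1 * hx + h 0 * h2 - h 2 * h0
  · linear_combination -y 2 * hx - h 0 * h1 + h 1 * h0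

/-- Lagrange's identity for a diagonal form. -/
lemma diagBilin_adj_cross {R : Type*} [CommRing R] (a x y : Fin 3 → R) :
    diagBilin (adjCoeff a) (x ⨯₃ y) (x ⨯₃ y) =
      diagBilin a x x * diagBilin a y y - diagBilin a x y ^ 2 := by
  simp [diagBilin, adjCoeff, cross_apply]
  ring

lemma diagBilin_comm {R : Type*} [CommRing R] (a x y : Fin 3 → R) :
    diagBilin a x y = diagBilin a y x := by
  simp only [diagBilin]; ring

/-- The Gram determinant of three vectors for a diagonal form. -/
lemma gram_det_diagBilin {R : Type*} [CommRing R] (a x y z : Fin 3 → R) :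
    a 0 * a 1 * a 2 * (x ⬝ᵥ (y ⨯₃ z)) ^ 2 =
      diagBilin a x x * (diagBilin a y y * diagBilin a z z - diagBilin a y z ^ 2)
      - diagBilin a x y * (diagBilin a x y * diagBilin a z z - diagBilin a y z * diagBilin a x z)
      + diagBilin a x z * (diagBilin a x y * diagBilin a y z - diagBilin a y y * diagBilin a x z)
      := by
  simp [diagBilin, cross_apply, dotProduct, Fin.sum_univ_three]
  ring

lemma diagBilin_smul_self (a : Fin 3 → ℤ) (t : ℤ) (x : Fin 3 → ℤ) :
    diagBilin a (t • x) (t • x) = t ^ 2 * diagBilin a x x := by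
  simp [diagBilin]; ring

/-- Congruent projective solutions are orthogonal to the squared modulus. -/
lemma sq_dvd_diagBilin_of_dvd_cross {P : ℤ} {a x y : Fin 3 → ℤ} {i : Fin 3}
    (h2 : IsCoprime (P ^ 2) 2) (hxi : IsCoprime (P ^ 2) (x i)) (hyi : IsCoprime (P ^ 2) (y i))
    (hx : P ^ 2 ∣ diagBilin a x x) (hy : P ^ 2 ∣ diagBilin a y y)
    (hxy : ∀ j, P ∣ x i * y j - y i * x j) : P ^ 2 ∣ diagBilin a x y := by
  choose e he using hxy
  have key : P ^ 2 ∣ 2 * y i * (P * diagBilin a x e) := by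
    have h : 2 * y i * (P * diagBilin a x e) = x i ^ 2 * diagBilin a y y
        - y i ^ 2 * diagBilin a x x - P ^ 2 * diagBilin a e e := by
      have e0 := he 0
      have e1 := he 1
      have e2 := he 2
      simp only [diagBilin]
      have f0 : x i * y 0 = y i * x 0 + P * e 0 := by linarith
      have f1 : x i * y 1 = y i * x 1 + P * e 1 := by linarith
      have f2 : x i * y 2 = y i * x 2 + P * e 2 := by linarith
      have : x i ^ 2 * (a 0 * y 0 * y 0 + a 1 * y 1 * y 1 + a 2 * y 2 * y 2) =
        a 0 * (x i * y 0) ^ 2 + a 1 * (x i * y 1) ^ 2 + a 2 * (x i * y 2) ^ 2 := by ring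
      rw [this, f0, f1, f2]
      ring
    rw [h]
    exact dvd_sub (dvd_sub (hy.mul_left _) (hx.mul_left _)) (dvd_mul_right _ _)
  have key2 : P ^ 2 ∣ P * diagBilin a x e := (h2.mul_right hyi).dvd_of_dvd_mul_left key
  have h : x i * diagBilin a x y = y i * diagBilin a x x + P * diagBilin a x e := by
    simp only [diagBilin]
    linear_combination a 0 * x 0 * he 0 + a 1 * x 1 * he 1 + a 2 * x 2 * he 2
  exact hxi.dvd_of_dvd_mul_left (h ▸ dvd_add (hx.mul_left _) key2)

lemma pow_three_dvd_det {P : ℤ} {a x y z : Fin 3 → ℤ} (ha : IsCoprime (P ^ 6) (a 0 * a 1 * a 2))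
    (hxx : P ^ 2 ∣ diagBilin a x x) (hyy : P ^ 2 ∣ diagBilin a y y)
    (hzz : P ^ 2 ∣ diagBilin a z z) (hxy : P ^ 2 ∣ diagBilin a x y)
    (hyz : P ^ 2 ∣ diagBilin a y z) (hxz : P ^ 2 ∣ diagBilin a x z) :
    P ^ 3 ∣ x ⬝ᵥ (y ⨯₃ z) := by
  have key : P ^ 6 ∣ a 0 * a 1 * a 2 * (x ⬝ᵥ (y ⨯₃ z)) ^ 2 := by
    rw [gram_det_diagBilin]
    obtain ⟨b1, h1⟩ := hxx
    obtain ⟨b2, h2⟩ := hyy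
    obtain ⟨b3, h3⟩ := hzz
    obtain ⟨b4, h4⟩ := hxy
    obtain ⟨b5, h5⟩ := hyz
    obtain ⟨b6, h6⟩ := hxz
    rw [h1, h2, h3, h4, h5, h6]
    exact ⟨b1 * (b2 * b3 - b5 ^ 2) - b4 * (b4 * b3 - b5 * b6) + b6 * (b4 * b5 - b2 * b6), by ring⟩
  have := ha.dvd_of_dvd_mul_left key
  rw [show P ^ 6 = (P ^ 3) ^ 2 by ring] at this
  exact (Int.pow_dvd_pow_iff two_ne_zero).1 this

lemma cross_cross_cross (x y z : Fin 3 → ℤ) :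
    (x ⨯₃ y) ⨯₃ (x ⨯₃ z) = (x ⬝ᵥ (y ⨯₃ z)) • x := by
  ext i
  fin_cases i <;> simp [cross_apply, dotProduct, Fin.sum_univ_three] <;> ring

lemma eq_zero_of_cross_eq_zero_of_apply {u v : Fin 3 → ℤ} (h : u ⨯₃ v = 0) {i : Fin 3}
    (hv : v i ≠ 0) (hu : u i = 0) : u = 0 := by
  have h0 := congrFun h 0
  have h1 := congrFun h 1
  have h2 := congrFun h 2
  simp [cross_apply] at h0 h1 h2
  ext j
  apply mul_right_cancel₀ hv
  fin_cases i <;> fin_cases j <;> simp_all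

lemma diagBilin_add_right (a x y z : Fin 3 → ℤ) :
    diagBilin a x (y + z) = diagBilin a x y + diagBilin a x z := by
  simp [diagBilin]; ring

lemma diagBilin_smul_right (a x : Fin 3 → ℤ) (t : ℤ) (y : Fin 3 → ℤ) :
    diagBilin a x (t • y) = t * diagBilin a x y := by
  simp [diagBilin]; ring

lemma dvd_diagBilin_span {a : Fin 3 → ℤ} {m : ℤ} {F : Set (Fin 3 → ℤ)}
    (h : ∀ x ∈ F, ∀ y ∈ F, m ∣ diagBilin a x y) {x y : Fin 3 → ℤ}
    (hx : x ∈ Submodule.span ℤ F) (hy : y ∈ Submodule.span ℤ F) : m ∣ diagBilin a x y := by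
  have right : ∀ x ∈ F, ∀ y ∈ Submodule.span ℤ F, m ∣ diagBilin a x y := by
    intro x hx y hy
    induction hy using Submodule.span_induction with
    | mem y hy => exact h x hx y hy
    | zero => simp [diagBilin]
    | add y z _ _ h1 h2 => rw [diagBilin_add_right]; exact dvd_add h1 h2
    | smul t y _ h1 => rw [diagBilin_smul_right]; exact h1.mul_left _
  induction hx using Submodule.span_induction with
  | mem x hx => exact right x hx y hy
  | zero => simp [diagBilin]
  | add x z _ _ h1 h2 =>
    rw [diagBilin_comm] at h1 h2 ⊢
    rw [diagBilin_add_right]; exact dvd_add h1 h2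
  | smul t x _ h1 =>
    rw [diagBilin_comm] at h1 ⊢
    rw [diagBilin_smul_right]; exact h1.mul_left _

/-- A set of coplanar primitive vectors that are pairwise congruent projectively modulo `P` and
orthogonal modulo `P ^ 2` has at most two elements, or it is controlled by the size of a normal
vector `w` of the plane on which the adjugate form vanishes modulo `P ^ 2`. -/
lemma card_le_two_or_exists_normal {P : ℤ} (hP : 0 < P) {M : ℕ} {a : Fin 3 → ℤ}
    {F : Finset (Fin 3 → ℤ)} (hprim : ∀ x ∈ F, IsPrimVec x) (hM : ∀ x ∈ F, ht x ≤ M)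
    (hcr : ∀ x ∈ F, ∀ y ∈ F, ∀ i, P ∣ (x ⨯₃ y) i)
    (hB : ∀ x ∈ F, ∀ y ∈ F, P ^ 2 ∣ diagBilin a x y)
    (hdet : ∀ x ∈ F, ∀ y ∈ F, ∀ z ∈ F, x ⬝ᵥ (y ⨯₃ z) = 0) :
    F.card ≤ 2 ∨ ∃ w : Fin 3 → ℤ, w ≠ 0 ∧ P ^ 2 ∣ diagBilin (adjCoeff a) w w ∧
      P.natAbs * ht w ≤ 2 * M ^ 2 ∧ F.card * (P.natAbs * ht w) ≤ 30 * M ^ 2 ∧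
      ∃ x ∈ F, x ⬝ᵥ w = 0 := by
  classical
  rcases F.eq_empty_or_nonempty with rfl | ⟨x, hx⟩
  · left; simp
  obtain ⟨h, hh⟩ := hprim x hx
  by_cases hcol : ∀ y ∈ F, x ⨯₃ y = 0
  · left
    have : F ⊆ {x, -x} := by
      intro y hy
      have h1 := IsPrimVec.eq_smul_of_cross_eq_zero hh (hcol y hy)
      obtain ⟨h', hh'⟩ := hprim y hy
      rw [h1, dotProduct_smul, smul_eq_mul] at hh'
      have := Int.isUnit_iff.1 (IsUnit.of_mul_eq_one _ hh')
      rcases this with h2 | h2 <;> rw [h2] at h1 <;> simp [h1]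
    exact (Finset.card_le_card this).trans Finset.card_le_two
  right
  push Not at hcol
  obtain ⟨y₀, hy₀, hne⟩ := hcol
  obtain ⟨i, hi⟩ := Function.ne_iff.1 hne
  set T := Submodule.span ℤ (F : Set (Fin 3 → ℤ)) with hT
  have hFT : ∀ y ∈ F, y ∈ T := fun y hy => Submodule.subset_span hy
  let s : (Fin 3 → ℤ) →ₗ[ℤ] ℤ := (LinearMap.proj i).comp (crossProduct x)
  have hs : ∀ y, s y = (x ⨯₃ y) i := fun y => rfl
  have hdetT : ∀ Y ∈ T, x ⬝ᵥ (Y ⨯₃ y₀) = 0 := by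
    intro Y hY
    induction hY using Submodule.span_induction with
    | mem y hy => exact hdet x hx y hy y₀ hy₀
    | zero => simp
    | add y z _ _ h1 h2 => simp [dotProduct_add, h1, h2]
    | smul t y _ h1 => rw [map_smul, LinearMap.smul_apply, dotProduct_smul, h1, smul_zero]
  have hpar : ∀ Y ∈ T, (x ⨯₃ Y) i = 0 → x ⨯₃ Y = 0 := by
    intro Y hY hYi
    refine eq_zero_of_cross_eq_zero_of_apply (v := x ⨯₃ y₀) ?_ hi hYi
    rw [cross_cross_cross, hdetT Y hY, zero_smul]
  obtain ⟨d, hd⟩ := (IsPrincipalIdealRing.principal (T.map s)).principal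
  have hdmem : d ∈ T.map s := by rw [hd]; exact Submodule.mem_span_singleton_self d
  obtain ⟨Y, hYT, hYd⟩ := hdmem
  have ht_ex : ∀ y ∈ F, ∃ t : ℤ, x ⨯₃ y = t • (x ⨯₃ Y) := by
    intro y hy
    have : s y ∈ T.map s := ⟨y, hFT y hy, rfl⟩
    rw [hd, Submodule.mem_span_singleton] at this
    obtain ⟨t, ht⟩ := this
    refine ⟨t, ?_⟩
    have h0 := hpar (y - t • Y) (T.sub_mem (hFT y hy) (T.smul_mem t hYT)) (by
      rw [← hs, map_sub, map_smul, hYd, ht, sub_self])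
    rwa [map_sub, map_smul, sub_eq_zero] at h0
  have hPY : ∀ j, P ∣ (x ⨯₃ Y) j := by
    clear hYd ht_ex
    induction hYT using Submodule.span_induction with
    | mem y hy => exact hcr x hx y hy
    | zero => simp
    | add y z _ _ h1 h2 => intro j; rw [map_add]; exact dvd_add (h1 j) (h2 j)
    | smul t y _ h1 => intro j; rw [map_smul]; exact (h1 j).mul_left _
  choose w hw using hPY
  have hg : x ⨯₃ Y = P • w := funext hw
  have hg0 : x ⨯₃ Y ≠ 0 := by
    obtain ⟨t, ht⟩ := ht_ex y₀ hy₀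
    intro h0
    exact hne (by rw [ht, h0, smul_zero])
  have hhtg : ht (x ⨯₃ Y) = P.natAbs * ht w := by rw [hg, ht_smul]
  have hgpos : 0 < ht (x ⨯₃ Y) := Nat.pos_of_ne_zero fun h0 => hg0 ((ht_eq_zero_iff _).1 h0)
  choose! t ht' using ht_ex
  have htX : ∀ y ∈ F, (t y).natAbs * ht (x ⨯₃ Y) ≤ 2 * M * ht x := by
    intro y hy
    rw [← ht_smul, ← ht' y hy]
    calc ht (x ⨯₃ y) ≤ 2 * ht x * ht y := ht_cross_le x y
      _ ≤ 2 * ht x * M := Nat.mul_le_mul_left _ (hM y hy)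
      _ = 2 * M * ht x := by ring
  have ht0 : 1 ≤ (t y₀).natAbs := by
    rw [Nat.one_le_iff_ne_zero, Int.natAbs_ne_zero]
    intro h0
    exact hne (by rw [ht' y₀ hy₀, h0, zero_smul])
  refine ⟨w, ?_, ?_, ?_, ?_, x, hx, ?_⟩
  · rintro rfl
    exact hg0 (by rw [hg, smul_zero])
  · have h1 := diagBilin_adj_cross a x Y
    rw [hg, diagBilin_smul_self] at h1
    have hBT : ∀ u ∈ T, ∀ v ∈ T, P ^ 2 ∣ diagBilin a u v := fun u hu v hv =>
      dvd_diagBilin_span hB hu hv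
    have h2 : P ^ 2 * P ^ 2 ∣ P ^ 2 * diagBilin (adjCoeff a) w w := by
      rw [h1, sq (diagBilin a x Y)]
      exact dvd_sub (mul_dvd_mul (hBT x (hFT x hx) x (hFT x hx)) (hBT Y hYT Y hYT))
        (mul_dvd_mul (hBT x (hFT x hx) Y hYT) (hBT x (hFT x hx) Y hYT))
    exact (mul_dvd_mul_iff_left (by positivity)).1 h2
  · rw [← hhtg]
    calc ht (x ⨯₃ Y) ≤ (t y₀).natAbs * ht (x ⨯₃ Y) := Nat.le_mul_of_pos_left _ ht0
      _ ≤ 2 * M * ht x := htX y₀ hy₀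
      _ ≤ 2 * M * M := Nat.mul_le_mul_left _ (hM x hx)
      _ = 2 * M ^ 2 := by ring
  · rw [← hhtg]
    obtain ⟨j, hj⟩ := exists_natAbs_eq_ht x
    have hXpos : 0 < ht x := Nat.pos_of_ne_zero fun h0 =>
      (hprim x hx).ne_zero ((ht_eq_zero_iff _).1 h0)
    have hxj : x j ≠ 0 := by
      rw [← Int.natAbs_ne_zero, hj]; exact hXpos.ne'
    set G := ht (x ⨯₃ Y)
    set X := ht x
    set A : ℕ := 2 * M * X / G with hA
    set U : ℕ := M / X + 1 with hU
    have hinj : Set.InjOn (fun y => (t y, y j / x j)) (F : Set (Fin 3 → ℤ)) := by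
      intro y hy z hz hyz
      simp only [Prod.mk.injEq] at hyz
      have h1 : x ⨯₃ (y - z) = 0 := by
        rw [map_sub, ht' y hy, ht' z hz, hyz.1, sub_self]
      have h2 := IsPrimVec.eq_smul_of_cross_eq_zero hh h1
      have h3 : y j = z j + (h ⬝ᵥ (y - z)) * x j := by
        have := congrFun h2 j
        simp only [Pi.sub_apply, Pi.smul_apply, smul_eq_mul] at this
        linarith
      have h4 := hyz.2
      rw [h3, Int.add_mul_ediv_right _ _ hxj] at h4
      have h5 : h ⬝ᵥ (y - z) = 0 := by linarith
      rwa [h5, zero_smul, sub_eq_zero] at h2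
    have hmaps : Set.MapsTo (fun y => (t y, y j / x j)) (F : Set (Fin 3 → ℤ))
        (Finset.Icc (-(A : ℤ)) A ×ˢ Finset.Icc (-(U : ℤ)) U : Finset (ℤ × ℤ)) := by
      intro y hy
      simp only [Finset.coe_product, Finset.coe_Icc, Set.mem_prod, Set.mem_Icc]
      have h1 : (t y).natAbs ≤ A := (Nat.le_div_iff_mul_le hgpos).2 (htX y hy)
      have h2 : (y j / x j).natAbs ≤ U := by
        have hyj := (natAbs_le_ht y j).trans (hM y hy)
        have e1 := Int.mul_ediv_add_emod (y j) (x j)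
        have e2 := Int.emod_nonneg (y j) hxj
        have e3 := Int.emod_lt_abs (y j) hxj
        rw [Int.abs_eq_natAbs, hj] at e3
        have e4 : (y j / x j).natAbs * X ≤ M + X := by
          rw [← hj, ← Int.natAbs_mul, mul_comm, hj]
          omega
        rw [hU, ← Nat.add_div_right _ hXpos]
        exact (Nat.le_div_iff_mul_le hXpos).2 e4
      omega
    have hcard := Finset.card_le_card_of_injOn _ hmaps hinj
    rw [Finset.card_product, Int.card_Icc, Int.card_Icc] at hcard
    have hA1 : 1 ≤ A := ht0.trans ((Nat.le_div_iff_mul_le hgpos).2 (htX y₀ hy₀))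
    have hXM : X ≤ M := hM x hx
    have hAG : A * G ≤ 2 * M * X := Nat.div_mul_le_self _ _
    have hUX : U * X ≤ M + X := by
      rw [hU, add_mul, one_mul]
      exact Nat.add_le_add_right (Nat.div_mul_le_self _ _) _
    have c1 : F.card ≤ 3 * A * (2 * U + 1) := by
      refine hcard.trans (Nat.mul_le_mul ?_ ?_) <;> omega
    calc F.card * G ≤ 3 * A * (2 * U + 1) * G := Nat.mul_le_mul_right _ c1
      _ = 3 * (2 * U + 1) * (A * G) := by ring
      _ ≤ 3 * (2 * U + 1) * (2 * M * X) := Nat.mul_le_mul_left _ hAG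
      _ = 6 * M * (2 * (U * X) + X) := by ring
      _ ≤ 6 * M * (5 * M) := Nat.mul_le_mul_left _ (by omega)
      _ = 30 * M ^ 2 := by ring
  · have h1 : x ⬝ᵥ (x ⨯₃ Y) = 0 := dot_self_cross x Y
    rw [hg, dotProduct_smul, smul_eq_mul] at h1
    exact (mul_eq_zero.1 h1).resolve_left hP.ne'

lemma Prime.pow_dvd_or_pow_dvd_of_pow_mul_pow_dvd {p : ℤ} (hp : Prime p) (r : ℕ) {s t : ℤ}
    (h : p ^ r * p ^ r ∣ s * t) : p ^ r ∣ s ∨ p ^ r ∣ t := by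
  by_contra! hcon
  have hs : s ≠ 0 := by rintro rfl; simp at hcon
  have ht : t ≠ 0 := by rintro rfl; simp at hcon
  have fs := FiniteMultiplicity.of_prime_left hp hs
  have ft := FiniteMultiplicity.of_prime_left hp ht
  rw [← pow_add, (FiniteMultiplicity.of_prime_left hp (mul_ne_zero hs ht)).pow_dvd_iff_le_multiplicity,
    multiplicity_mul hp (FiniteMultiplicity.of_prime_left hp (mul_ne_zero hs ht))] at h
  rw [fs.pow_dvd_iff_le_multiplicity, ft.pow_dvd_iff_le_multiplicity] at hcon
  omega

/-- A nondegenerate ternary form does not vanish on a plane over a field. -/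
lemma cross_eq_zero_of_isotropic {K : Type*} [Field K] {a x e : Fin 3 → K} (ha : ∀ i, a i ≠ 0)
    (hxx : diagBilin a x x = 0) (hxe : diagBilin a x e = 0) (hee : diagBilin a e e = 0) :
    x ⨯₃ e = 0 := by
  have h0 := ha 0
  have h1 := ha 1
  have h2 := ha 2
  simp only [diagBilin] at hxx hxe hee
  have key0 : a 1 * a 2 * (x 1 * e 2 - x 2 * e 1) ^ 3 = 0 := by
    have e1 : a 1 * x 1 * (x 1 * e 2 - x 2 * e 1) = a 0 * x 0 * (x 2 * e 0 - x 0 * e 2) := by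
      linear_combination e 2 * hxx - x 2 * hxe
    have e2 : a 2 * x 2 * (x 1 * e 2 - x 2 * e 1) = a 0 * x 0 * (x 0 * e 1 - x 1 * e 0) := by
      linear_combination x 1 * hxe - e 1 * hxx
    have e3 : a 1 * e 1 * (x 1 * e 2 - x 2 * e 1) = a 0 * e 0 * (x 2 * e 0 - x 0 * e 2) := by
      linear_combination e 2 * hxe - x 2 * hee
    have e4 : a 2 * e 2 * (x 1 * e 2 - x 2 * e 1) = a 0 * e 0 * (x 0 * e 1 - x 1 * e 0) := by
      linear_combination x 1 * hee - e 1 * hxe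
    linear_combination a 2 * e 2 * (x 1 * e 2 - x 2 * e 1) * e1 + a 0 * x 0 * (x 2 * e 0 - x 0 * e 2) * e4
      - a 1 * e 1 * (x 1 * e 2 - x 2 * e 1) * e2 - a 0 * x 0 * (x 0 * e 1 - x 1 * e 0) * e3
  have key1 : a 0 * a 2 * (x 2 * e 0 - x 0 * e 2) ^ 3 = 0 := by
    have e1 : a 2 * x 2 * (x 2 * e 0 - x 0 * e 2) = a 1 * x 1 * (x 0 * e 1 - x 1 * e 0) := by
      linear_combination e 0 * hxx - x 0 * hxe
    have e2 : a 0 * x 0 * (x 2 * e 0 - x 0 * e 2) = a 1 * x 1 * (x 1 * e 2 - x 2 * e 1) := by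
      linear_combination x 2 * hxe - e 2 * hxx
    have e3 : a 2 * e 2 * (x 2 * e 0 - x 0 * e 2) = a 1 * e 1 * (x 0 * e 1 - x 1 * e 0) := by
      linear_combination e 0 * hxe - x 0 * hee
    have e4 : a 0 * e 0 * (x 2 * e 0 - x 0 * e 2) = a 1 * e 1 * (x 1 * e 2 - x 2 * e 1) := by
      linear_combination x 2 * hee - e 2 * hxe
    linear_combination a 0 * e 0 * (x 2 * e 0 - x 0 * e 2) * e1 + a 1 * x 1 * (x 0 * e 1 - x 1 * e 0) * e4
      - a 2 * e 2 * (x 2 * e 0 - x 0 * e 2) * e2 - a 1 * x 1 * (x 1 * e 2 - x 2 * e 1) * e3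
  have key2 : a 0 * a 1 * (x 0 * e 1 - x 1 * e 0) ^ 3 = 0 := by
    have e1 : a 0 * x 0 * (x 0 * e 1 - x 1 * e 0) = a 2 * x 2 * (x 1 * e 2 - x 2 * e 1) := by
      linear_combination e 1 * hxx - x 1 * hxe
    have e2 : a 1 * x 1 * (x 0 * e 1 - x 1 * e 0) = a 2 * x 2 * (x 2 * e 0 - x 0 * e 2) := by
      linear_combination x 0 * hxe - e 0 * hxx
    have e3 : a 0 * e 0 * (x 0 * e 1 - x 1 * e 0) = a 2 * e 2 * (x 1 * e 2 - x 2 * e 1) := by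
      linear_combination e 1 * hxe - x 1 * hee
    have e4 : a 1 * e 1 * (x 0 * e 1 - x 1 * e 0) = a 2 * e 2 * (x 2 * e 0 - x 0 * e 2) := by
      linear_combination x 0 * hee - e 0 * hxe
    linear_combination a 1 * e 1 * (x 0 * e 1 - x 1 * e 0) * e1 + a 2 * x 2 * (x 1 * e 2 - x 2 * e 1) * e4
      - a 0 * e 0 * (x 0 * e 1 - x 1 * e 0) * e2 - a 2 * x 2 * (x 2 * e 0 - x 0 * e 2) * e3
  ext i
  fin_cases i <;> simp_all [cross_apply]

/-- Among three coplanar primitive solutions modulo `p ^ (2 * r)`, two are projectively congruent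
modulo `p ^ r`. -/
lemma exists_dvd_cross_of_coplanar {p : ℕ} [Fact p.Prime] (hp2 : 2 < p) {r : ℕ}
    {a : Fin 3 → ℤ} (ha : ∀ i, ¬ (p : ℤ) ∣ a i) {w x y z : Fin 3 → ℤ} (hw : w ≠ 0)
    (hx : IsPrimVec x) (hxw : x ⬝ᵥ w = 0) (hyw : y ⬝ᵥ w = 0) (hzw : z ⬝ᵥ w = 0)
    (hQx : ((p : ℤ) ^ r) ^ 2 ∣ diagBilin a x x) (hQy : ((p : ℤ) ^ r) ^ 2 ∣ diagBilin a y y)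
    (hQz : ((p : ℤ) ^ r) ^ 2 ∣ diagBilin a z z) :
    (∀ i, (p : ℤ) ^ r ∣ (x ⨯₃ y) i) ∨ (∀ i, (p : ℤ) ^ r ∣ (x ⨯₃ z) i) ∨
      (∀ i, (p : ℤ) ^ r ∣ (y ⨯₃ z) i) := by
  have hp : Prime (p : ℤ) := Nat.prime_iff_prime_int.1 Fact.out
  obtain ⟨d, v, hd, ⟨g, hg⟩, rfl⟩ := exists_smul_isPrimVec hw
  have hd' : (d : ℤ) ≠ 0 := by positivity
  have red : ∀ u : Fin 3 → ℤ, u ⬝ᵥ ((d : ℤ) • v) = 0 → u ⬝ᵥ v = 0 := by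
    intro u hu
    rw [dotProduct_smul, smul_eq_mul] at hu
    exact (mul_eq_zero.1 hu).resolve_left hd'
  replace hxw := red x hxw
  replace hyw := red y hyw
  replace hzw := red z hzw
  obtain ⟨h, hh⟩ := hx
  have cross_eq : ∀ u u' : Fin 3 → ℤ, u ⬝ᵥ v = 0 → u' ⬝ᵥ v = 0 →
      u ⨯₃ u' = (g ⬝ᵥ (u ⨯₃ u')) • v := by
    intro u u' hu hu'
    simp only [dotProduct, Fin.sum_univ_three] at hu hu' hg
    ext i
    fin_cases i <;> simp [cross_apply, dotProduct, Fin.sum_univ_three]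
    · linear_combination -(u 1 * u' 2 - u 2 * u' 1) * hg + (g 1 * u' 2 - g 2 * u' 1) * hu
        - (g 1 * u 2 - g 2 * u 1) * hu'
    · linear_combination -(u 2 * u' 0 - u 0 * u' 2) * hg + (g 2 * u' 0 - g 0 * u' 2) * hu
        - (g 2 * u 0 - g 0 * u 2) * hu'
    · linear_combination -(u 0 * u' 1 - u 1 * u' 0) * hg + (g 0 * u' 1 - g 1 * u' 0) * hu
        - (g 0 * u 1 - g 1 * u 0) * hu'
  set e := v ⨯₃ h with he
  have hxe : x ⨯₃ e = v := by
    simp only [dotProduct, Fin.sum_univ_three] at hxw hh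
    ext i
    fin_cases i <;> simp [he, cross_apply]
    · linear_combination v 0 * hh - h 0 * hxw
    · linear_combination v 1 * hh - h 1 * hxw
    · linear_combination v 2 * hh - h 2 * hxw
  have decomp : ∀ u : Fin 3 → ℤ, u ⬝ᵥ v = 0 →
      u = (h ⬝ᵥ u) • x + (g ⬝ᵥ (x ⨯₃ u)) • e := by
    intro u hu
    have hc := cross_eq x u hxw hu
    generalize g ⬝ᵥ (x ⨯₃ u) = s at hc ⊢
    have c0 := congrFun hc 0
    have c1 := congrFun hc 1
    have c2 := congrFun hc 2
    simp only [dotProduct, Fin.sum_univ_three] at hh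
    simp [cross_apply] at c0 c1 c2
    ext i
    fin_cases i <;> simp [he, cross_apply, dotProduct, Fin.sum_univ_three]
    · linear_combination -u 0 * hh - h 1 * c2 + h 2 * c1
    · linear_combination -u 1 * hh - h 2 * c0 + h 0 * c2
    · linear_combination -u 2 * hh - h 0 * c1 + h 1 * c0
  have hQ : ∀ u : Fin 3 → ℤ, u ⬝ᵥ v = 0 → ((p : ℤ) ^ r) ^ 2 ∣ diagBilin a u u →
      (∀ i, (p : ℤ) ^ r ∣ (x ⨯₃ u) i) ∨
      (p : ℤ) ^ r ∣ 2 * (h ⬝ᵥ u) * diagBilin a x e + (g ⬝ᵥ (x ⨯₃ u)) * diagBilin a e e := by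
    intro u hu hQu
    have hc := cross_eq x u hxw hu
    have hdec := decomp u hu
    generalize g ⬝ᵥ (x ⨯₃ u) = s at hc hdec ⊢
    generalize h ⬝ᵥ u = l at hdec ⊢
    have h1 : diagBilin a u u = l ^ 2 * diagBilin a x x +
        s * (2 * l * diagBilin a x e + s * diagBilin a e e) := by
      rw [hdec]; simp [diagBilin]; ring
    have h2 : (p : ℤ) ^ r * (p : ℤ) ^ r ∣ s * (2 * l * diagBilin a x e + s * diagBilin a e e) := by
      rw [← sq]
      have := dvd_sub hQu (hQx.mul_left (l ^ 2))
      rwa [h1, add_sub_cancel_left] at this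
    rcases hp.pow_dvd_or_pow_dvd_of_pow_mul_pow_dvd r h2 with h3 | h3
    · left
      intro i
      rw [hc]
      exact h3.mul_right _
    · exact Or.inr h3
  rcases hQ y hyw hQy with h1 | h1
  · exact Or.inl h1
  rcases hQ z hzw hQz with h2 | h2
  · exact Or.inr (Or.inl h2)
  right; right
  have hdy := decomp y hyw
  have hdz := decomp z hzw
  generalize g ⬝ᵥ (x ⨯₃ y) = sy at h1 hdy
  generalize g ⬝ᵥ (x ⨯₃ z) = sz at h2 hdz
  generalize h ⬝ᵥ y = ly at h1 hdy
  generalize h ⬝ᵥ z = lz at h2 hdz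
  have hyz : y ⨯₃ z = (ly * sz - lz * sy) • v := by
    rw [← hxe, hdy, hdz]
    ext i
    fin_cases i <;> simp [cross_apply] <;> ring
  by_contra! hcon
  obtain ⟨i, hi⟩ := hcon
  have hσ : ¬ (p : ℤ) ^ r ∣ ly * sz - lz * sy := fun h3 => hi (by rw [hyz]; exact h3.mul_right _)
  have hdiv : ∀ u : ℤ, (p : ℤ) ^ r ∣ (ly * sz - lz * sy) * u → (p : ℤ) ∣ u := by
    intro u hu
    by_contra hpu
    exact hσ (IsCoprime.dvd_of_dvd_mul_right
      (IsCoprime.pow_left ((Prime.coprime_iff_not_dvd hp).2 hpu)) hu)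
  have hb : (p : ℤ) ∣ 2 * diagBilin a x e := hdiv _ (by
    have h3 := dvd_sub (h1.mul_left sz) (h2.mul_left sy)
    ring_nf at h3 ⊢
    exact h3)
  have hc : (p : ℤ) ∣ diagBilin a e e := hdiv _ (by
    have h3 := dvd_sub (h2.mul_left ly) (h1.mul_left lz)
    ring_nf at h3 ⊢
    exact h3)
  have hb' : (p : ℤ) ∣ diagBilin a x e := (hp.dvd_or_dvd hb).resolve_left fun h3 => by
    have := Int.le_of_dvd two_pos h3
    omega
  have hr : r ≠ 0 := by rintro rfl; simp at hσ
  have hxx : (p : ℤ) ∣ diagBilin a x x := by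
    refine dvd_trans ?_ hQx
    rw [← pow_mul]
    exact dvd_pow_self _ (by omega)
  have hcast : ∀ u u' : Fin 3 → ℤ, (p : ℤ) ∣ diagBilin a u u' →
      diagBilin (fun i => (a i : ZMod p)) (fun i => (u i : ZMod p)) (fun i => (u' i : ZMod p)) = 0 := by
    intro u u' h3
    rw [← ZMod.intCast_zmod_eq_zero_iff_dvd] at h3
    simpa [diagBilin] using h3
  have hiso := cross_eq_zero_of_isotropic (K := ZMod p)
    (fun i h3 => ha i ((ZMod.intCast_zmod_eq_zero_iff_dvd _ _).1 h3))
    (hcast x x hxx) (hcast x e hb') (hcast e e hc)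
  obtain ⟨k, hk⟩ := IsPrimVec.exists_not_dvd ⟨g, hg⟩ hp
  apply hk
  rw [← ZMod.intCast_zmod_eq_zero_iff_dvd, ← hxe]
  have := congrFun hiso k
  fin_cases k <;> simpa [cross_apply] using this

lemma forall_dvd_cross_iff {P : ℤ} (x y : Fin 3 → ℤ) :
    (∀ i, P ∣ (x ⨯₃ y) i) ↔ ∀ u v, P ∣ x u * y v - x v * y u := by
  constructor
  · intro h
    have h0 := h 0
    have h1 := h 1
    have h2 := h 2
    simp [cross_apply] at h0 h1 h2
    intro u v
    fin_cases u <;> fin_cases v <;> simp <;>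
      first | assumption | (rw [dvd_sub_comm]; assumption)
  · intro h i
    fin_cases i <;> simp [cross_apply, h]

lemma diagBilin_eq_of_ne {R : Type*} [CommRing R] {i j k : Fin 3} (hij : i ≠ j) (hjk : j ≠ k)
    (hik : i ≠ k) (a x y : Fin 3 → R) :
    diagBilin a x y = a i * x i * y i + a j * x j * y j + a k * x k * y k := by
  fin_cases i <;> fin_cases j <;> fin_cases k <;> simp_all [diagBilin] <;> ring

lemma isCoprime_pow_of_not_dvd {p : ℕ} [Fact p.Prime] (r : ℕ) {u : ℤ} (hu : ¬ (p : ℤ) ∣ u) :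
    IsCoprime ((p : ℤ) ^ r) u :=
  IsCoprime.pow_left ((Prime.coprime_iff_not_dvd (Nat.prime_iff_prime_int.1 Fact.out)).2 hu)

/-- On solutions in a fixed residue class modulo `p` the projective class modulo `p ^ r` is
determined by the ratio of two coordinates. -/
lemma exists_key {p : ℕ} [Fact p.Prime] (hp2 : 2 < p) {r : ℕ} {a τ : Fin 3 → ℤ}
    (ha : ∀ i, ¬ (p : ℤ) ∣ a i) (hτ : ∃ i, ¬ (p : ℤ) ∣ τ i) (hQ : (p : ℤ) ∣ diagBilin a τ τ) :
    ∃ (i : Fin 3) (key : (Fin 3 → ℤ) → ZMod (p ^ r)), ¬ (p : ℤ) ∣ τ i ∧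
      ∀ x y : Fin 3 → ℤ, (∀ j, (p : ℤ) ∣ x j - τ j) → (∀ j, (p : ℤ) ∣ y j - τ j) →
        (p : ℤ) ^ r ∣ diagBilin a x x → (p : ℤ) ^ r ∣ diagBilin a y y →
        (key x = key y ↔ ∀ j, (p : ℤ) ^ r ∣ (x ⨯₃ y) j) := by
  have hp : Prime (p : ℤ) := Nat.prime_iff_prime_int.1 Fact.out
  obtain ⟨i, hi⟩ := hτ
  have hij : ∃ j, j ≠ i ∧ ¬ (p : ℤ) ∣ τ j := by
    by_contra! hcon
    obtain ⟨j, k, h1, h2, h3⟩ : ∃ j k : Fin 3, i ≠ j ∧ j ≠ k ∧ i ≠ k := by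
      fin_cases i
      · exact ⟨1, 2, by decide⟩
      · exact ⟨0, 2, by decide⟩
      · exact ⟨0, 1, by decide⟩
    rw [diagBilin_eq_of_ne h1 h2 h3, add_assoc] at hQ
    have h4 := (dvd_add_left (dvd_add ((hcon j h1.symm).mul_left (a j * τ j))
      ((hcon k h3.symm).mul_left (a k * τ k)))).1 hQ
    rcases hp.dvd_or_dvd h4 with h5 | h5
    · rcases hp.dvd_or_dvd h5 with h6 | h6
      · exact ha i h6
      · exact hi h6
    · exact hi h5
  obtain ⟨j, hji, hj⟩ := hij
  obtain ⟨k, hjk, hik⟩ : ∃ k : Fin 3, j ≠ k ∧ i ≠ k := by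
    fin_cases i <;> fin_cases j <;>
      first | exact ⟨0, by decide⟩ | exact ⟨1, by decide⟩ | exact ⟨2, by decide⟩
  have hcop : ∀ x : Fin 3 → ℤ, (∀ l, (p : ℤ) ∣ x l - τ l) → ∀ l, ¬ (p : ℤ) ∣ τ l →
      ¬ (p : ℤ) ∣ x l := by
    intro x hx l hl h
    exact hl ((dvd_sub_right h).1 (hx l))
  refine ⟨i, fun x => (x k : ZMod (p ^ r)) * (x i : ZMod (p ^ r))⁻¹, hi, ?_⟩
  intro x y hx hy hQx hQy
  have hunit : ∀ x : Fin 3 → ℤ, (∀ l, (p : ℤ) ∣ x l - τ l) →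
      (x i : ZMod (p ^ r)) * (x i : ZMod (p ^ r))⁻¹ = 1 := by
    intro x hx
    have := (isCoprime_pow_of_not_dvd r (hcop x hx i hi)).symm
    apply ZMod.mul_inv_of_unit
    rw [ZMod.coe_int_isUnit_iff_isCoprime]
    exact_mod_cast this.symm
  have hux := hunit x hx
  have huy := hunit y hy
  have step : (x k : ZMod (p ^ r)) * (x i : ZMod (p ^ r))⁻¹ =
      (y k : ZMod (p ^ r)) * (y i : ZMod (p ^ r))⁻¹ ↔
      (p : ℤ) ^ r ∣ x k * y i - x i * y k := by
    rw [← Nat.cast_pow, ← ZMod.intCast_zmod_eq_zero_iff_dvd]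
    push_cast
    constructor
    · intro h
      linear_combination (x i : ZMod (p ^ r)) * y i * h - (x k : ZMod (p ^ r)) * y i * hux
        + (y k : ZMod (p ^ r)) * x i * huy
    · intro h
      linear_combination (x i : ZMod (p ^ r))⁻¹ * (y i : ZMod (p ^ r))⁻¹ * h
        - (x k : ZMod (p ^ r)) * (x i : ZMod (p ^ r))⁻¹ * huy
        + (y k : ZMod (p ^ r)) * (y i : ZMod (p ^ r))⁻¹ * hux
  rw [step, forall_dvd_cross_iff]
  refine ⟨fun h => ?_, fun h => h k i⟩
  have hxi := isCoprime_pow_of_not_dvd r (hcop x hx i hi)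
  have hji' : (p : ℤ) ^ r ∣ x j * y i - x i * y j := by
    have h1 : (p : ℤ) ^ r ∣ (a j * (x j * y i + x i * y j)) * (x j * y i - x i * y j) := by
      have h2 : (a j * (x j * y i + x i * y j)) * (x j * y i - x i * y j) =
          y i ^ 2 * diagBilin a x x - x i ^ 2 * diagBilin a y y
            - (x k * y i - x i * y k) * (a k * (x k * y i + x i * y k)) := by
        rw [diagBilin_eq_of_ne hji.symm hjk hik, diagBilin_eq_of_ne hji.symm hjk hik]; ring
      rw [h2]
      exact dvd_sub (dvd_sub (hQx.mul_left _) (hQy.mul_left _)) (h.mul_right _)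
    refine IsCoprime.dvd_of_dvd_mul_left (isCoprime_pow_of_not_dvd r ?_) h1
    intro h3
    rcases hp.dvd_or_dvd h3 with h4 | h4
    · exact ha j h4
    · have h5 : (p : ℤ) ∣ 2 * τ j * τ i := by
        obtain ⟨c1, e1⟩ := hx j
        obtain ⟨c2, e2⟩ := hx i
        obtain ⟨c3, e3⟩ := hy j
        obtain ⟨c4, e4⟩ := hy i
        obtain ⟨c5, e5⟩ := h4
        refine ⟨c5 - c1 * y i - τ j * c4 - c2 * y j - τ i * c3, ?_⟩
        linear_combination e5 - y i * e1 - τ j * e4 - y j * e2 - τ i * e3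
      rcases hp.dvd_or_dvd h5 with h6 | h6
      · rcases hp.dvd_or_dvd h6 with h7 | h7
        · have := Int.le_of_dvd two_pos h7
          omega
        · exact hj h7
      · exact hi h6
  have hjk' : (p : ℤ) ^ r ∣ x j * y k - x k * y j := by
    refine hxi.dvd_of_dvd_mul_left (z := x j * y k - x k * y j) ?_
    have h1 : x i * (x j * y k - x k * y j) =
        x k * (x j * y i - x i * y j) - x j * (x k * y i - x i * y k) := by ring
    rw [h1]
    exact dvd_sub (hji'.mul_left _) (h.mul_left _)
  have symm : ∀ u v, (p : ℤ) ^ r ∣ x u * y v - x v * y u → (p : ℤ) ^ r ∣ x v * y u - x u * y v :=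
    fun u v h => by rwa [dvd_sub_comm]
  have cases3 : ∀ u : Fin 3, u = i ∨ u = j ∨ u = k := by
    have aux : ∀ i j k u : Fin 3, j ≠ i → j ≠ k → i ≠ k → u = i ∨ u = j ∨ u = k := by decide
    exact fun u => aux i j k u hji hjk hik
  intro u v
  rcases cases3 u with rfl | rfl | rfl <;> rcases cases3 v with rfl | rfl | rfl <;>
    first | assumption | (apply symm; assumption) | simp

lemma abs_det_le {M : ℕ} {x y z : Fin 3 → ℤ} (hx : ht x ≤ M) (hy : ht y ≤ M) (hz : ht z ≤ M) :
    |x ⬝ᵥ (y ⨯₃ z)| ≤ 6 * (M : ℤ) ^ 3 := by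
  have h1 : (ht (y ⨯₃ z) : ℤ) ≤ 2 * M * M := by
    exact_mod_cast (ht_cross_le y z).trans (by gcongr)
  have h2 : ∀ i, |x i * (y ⨯₃ z) i| ≤ M * (2 * M * M) := fun i => by
    rw [abs_mul]
    have hx' : (ht x : ℤ) ≤ M := by exact_mod_cast hx
    exact mul_le_mul ((abs_le_ht x i).trans hx') ((abs_le_ht _ i).trans h1) (abs_nonneg _)
      (by positivity)
  rw [dotProduct]
  calc |∑ i, x i * (y ⨯₃ z) i| ≤ ∑ i, |x i * (y ⨯₃ z) i| := Finset.abs_sum_le_sum_abs _ _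
    _ ≤ ∑ _i : Fin 3, (M * (2 * M * M) : ℤ) := Finset.sum_le_sum fun i _ => h2 i
    _ = 6 * (M : ℤ) ^ 3 := by simp; ring

/-- Solutions in a box lying in one residue class modulo `p` are counted by the small solutions
of the adjoint congruence. -/
lemma card_le_of_residue_class {p : ℕ} [Fact p.Prime] (hp2 : 2 < p) {r M : ℕ} (hr : r ≠ 0)
    {a : Fin 3 → ℤ} (ha : ∀ i, ¬ (p : ℤ) ∣ a i) {S W : Finset (Fin 3 → ℤ)}
    (hprim : ∀ x ∈ S, IsPrimVec x) (hM : ∀ x ∈ S, ht x ≤ M)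
    (hQ : ∀ x ∈ S, ((p : ℤ) ^ r) ^ 2 ∣ diagBilin a x x)
    (hres : ∀ x ∈ S, ∀ y ∈ S, ∀ j, (p : ℤ) ∣ x j - y j) (hM3 : 6 * M ^ 3 < (p ^ r) ^ 3)
    (hW : ∀ w : Fin 3 → ℤ, w ≠ 0 → p ^ r * ht w ≤ 2 * M ^ 2 →
      ((p : ℤ) ^ r) ^ 2 ∣ diagBilin (adjCoeff a) w w → w ∈ W) :
    (S.card : ℝ) ≤ 2 * (p : ℝ) ^ r + 60 * (M : ℝ) ^ 2 / (p : ℝ) ^ r * ∑ w ∈ W, 1 / (ht w : ℝ) := by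
  have hpr : 0 < p ^ r := pow_pos (by omega) r
  have : NeZero (p ^ r) := ⟨hpr.ne'⟩
  have hpZ : Prime (p : ℤ) := Nat.prime_iff_prime_int.1 Fact.out
  have hprR : (0 : ℝ) < (p : ℝ) ^ r := by exact_mod_cast hpr
  rcases S.eq_empty_or_nonempty with rfl | ⟨τ, hτ⟩
  · simp only [Finset.card_empty, Nat.cast_zero]; positivity
  have hpdvd : (p : ℤ) ∣ ((p : ℤ) ^ r) ^ 2 := dvd_pow (dvd_pow_self _ hr) two_ne_zero
  have hrdvd : (p : ℤ) ^ r ∣ ((p : ℤ) ^ r) ^ 2 := dvd_pow_self _ two_ne_zero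
  obtain ⟨i, key, hi, hkey⟩ := exists_key (r := r) hp2 ha ((hprim τ hτ).exists_not_dvd hpZ)
    (hpdvd.trans (hQ τ hτ))
  have hk : ∀ x ∈ S, ∀ y ∈ S, (key x = key y ↔ ∀ j, (p : ℤ) ^ r ∣ (x ⨯₃ y) j) :=
    fun x hx y hy => hkey x y (hres x hx τ hτ) (hres y hy τ hτ) (hrdvd.trans (hQ x hx))
      (hrdvd.trans (hQ y hy))
  have hcopi : ∀ x ∈ S, IsCoprime (((p : ℤ) ^ r) ^ 2) (x i) := by
    intro x hx
    rw [← pow_mul]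
    exact isCoprime_pow_of_not_dvd _ fun h => hi ((dvd_sub_right h).1 (hres x hx τ hτ i))
  have hcop2 : IsCoprime (((p : ℤ) ^ r) ^ 2) 2 := by
    rw [← pow_mul]
    exact isCoprime_pow_of_not_dvd _ fun h => by
      have := Int.le_of_dvd two_pos h
      omega
  have hcopa : IsCoprime (((p : ℤ) ^ r) ^ 6) (a 0 * a 1 * a 2) := by
    rw [← pow_mul]
    refine isCoprime_pow_of_not_dvd _ fun h => ?_
    rcases hpZ.dvd_or_dvd h with h | h
    · rcases hpZ.dvd_or_dvd h with h | h
      · exact ha 0 h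
      · exact ha 1 h
    · exact ha 2 h
  have hB : ∀ x ∈ S, ∀ y ∈ S, key x = key y → ((p : ℤ) ^ r) ^ 2 ∣ diagBilin a x y := by
    intro x hx y hy hxy
    refine sq_dvd_diagBilin_of_dvd_cross hcop2 (hcopi x hx) (hcopi y hy) (hQ x hx) (hQ y hy) ?_
    intro j
    have := (forall_dvd_cross_iff x y).1 ((hk x hx y hy).1 hxy) i j
    rwa [mul_comm (y i)]
  have hdet : ∀ x ∈ S, ∀ y ∈ S, ∀ z ∈ S, key x = key y → key y = key z →
      x ⬝ᵥ (y ⨯₃ z) = 0 := by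
    intro x hx y hy z hz hxy hyz
    have h1 := pow_three_dvd_det hcopa (hQ x hx) (hQ y hy) (hQ z hz) (hB x hx y hy hxy)
      (hB y hy z hz hyz) (hB x hx z hz (hxy.trans hyz))
    refine Int.eq_zero_of_abs_lt_dvd h1 ((abs_det_le (hM x hx) (hM y hy) (hM z hz)).trans_lt ?_)
    exact_mod_cast hM3
  have hfib : ∀ κ : ZMod (p ^ r), ∃ w : Fin 3 → ℤ, (S.filter (key · = κ)).card ≤ 2 ∨
      (w ≠ 0 ∧ ((p : ℤ) ^ r) ^ 2 ∣ diagBilin (adjCoeff a) w w ∧ p ^ r * ht w ≤ 2 * M ^ 2 ∧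
      (S.filter (key · = κ)).card * (p ^ r * ht w) ≤ 30 * M ^ 2 ∧
      ∃ x ∈ S, key x = κ ∧ x ⬝ᵥ w = 0) := by
    intro κ
    have hmem : ∀ x ∈ S.filter (key · = κ), x ∈ S ∧ key x = κ := fun x hx => Finset.mem_filter.1 hx
    have := card_le_two_or_exists_normal (P := (p : ℤ) ^ r) (M := M) (a := a)
      (F := S.filter (key · = κ)) (by exact_mod_cast hpr)
      (fun x hx => hprim x (hmem x hx).1) (fun x hx => hM x (hmem x hx).1)
      (fun x hx y hy => (hk x (hmem x hx).1 y (hmem y hy).1).1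
        ((hmem x hx).2.trans (hmem y hy).2.symm))
      (fun x hx y hy => hB x (hmem x hx).1 y (hmem y hy).1
        ((hmem x hx).2.trans (hmem y hy).2.symm))
      (fun x hx y hy z hz => hdet x (hmem x hx).1 y (hmem y hy).1 z (hmem z hz).1
        ((hmem x hx).2.trans (hmem y hy).2.symm) ((hmem y hy).2.trans (hmem z hz).2.symm))
    rcases this with h | ⟨w, h0, h1, h2, h3, x, hx, hxw⟩
    · exact ⟨0, Or.inl h⟩
    · refine ⟨w, Or.inr ⟨h0, h1, ?_, ?_, x, (hmem x hx).1, (hmem x hx).2, hxw⟩⟩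
      · simpa [Int.natAbs_pow] using h2
      · simpa [Int.natAbs_pow] using h3
  choose w hw using hfib
  let Bad : Finset (ZMod (p ^ r)) := Finset.univ.filter fun κ => 2 < (S.filter (key · = κ)).card
  have hbad : ∀ κ ∈ Bad, (w κ ≠ 0 ∧ ((p : ℤ) ^ r) ^ 2 ∣ diagBilin (adjCoeff a) (w κ) (w κ) ∧
      p ^ r * ht (w κ) ≤ 2 * M ^ 2 ∧
      (S.filter (key · = κ)).card * (p ^ r * ht (w κ)) ≤ 30 * M ^ 2 ∧
      ∃ x ∈ S, key x = κ ∧ x ⬝ᵥ w κ = 0) := fun κ hκ =>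
    (hw κ).resolve_left (not_le.2 (Finset.mem_filter.1 hκ).2)
  have hmaps : ∀ κ ∈ Bad, w κ ∈ W := fun κ hκ =>
    hW _ (hbad κ hκ).1 (hbad κ hκ).2.2.1 (hbad κ hκ).2.1
  have htwo : ∀ v ∈ W, (Bad.filter (w · = v)).card ≤ 2 := by
    intro v _
    by_contra! hcon
    obtain ⟨κ₁, h1, κ₂, h2, κ₃, h3, h12, h13, h23⟩ := Finset.two_lt_card.1 hcon
    rw [Finset.mem_filter] at h1 h2 h3
    obtain ⟨h1, rfl⟩ := h1
    obtain ⟨hw0, -, -, -, x, hx, rfl, hxw⟩ := hbad _ h1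
    obtain ⟨-, -, -, -, y, hy, rfl, hyw⟩ := hbad _ h2.1
    obtain ⟨-, -, -, -, z, hz, rfl, hzw⟩ := hbad _ h3.1
    rw [h2.2] at hyw
    rw [h3.2] at hzw
    rcases exists_dvd_cross_of_coplanar hp2 ha hw0 (hprim x hx) hxw hyw hzw (hQ x hx) (hQ y hy)
      (hQ z hz) with h | h | h
    · exact h12 ((hk x hx y hy).2 h)
    · exact h13 ((hk x hx z hz).2 h)
    · exact h23 ((hk y hy z hz).2 h)
  have hcard : ∀ κ, ((S.filter (key · = κ)).card : ℝ) ≤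
      2 + if κ ∈ Bad then 30 * (M : ℝ) ^ 2 / (p : ℝ) ^ r * (1 / (ht (w κ) : ℝ)) else 0 := by
    intro κ
    split_ifs with hκ
    · obtain ⟨h0, -, -, h3, -⟩ := hbad κ hκ
      have hpos : 0 < ht (w κ) := Nat.pos_of_ne_zero fun h => h0 ((ht_eq_zero_iff _).1 h)
      have hposR : (0 : ℝ) < ht (w κ) := by exact_mod_cast hpos
      have h4 : ((S.filter (key · = κ)).card : ℝ) * ((p : ℝ) ^ r * ht (w κ)) ≤ 30 * (M : ℝ) ^ 2 := by
        exact_mod_cast h3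
      have h5 : ((S.filter (key · = κ)).card : ℝ) ≤ 30 * (M : ℝ) ^ 2 / ((p : ℝ) ^ r * ht (w κ)) :=
        (le_div_iff₀ (by positivity)).2 h4
      rw [div_mul_div_comm, mul_one]
      linarith
    · have : (S.filter (key · = κ)).card ≤ 2 := by
        by_contra! h
        exact hκ (Finset.mem_filter.2 ⟨Finset.mem_univ _, h⟩)
      simpa using (by exact_mod_cast this : ((S.filter (key · = κ)).card : ℝ) ≤ 2)
  have hS : (S.card : ℝ) = ∑ κ : ZMod (p ^ r), ((S.filter (key · = κ)).card : ℝ) := by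
    exact_mod_cast Finset.card_eq_sum_card_fiberwise (f := key) fun x _ => Finset.mem_univ _
  have hBadsum : ∑ κ ∈ Bad, 1 / (ht (w κ) : ℝ) ≤ 2 * ∑ v ∈ W, 1 / (ht v : ℝ) := by
    rw [← Finset.sum_fiberwise_of_maps_to hmaps, Finset.mul_sum]
    refine Finset.sum_le_sum fun v hv => ?_
    have : ∑ κ ∈ Bad with w κ = v, 1 / (ht (w κ) : ℝ) = ∑ κ ∈ Bad with w κ = v, 1 / (ht v : ℝ) :=
      Finset.sum_congr rfl fun κ hκ => by rw [(Finset.mem_filter.1 hκ).2]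
    rw [this, Finset.sum_const, nsmul_eq_mul]
    gcongr
    exact_mod_cast htwo v hv
  calc (S.card : ℝ) ≤ ∑ κ : ZMod (p ^ r),
        (2 + if κ ∈ Bad then 30 * (M : ℝ) ^ 2 / (p : ℝ) ^ r * (1 / (ht (w κ) : ℝ)) else 0) := by
        rw [hS]; exact Finset.sum_le_sum fun κ _ => hcard κ
    _ = 2 * (p : ℝ) ^ r + 30 * (M : ℝ) ^ 2 / (p : ℝ) ^ r * ∑ κ ∈ Bad, 1 / (ht (w κ) : ℝ) := by
        rw [Finset.sum_add_distrib, Finset.sum_ite_mem, Finset.univ_inter, ← Finset.mul_sum]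
        simp [ZMod.card, mul_comm]
    _ ≤ 2 * (p : ℝ) ^ r + 30 * (M : ℝ) ^ 2 / (p : ℝ) ^ r * (2 * ∑ v ∈ W, 1 / (ht v : ℝ)) := by
        gcongr
    _ = _ := by ring

/-- The box of integer vectors of height at most `M`. -/
noncomputable def box (M : ℕ) : Finset (Fin 3 → ℤ) := Finset.Icc (fun _ => -(M : ℤ)) (fun _ => (M : ℤ))

lemma mem_box {M : ℕ} {x : Fin 3 → ℤ} : x ∈ box M ↔ ht x ≤ M := by
  rw [box, Finset.mem_Icc, Pi.le_def, Pi.le_def, ht_le_iff, ← forall_and]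
  refine forall_congr' fun i => ?_
  omega

/-- The bound `D * A` for the number of primitive solutions of height at most `A` of a diagonal
congruence modulo `p ^ (2 * m)`, uniformly for `K * A ≤ p ^ m`. -/
def PrimBound (p : ℕ) (K D : ℝ) (A : ℕ) : Prop :=
  ∀ (m : ℕ) (a : Fin 3 → ℤ), (∀ i, ¬ (p : ℤ) ∣ a i) → K * A ≤ (p : ℝ) ^ m →
    ∀ S : Finset (Fin 3 → ℤ), (∀ x ∈ S, IsPrimVec x) → (∀ x ∈ S, ht x ≤ A) →
      (∀ x ∈ S, ((p : ℤ) ^ m) ^ 2 ∣ diagBilin a x x) → (S.card : ℝ) ≤ D * A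

lemma sq_pow_dvd_of_sq_pow_dvd_mul {p : ℕ} [Fact p.Prime] {r j : ℕ} (hj : j ≤ r) {u Q : ℤ}
    (hu : ¬ (p : ℤ) ∣ u) (h : ((p : ℤ) ^ r) ^ 2 ∣ ((p : ℤ) ^ j * u) ^ 2 * Q) :
    ((p : ℤ) ^ (r - j)) ^ 2 ∣ Q := by
  have hp0 : (p : ℤ) ≠ 0 := by exact_mod_cast (Fact.out : p.Prime).ne_zero
  have h1 : ((p : ℤ) ^ r) ^ 2 = ((p : ℤ) ^ j) ^ 2 * ((p : ℤ) ^ (r - j)) ^ 2 := by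
    rw [← mul_pow, ← pow_add, Nat.add_sub_cancel' hj]
  rw [h1, mul_pow, mul_assoc] at h
  have h2 := (mul_dvd_mul_iff_left (pow_ne_zero 2 (pow_ne_zero j hp0))).1 h
  rw [← pow_mul] at h2 ⊢
  exact ((isCoprime_pow_of_not_dvd _ hu).pow_right).dvd_of_dvd_mul_left h2

lemma card_le_of_primBound {p : ℕ} [Fact p.Prime] {K D H : ℝ} {A r : ℕ}
    (hK : 1 ≤ K) (hD : 0 ≤ D) (hprim : ∀ B ≤ A, PrimBound p K D B)
    (hH : ∑ t ∈ Finset.Icc 1 A, 1 / (t : ℝ) ≤ H) (hA : K * A ≤ (p : ℝ) ^ r)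
    {a : Fin 3 → ℤ} (ha : ∀ i, ¬ (p : ℤ) ∣ a i) {T : Finset (Fin 3 → ℤ)}
    (h0 : ∀ w ∈ T, w ≠ 0) (hT : ∀ w ∈ T, ht w ≤ A)
    (hQ : ∀ w ∈ T, ((p : ℤ) ^ r) ^ 2 ∣ diagBilin a w w) :
    (T.card : ℝ) ≤ D * H * A := by
  have hp := (Fact.out : p.Prime)
  have hp1 : (1 : ℝ) ≤ p := by exact_mod_cast hp.one_lt.le
  have hex : ∀ w : Fin 3 → ℤ, ∃ (t : ℕ) (y : Fin 3 → ℤ), w ≠ 0 →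
      0 < t ∧ IsPrimVec y ∧ w = (t : ℤ) • y := by
    intro w
    by_cases hw : w = 0
    · exact ⟨0, 0, fun h => absurd hw h⟩
    · obtain ⟨t, y, h⟩ := exists_smul_isPrimVec hw
      exact ⟨t, y, fun _ => h⟩
  choose t y hty using hex
  have hht : ∀ w ∈ T, t w * ht (y w) ≤ A := by
    intro w hw
    have := hT w hw
    rwa [(hty w (h0 w hw)).2.2, ht_smul, Int.natAbs_natCast] at this
  have hypos : ∀ w ∈ T, 0 < ht (y w) := fun w hw =>
    Nat.pos_of_ne_zero fun h => (hty w (h0 w hw)).2.1.ne_zero ((ht_eq_zero_iff _).1 h)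
  have hmaps : ∀ w ∈ T, t w ∈ Finset.Icc 1 A := fun w hw =>
    Finset.mem_Icc.2 ⟨(hty w (h0 w hw)).1, (Nat.le_mul_of_pos_right _ (hypos w hw)).trans (hht w hw)⟩
  have hfib : ∀ s ∈ Finset.Icc 1 A, ((T.filter (t · = s)).card : ℝ) ≤ D * A * (1 / (s : ℝ)) := by
    intro s hs
    obtain ⟨hs1, hsA⟩ := Finset.mem_Icc.1 hs
    have hinj : Set.InjOn y (T.filter (t · = s) : Finset (Fin 3 → ℤ)) := by
      intro u hu v hv huv
      simp only [Finset.coe_filter, Set.mem_ofPred_eq] at hu hv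
      rw [(hty u (h0 u hu.1)).2.2, (hty v (h0 v hv.1)).2.2, hu.2, hv.2, huv]
    rw [← Finset.card_image_of_injOn hinj]
    obtain ⟨j, u, hu, hsu⟩ := Nat.exists_eq_pow_mul_and_not_dvd (n := s) (by omega) p hp.ne_one
    have hu' : ¬ (p : ℤ) ∣ (u : ℤ) := fun h => hu (by exact_mod_cast h)
    have hsR : (0 : ℝ) < s := by exact_mod_cast hs1
    have hu0 : 0 < u := Nat.pos_of_ne_zero fun h => by simp [h] at hu
    have hpjs : (p : ℝ) ^ j ≤ s := by
      have : p ^ j ≤ s := by rw [hsu]; exact Nat.le_mul_of_pos_right _ hu0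
      exact_mod_cast this
    have hAs : (((A / s : ℕ) : ℝ)) ≤ A / s := Nat.cast_div_le
    have hjr : j ≤ r := by
      have h1 : (p : ℝ) ^ j ≤ (p : ℝ) ^ r := by
        have : (s : ℝ) ≤ A := by exact_mod_cast hsA
        nlinarith
      have h2 : p ^ j ≤ p ^ r := by exact_mod_cast h1
      exact (Nat.pow_le_pow_iff_right hp.one_lt).1 h2
    have hbound := hprim (A / s) (Nat.div_le_self _ _) (r - j) a ha ?_
      ((T.filter (t · = s)).image y) ?_ ?_ ?_
    · calc _ ≤ D * ((A / s : ℕ) : ℝ) := hbound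
        _ ≤ D * (A / s) := by gcongr
        _ = _ := by ring
    · have h1 : (p : ℝ) ^ (r - j) = (p : ℝ) ^ r / (p : ℝ) ^ j := by
        rw [eq_div_iff (by positivity), ← pow_add, Nat.sub_add_cancel hjr]
      rw [h1, le_div_iff₀ (by positivity)]
      calc K * ((A / s : ℕ) : ℝ) * (p : ℝ) ^ j ≤ K * (A / s) * s := by gcongr
        _ = K * A := by field_simp
        _ ≤ _ := hA
    · simp only [Finset.mem_image, Finset.mem_filter]
      rintro _ ⟨w, ⟨hw, -⟩, rfl⟩
      exact (hty w (h0 w hw)).2.1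
    · simp only [Finset.mem_image, Finset.mem_filter]
      rintro _ ⟨w, ⟨hw, rfl⟩, rfl⟩
      rw [Nat.le_div_iff_mul_le hs1, mul_comm]
      exact hht w hw
    · simp only [Finset.mem_image, Finset.mem_filter]
      rintro _ ⟨w, ⟨hw, rfl⟩, rfl⟩
      have h1 := hQ w hw
      rw [(hty w (h0 w hw)).2.2, diagBilin_smul_self, hsu] at h1
      push_cast at h1
      exact sq_pow_dvd_of_sq_pow_dvd_mul hjr hu' h1
  have hsum : (T.card : ℝ) = ∑ s ∈ Finset.Icc 1 A, ((T.filter (t · = s)).card : ℝ) := by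
    exact_mod_cast Finset.card_eq_sum_card_fiberwise hmaps
  rw [hsum]
  calc _ ≤ ∑ s ∈ Finset.Icc 1 A, D * A * (1 / (s : ℝ)) := Finset.sum_le_sum hfib
    _ = D * A * ∑ s ∈ Finset.Icc 1 A, 1 / (s : ℝ) := by rw [Finset.mul_sum]
    _ ≤ D * A * H := by gcongr
    _ = _ := by ring

lemma one_div_eq_sum_add {a A : ℕ} (ha : 1 ≤ a) (haA : a ≤ A) :
    1 / (a : ℝ) = ∑ b ∈ Finset.Icc a A, 1 / ((b : ℝ) * (b + 1)) + 1 / ((A : ℝ) + 1) := by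
  induction A, haA using Nat.le_induction with
  | base =>
    have : (a : ℝ) ≠ 0 := by positivity
    simp
    field_simp
    ring
  | succ n hn ih =>
    have : (n : ℝ) + 1 ≠ 0 := by positivity
    have h2 : (n : ℝ) + 1 + 1 ≠ 0 := by positivity
    rw [Finset.sum_Icc_succ_top (by omega), ih]
    push_cast
    field_simp
    ring

lemma sum_one_div_ht_le {D H : ℝ} {A : ℕ} (hD : 0 ≤ D)
    (hH : ∑ t ∈ Finset.Icc 1 A, 1 / (t : ℝ) ≤ H) {T : Finset (Fin 3 → ℤ)}
    (h0 : ∀ w ∈ T, w ≠ 0) (hT : ∀ w ∈ T, ht w ≤ A)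
    (hcard : ∀ B ≤ A, ((T.filter (ht · ≤ B)).card : ℝ) ≤ D * B) :
    ∑ w ∈ T, 1 / (ht w : ℝ) ≤ D * (H + 1) := by
  have hpos : ∀ w ∈ T, 1 ≤ ht w := fun w hw =>
    Nat.pos_of_ne_zero fun h => h0 w hw ((ht_eq_zero_iff _).1 h)
  have h1 : ∀ w ∈ T, 1 / (ht w : ℝ) =
      ∑ b ∈ Finset.Icc 1 A, (if ht w ≤ b then 1 / ((b : ℝ) * (b + 1)) else 0)
        + 1 / ((A : ℝ) + 1) := by
    intro w hw
    rw [one_div_eq_sum_add (hpos w hw) (hT w hw), ← Finset.sum_filter]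
    congr 2
    ext b
    have := hpos w hw
    simp only [Finset.mem_Icc, Finset.mem_filter]
    omega
  rw [Finset.sum_congr rfl h1, Finset.sum_add_distrib, Finset.sum_comm]
  have h2 : ∀ b ∈ Finset.Icc 1 A,
      ∑ w ∈ T, (if ht w ≤ b then 1 / ((b : ℝ) * (b + 1)) else 0) ≤ D * (1 / (b : ℝ)) := by
    intro b hb
    obtain ⟨hb1, hbA⟩ := Finset.mem_Icc.1 hb
    have hbR : (0 : ℝ) < b := by exact_mod_cast hb1
    rw [← Finset.sum_filter, Finset.sum_const, nsmul_eq_mul]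
    calc _ ≤ D * b * (1 / ((b : ℝ) * (b + 1))) := by gcongr; exact hcard b hbA
      _ ≤ D * b * (1 / ((b : ℝ) * b)) := by gcongr; linarith
      _ = _ := by field_simp
  have h3 : ∑ w ∈ T, 1 / ((A : ℝ) + 1) ≤ D := by
    have h4 := hcard A le_rfl
    rw [Finset.filter_true_of_mem hT] at h4
    rw [Finset.sum_const, nsmul_eq_mul, mul_one_div, div_le_iff₀ (by positivity)]
    linarith
  calc _ ≤ ∑ b ∈ Finset.Icc 1 A, D * (1 / (b : ℝ)) + D := add_le_add (Finset.sum_le_sum h2) h3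
    _ = D * ∑ b ∈ Finset.Icc 1 A, 1 / (b : ℝ) + D := by rw [Finset.mul_sum]
    _ ≤ D * H + D := by gcongr
    _ = _ := by ring

lemma not_dvd_adjCoeff {p : ℕ} [Fact p.Prime] {a : Fin 3 → ℤ} (ha : ∀ i, ¬ (p : ℤ) ∣ a i)
    (i : Fin 3) : ¬ (p : ℤ) ∣ adjCoeff a i := by
  have hp : Prime (p : ℤ) := Nat.prime_iff_prime_int.1 Fact.out
  have h : ∀ i j, ¬ (p : ℤ) ∣ a i * a j := fun i j hij =>
    (hp.dvd_or_dvd hij).elim (ha i) (ha j)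
  fin_cases i <;> simp [adjCoeff, h]

theorem primBound_of_harmonic {p : ℕ} [Fact p.Prime] (hp2 : 2 < p) {K H : ℝ} {M₀ : ℕ}
    (hH0 : 0 ≤ H) (hH : ∀ A ≤ M₀, ∑ t ∈ Finset.Icc 1 A, 1 / (t : ℝ) ≤ H) (hK3 : 3 ≤ K)
    (hK : 120 * (p : ℝ) ^ 3 * (H * (H + 1)) ≤ K) :
    ∀ M ≤ M₀, PrimBound p K (4 * (p : ℝ) ^ 4 * K) M := by
  have hp := (Fact.out : p.Prime)
  have hpR : (1 : ℝ) < p := by exact_mod_cast hp.one_lt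
  intro M
  induction M using Nat.strong_induction_on with
  | _ M ih =>
  intro hM0 m a ha hKM S hprim hM hQ
  set D := 4 * (p : ℝ) ^ 4 * K with hD
  have hD0 : 0 ≤ D := by positivity
  rcases Nat.eq_zero_or_pos M with rfl | hMpos
  · have : S = ∅ := Finset.eq_empty_of_forall_notMem fun x hx =>
      (hprim x hx).ne_zero ((ht_eq_zero_iff x).1 (Nat.le_zero.1 (hM x hx)))
    simp [this]
  have hMR : (1 : ℝ) ≤ M := by exact_mod_cast hMpos
  have hexr : ∃ r : ℕ, K * M ≤ (p : ℝ) ^ r := ⟨m, hKM⟩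
  classical
  set r := Nat.find hexr with hrdef
  have hr : K * M ≤ (p : ℝ) ^ r := Nat.find_spec hexr
  have hrm : r ≤ m := Nat.find_min' hexr hKM
  have hr0 : r ≠ 0 := by
    intro h
    rw [h, pow_zero] at hr
    nlinarith
  have hrlt : (p : ℝ) ^ r ≤ p * (K * M) := by
    have h1 := Nat.find_min hexr (m := r - 1) (by omega)
    rw [not_le] at h1
    have h2 : (p : ℝ) ^ r = p * (p : ℝ) ^ (r - 1) := by
      rw [← pow_succ', Nat.sub_add_cancel (Nat.pos_of_ne_zero hr0)]
    rw [h2]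
    gcongr
  have hprpos : (0 : ℝ) < (p : ℝ) ^ r := by positivity
  have h3M : 3 * M ≤ p ^ r := by
    have : 3 * (M : ℝ) ≤ (p : ℝ) ^ r := le_trans (by gcongr) hr
    exact_mod_cast this
  have hM3 : 6 * M ^ 3 < (p ^ r) ^ 3 := by
    have h1 : (3 * M) ^ 3 ≤ (p ^ r) ^ 3 := Nat.pow_le_pow_left h3M 3
    have h2 : 0 < M ^ 3 := pow_pos hMpos 3
    rw [mul_pow] at h1
    omega
  set A := 2 * M ^ 2 / p ^ r with hA
  have hprN : 0 < p ^ r := pow_pos hp.pos r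
  have hAM : A < M := by
    rw [hA, Nat.div_lt_iff_lt_mul hprN]
    nlinarith
  set W := (box A).filter fun w => w ≠ 0 ∧ ((p : ℤ) ^ r) ^ 2 ∣ diagBilin (adjCoeff a) w w with hWdef
  have hKA : ∀ B ≤ A, K * B ≤ (p : ℝ) ^ r := fun B hB => by
    have : (B : ℝ) ≤ M := by exact_mod_cast hB.trans hAM.le
    exact le_trans (by gcongr) hr
  have hWsum : ∑ w ∈ W, 1 / (ht w : ℝ) ≤ D * H * (H + 1) := by
    refine sum_one_div_ht_le (by positivity) (hH A (hAM.le.trans hM0)) ?_ ?_ ?_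
    · exact fun w hw => (Finset.mem_filter.1 hw).2.1
    · exact fun w hw => mem_box.1 (Finset.mem_filter.1 hw).1
    · intro B hB
      refine card_le_of_primBound (r := r) (a := adjCoeff a) (by linarith : 1 ≤ K) hD0
        (fun B' hB' => ih B' ((hB'.trans hB).trans_lt hAM) (((hB'.trans hB).trans hAM.le).trans hM0))
        (hH B ((hB.trans hAM.le).trans hM0)) (hKA B hB) (not_dvd_adjCoeff ha) ?_ ?_ ?_
      · exact fun w hw => (Finset.mem_filter.1 (Finset.mem_filter.1 hw).1).2.1
      · exact fun w hw => (Finset.mem_filter.1 hw).2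
      · exact fun w hw => (Finset.mem_filter.1 (Finset.mem_filter.1 hw).1).2.2
  let type : (Fin 3 → ℤ) → (Fin 3 → ZMod p) := fun x j => (x j : ZMod p)
  have hfib : ∀ κ : Fin 3 → ZMod p, ((S.filter (type · = κ)).card : ℝ) ≤
      2 * (p : ℝ) ^ r + 60 * (M : ℝ) ^ 2 / (p : ℝ) ^ r * ∑ w ∈ W, 1 / (ht w : ℝ) := by
    intro κ
    have hmem : ∀ x ∈ S.filter (type · = κ), x ∈ S ∧ type x = κ := fun x hx => Finset.mem_filter.1 hx
    refine card_le_of_residue_class hp2 hr0 ha (fun x hx => hprim x (hmem x hx).1)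
      (fun x hx => hM x (hmem x hx).1) (fun x hx => ?_) (fun x hx y hy j => ?_) hM3
      (fun w hw hwA hwQ => ?_)
    · exact (pow_dvd_pow_of_dvd (pow_dvd_pow _ hrm) 2).trans (hQ x (hmem x hx).1)
    · have h1 := congrFun ((hmem x hx).2.trans (hmem y hy).2.symm) j
      rw [← ZMod.intCast_zmod_eq_zero_iff_dvd]
      push_cast
      exact sub_eq_zero.2 h1
    · refine Finset.mem_filter.2 ⟨mem_box.2 ?_, hw, hwQ⟩
      rw [hA, Nat.le_div_iff_mul_le hprN, mul_comm]
      exact hwA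
  have hS : (S.card : ℝ) = ∑ κ : Fin 3 → ZMod p, ((S.filter (type · = κ)).card : ℝ) := by
    exact_mod_cast Finset.card_eq_sum_card_fiberwise (f := type) fun x _ => Finset.mem_univ _
  have hcard : (Finset.univ : Finset (Fin 3 → ZMod p)).card = p ^ 3 := by
    simp [ZMod.card]
  have hratio : (M : ℝ) ^ 2 / (p : ℝ) ^ r ≤ M / K := by
    rw [div_le_div_iff₀ hprpos (by linarith)]
    nlinarith
  calc (S.card : ℝ) ≤ ∑ _κ : Fin 3 → ZMod p,
        (2 * (p : ℝ) ^ r + 60 * (M : ℝ) ^ 2 / (p : ℝ) ^ r * ∑ w ∈ W, 1 / (ht w : ℝ)) := by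
        rw [hS]; exact Finset.sum_le_sum fun κ _ => hfib κ
    _ = (p : ℝ) ^ 3 * (2 * (p : ℝ) ^ r +
          60 * ((M : ℝ) ^ 2 / (p : ℝ) ^ r) * ∑ w ∈ W, 1 / (ht w : ℝ)) := by
        rw [Finset.sum_const, hcard, nsmul_eq_mul]; push_cast; ring
    _ ≤ (p : ℝ) ^ 3 * (2 * (p * (K * M)) + 60 * (M / K) * (D * H * (H + 1))) := by
        gcongr
    _ = 2 * (p : ℝ) ^ 4 * K * M + 2 * (p : ℝ) ^ 4 * M * (120 * (p : ℝ) ^ 3 * (H * (H + 1))) := by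
        rw [hD]; field_simp; ring
    _ ≤ 2 * (p : ℝ) ^ 4 * K * M + 2 * (p : ℝ) ^ 4 * M * K := by gcongr
    _ = D * M := by rw [hD]; ring

lemma sum_weight_le_of_primBound {p : ℕ} [Fact p.Prime] {K D H : ℝ} {M r : ℕ}
    (hK : 1 ≤ K) (hD : 0 ≤ D) (hprim : ∀ B ≤ M, PrimBound p K D B)
    (hH : ∀ B ≤ M, ∑ t ∈ Finset.Icc 1 B, 1 / (t : ℝ) ≤ H) (hM : K * M ≤ (p : ℝ) ^ r)
    {a : Fin 3 → ℤ} (ha : ∀ i, ¬ (p : ℤ) ∣ a i) {T : Finset (Fin 3 → ℤ)}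
    (h0 : ∀ w ∈ T, w ≠ 0) (hT : ∀ w ∈ T, ht w ≤ M)
    (hQ : ∀ w ∈ T, ((p : ℤ) ^ r) ^ 2 ∣ diagBilin a w w) {wt : (Fin 3 → ℤ) → ℝ}
    (hwt : ∀ w ∈ T, ∃ (j : ℕ) (y : Fin 3 → ℤ), w = (p : ℤ) ^ j • y ∧ wt w ≤ (p : ℝ) ^ j) :
    ∑ w ∈ T, wt w ≤ (r + 1) * (D * H * M) := by
  have hp := (Fact.out : p.Prime)
  have hpp : (0 : ℝ) < p := by exact_mod_cast hp.pos
  have hex : ∀ w : Fin 3 → ℤ, ∃ (j : ℕ) (y : Fin 3 → ℤ), w ∈ T →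
      w = (p : ℤ) ^ j • y ∧ wt w ≤ (p : ℝ) ^ j := by
    intro w
    by_cases hw : w ∈ T
    · obtain ⟨j, y, h⟩ := hwt w hw
      exact ⟨j, y, fun _ => h⟩
    · exact ⟨0, 0, fun h => absurd h hw⟩
  choose j y hjy using hex
  have hy0 : ∀ w ∈ T, y w ≠ 0 := fun w hw h => by
    have := (hjy w hw).1
    rw [h, smul_zero] at this
    exact h0 w hw this
  have hht : ∀ w ∈ T, p ^ j w * ht (y w) ≤ M := by
    intro w hw
    have := hT w hw
    rwa [(hjy w hw).1, ht_smul, Int.natAbs_pow, Int.natAbs_natCast] at this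
  have hjr : ∀ w ∈ T, j w ≤ r := by
    intro w hw
    have hpos : 0 < ht (y w) := Nat.pos_of_ne_zero fun h => hy0 w hw ((ht_eq_zero_iff _).1 h)
    have h1 : p ^ j w ≤ M := (Nat.le_mul_of_pos_right _ hpos).trans (hht w hw)
    have h1' : (p : ℝ) ^ j w ≤ M := by exact_mod_cast h1
    have h2 : (p : ℝ) ^ j w ≤ (p : ℝ) ^ r := by nlinarith
    have h2 : p ^ j w ≤ p ^ r := by exact_mod_cast h2
    exact (Nat.pow_le_pow_iff_right hp.one_lt).1 h2
  have hmaps : ∀ w ∈ T, j w ∈ Finset.range (r + 1) := fun w hw =>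
    Finset.mem_range_succ_iff.2 (hjr w hw)
  have hfib : ∀ s ∈ Finset.range (r + 1), ∑ w ∈ T with j w = s, wt w ≤ D * H * M := by
    intro s hs
    have hsr : s ≤ r := Finset.mem_range_succ_iff.1 hs
    have hps : 0 < p ^ s := pow_pos hp.pos s
    have hpsR : (0 : ℝ) < (p : ℝ) ^ s := by positivity
    have hinj : Set.InjOn y (T.filter (j · = s) : Finset (Fin 3 → ℤ)) := by
      intro u hu v hv huv
      simp only [Finset.coe_filter, Set.mem_ofPred_eq] at hu hv
      rw [(hjy u hu.1).1, (hjy v hv.1).1, hu.2, hv.2, huv]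
    have hdiv : (((M / p ^ s : ℕ) : ℝ)) ≤ M / (p : ℝ) ^ s := by
      simpa using (Nat.cast_div_le : ((M / p ^ s : ℕ) : ℝ) ≤ _)
    have hH0 : 0 ≤ H := le_trans (by simp) (hH 0 (Nat.zero_le _))
    have hbound := card_le_of_primBound (r := r - s) (A := M / p ^ s) hK hD
      (fun B hB => hprim B (hB.trans (Nat.div_le_self _ _))) (hH _ (Nat.div_le_self _ _)) ?_ ha
      (T := (T.filter (j · = s)).image y) ?_ ?_ ?_
    · rw [Finset.card_image_of_injOn hinj] at hbound
      calc ∑ w ∈ T with j w = s, wt w ≤ ∑ w ∈ T with j w = s, (p : ℝ) ^ s :=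
            Finset.sum_le_sum fun w hw => by
              obtain ⟨hw', rfl⟩ := Finset.mem_filter.1 hw
              exact (hjy w hw').2
        _ = ((T.filter (j · = s)).card : ℝ) * (p : ℝ) ^ s := by rw [Finset.sum_const, nsmul_eq_mul]
        _ ≤ (D * H * (M / (p : ℝ) ^ s)) * (p : ℝ) ^ s := by
            gcongr
            exact hbound.trans (by gcongr)
        _ = _ := by field_simp
    · have h1 : (p : ℝ) ^ (r - s) = (p : ℝ) ^ r / (p : ℝ) ^ s := by
        rw [eq_div_iff (by positivity), ← pow_add, Nat.sub_add_cancel hsr]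
      rw [h1, le_div_iff₀ (by positivity)]
      calc K * ((M / p ^ s : ℕ) : ℝ) * (p : ℝ) ^ s ≤ K * (M / (p : ℝ) ^ s) * (p : ℝ) ^ s := by gcongr
        _ = K * M := by field_simp
        _ ≤ _ := hM
    · simp only [Finset.mem_image, Finset.mem_filter]
      rintro _ ⟨w, ⟨hw, -⟩, rfl⟩
      exact hy0 w hw
    · simp only [Finset.mem_image, Finset.mem_filter]
      rintro _ ⟨w, ⟨hw, rfl⟩, rfl⟩
      rw [Nat.le_div_iff_mul_le hps, mul_comm]
      exact hht w hw
    · simp only [Finset.mem_image, Finset.mem_filter]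
      rintro _ ⟨w, ⟨hw, rfl⟩, rfl⟩
      have h1 := hQ w hw
      rw [(hjy w hw).1, diagBilin_smul_self, ← mul_one ((p : ℤ) ^ j w)] at h1
      refine sq_pow_dvd_of_sq_pow_dvd_mul hsr ?_ h1
      exact fun h => hp.ne_one (by exact_mod_cast Int.eq_one_of_dvd_one (by positivity) h)
  rw [← Finset.sum_fiberwise_of_maps_to hmaps]
  calc _ ≤ ∑ s ∈ Finset.range (r + 1), D * H * M := Finset.sum_le_sum hfib
    _ = _ := by rw [Finset.sum_const, Finset.card_range, nsmul_eq_mul]; push_cast; ring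

open Classical in
/-- The solutions of a diagonal quadratic equation all of whose coordinates are units. -/
noncomputable def unitSols {R : Type*} [CommRing R] [Fintype R] (a : Fin 3 → R) :
    Finset (Fin 3 → R) :=
  Finset.univ.filter fun x => (∀ i, IsUnit (x i)) ∧ diagBilin a x x = 0

lemma mem_unitSols {R : Type*} [CommRing R] [Fintype R] {a x : Fin 3 → R} :
    x ∈ unitSols a ↔ (∀ i, IsUnit (x i)) ∧ diagBilin a x x = 0 := by
  simp [unitSols]

/-- The exponential sum over the unit solutions of a diagonal quadratic equation. -/
noncomputable def unitExpSum {R : Type*} [CommRing R] [Fintype R] (ψ : AddChar R ℂ)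
    (a m : Fin 3 → R) : ℂ :=
  ∑ x ∈ unitSols a, ψ (m ⬝ᵥ x)

/-- Averaging over a family of permutations of `S` that twist `φ` by factors `χ g x`. -/
lemma sum_eq_sum_filter_of_average {α G : Type*} [Fintype G] [Nonempty G] {S : Finset α}
    {φ : α → ℂ} {T : G → α → α} {χ : G → α → ℂ} {good : α → Prop} [DecidablePred good]
    (hT : ∀ g, ∑ x ∈ S, φ (T g x) = ∑ x ∈ S, φ x)
    (hχ : ∀ g, ∀ x ∈ S, φ (T g x) = φ x * χ g x)
    (hgood : ∀ x ∈ S, ∑ g, χ g x = if good x then (Fintype.card G : ℂ) else 0) :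
    ∑ x ∈ S, φ x = ∑ x ∈ S with good x, φ x := by
  have hcard : (Fintype.card G : ℂ) ≠ 0 := by exact_mod_cast Fintype.card_ne_zero
  refine mul_left_cancel₀ hcard ?_
  calc (Fintype.card G : ℂ) * ∑ x ∈ S, φ x = ∑ g : G, ∑ x ∈ S, φ (T g x) := by
        simp [hT]
    _ = ∑ g : G, ∑ x ∈ S, φ x * χ g x :=
        Finset.sum_congr rfl fun g _ => Finset.sum_congr rfl fun x hx => hχ g x hx
    _ = ∑ x ∈ S, φ x * ∑ g, χ g x := by
        rw [Finset.sum_comm]; simp only [Finset.mul_sum]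
    _ = ∑ x ∈ S, if good x then (Fintype.card G : ℂ) * φ x else 0 :=
        Finset.sum_congr rfl fun x hx => by rw [hgood x hx]; split_ifs <;> ring
    _ = _ := by rw [← Finset.sum_filter, Finset.mul_sum]

lemma sum_addChar_dotProduct {R : Type*} [CommRing R] [Fintype R] [DecidableEq R]
    {ψ : AddChar R ℂ} (hψ : ψ.IsPrimitive) (c : Fin 3 → R) :
    ∑ u : Fin 3 → R, ψ (u ⬝ᵥ c) = if c = 0 then (Fintype.card (Fin 3 → R) : ℂ) else 0 := by
  have h1 : ∀ u : Fin 3 → R, ψ (u ⬝ᵥ c) = ∏ i, ψ (u i * c i) := fun u => by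
    simp [dotProduct, Fin.sum_univ_three, Fin.prod_univ_three, AddChar.map_add_eq_mul]
  simp_rw [h1]
  rw [← Fintype.prod_sum (fun i u => ψ (u * c i))]
  simp_rw [AddChar.sum_mulShift _ hψ]
  split_ifs with hc
  · simp [hc]
  · obtain ⟨i, hi⟩ := Function.ne_iff.1 hc
    refine Finset.prod_eq_zero (Finset.mem_univ i) ?_
    simp at hi
    simp [hi]

/-- Only the critical points contribute to the exponential sum. -/
lemma unitExpSum_eq_sum_critical {R : Type*} [CommRing R] [Fintype R] [DecidableEq R] {ψ : AddChar R ℂ}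
    (hψ : ψ.IsPrimitive) {π t : R} (hπ : IsNilpotent π) (ht : t ^ 2 = 0) (a m : Fin 3 → R) :
    unitExpSum ψ a m =
      ∑ x ∈ unitSols a with t • (m ⨯₃ (a * x)) = 0 ∧ π * (m ⬝ᵥ x) = 0, ψ (m ⬝ᵥ x) := by
  have hnil : IsNilpotent t := ⟨2, ht⟩
  let T : (Fin 3 → R) → (Fin 3 → R) → (Fin 3 → R) := fun u x => x + t • ((a * x) ⨯₃ u)
  have hTmem : ∀ u, ∀ x ∈ unitSols a, T u x ∈ unitSols a := by
    intro u x hx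
    rw [mem_unitSols] at hx ⊢
    refine ⟨fun i => ?_, ?_⟩
    · have : IsNilpotent (t * ((a * x) ⨯₃ u) i) := (Commute.all _ _).isNilpotent_mul_right hnil
      exact this.isUnit_add_left_of_commute (hx.1 i) (Commute.all _ _)
    · have h1 := hx.2
      simp only [diagBilin] at h1
      simp only [diagBilin, T, cross_apply, Pi.add_apply, Pi.smul_apply, Pi.mul_apply, smul_eq_mul,
        cons_val_zero, cons_val_one, cons_val]
      linear_combination h1 + (a 0 * (a 1 * x 1 * u 2 - a 2 * x 2 * u 1) ^ 2 +
        a 1 * (a 2 * x 2 * u 0 - a 0 * x 0 * u 2) ^ 2 +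
        a 2 * (a 0 * x 0 * u 1 - a 1 * x 1 * u 0) ^ 2) * ht
  have hTinv : ∀ u x, T (-u) (T u x) = x := by
    intro u x
    ext i
    fin_cases i <;> simp only [T, cross_apply, Pi.add_apply, Pi.smul_apply, Pi.mul_apply,
      Pi.neg_apply, smul_eq_mul, cons_val_zero, cons_val_one, cons_val, Fin.zero_eta, Fin.mk_one,
      Fin.reduceFinMk]
    · linear_combination (a 2 * (a 0 * x 0 * u 1 - a 1 * x 1 * u 0) * u 1 -
        a 1 * (a 2 * x 2 * u 0 - a 0 * x 0 * u 2) * u 2) * ht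
    · linear_combination (a 0 * (a 1 * x 1 * u 2 - a 2 * x 2 * u 1) * u 2 -
        a 2 * (a 0 * x 0 * u 1 - a 1 * x 1 * u 0) * u 0) * ht
    · linear_combination (a 1 * (a 2 * x 2 * u 0 - a 0 * x 0 * u 2) * u 0 -
        a 0 * (a 1 * x 1 * u 2 - a 2 * x 2 * u 1) * u 1) * ht
  have step1 : unitExpSum ψ a m =
      ∑ x ∈ unitSols a with t • (m ⨯₃ (a * x)) = 0, ψ (m ⬝ᵥ x) := by
    refine sum_eq_sum_filter_of_average (T := T)
      (χ := fun u x => ψ (u ⬝ᵥ (t • (m ⨯₃ (a * x))))) ?_ ?_ ?_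
    · intro u
      refine Finset.sum_nbij' (T u) (T (-u)) (hTmem u) (hTmem (-u)) (fun x _ => hTinv u x)
        (fun x _ => by simpa using hTinv (-u) x) (fun x _ => rfl)
    · intro u x _
      rw [← AddChar.map_add_eq_mul]
      congr 1
      simp only [T, cross_apply, dotProduct, Fin.sum_univ_three, Pi.add_apply, Pi.smul_apply,
        Pi.mul_apply, smul_eq_mul, cons_val_zero, cons_val_one, cons_val]
      ring
    · exact fun x _ => sum_addChar_dotProduct hψ _
  have hunit : ∀ v : R, IsUnit (1 + π * v) := fun v =>
    ((Commute.all _ _).isNilpotent_mul_right hπ).isUnit_one_add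
  have hscale : ∀ c : Rˣ, ∀ x ∈ (unitSols a).filter (fun x => t • (m ⨯₃ (a * x)) = 0),
      (c : R) • x ∈ (unitSols a).filter (fun x => t • (m ⨯₃ (a * x)) = 0) := by
    intro c x hx
    rw [Finset.mem_filter, mem_unitSols] at hx ⊢
    obtain ⟨⟨h1, h2⟩, h3⟩ := hx
    refine ⟨⟨fun i => c.isUnit.mul (h1 i), ?_⟩, ?_⟩
    · simp only [diagBilin] at h2
      simp only [diagBilin, Pi.smul_apply, smul_eq_mul]
      linear_combination (c : R) ^ 2 * h2
    · rw [mul_smul_comm, map_smul, smul_comm, h3, smul_zero]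
  rw [step1, ← Finset.filter_filter]
  refine sum_eq_sum_filter_of_average (T := fun v x => (1 + π * v) • x)
    (χ := fun v x => ψ (v * (π * (m ⬝ᵥ x)))) ?_ ?_ ?_
  · intro v
    obtain ⟨c, hc⟩ := hunit v
    refine Finset.sum_nbij' (fun x => (c : R) • x) (fun x => ((c⁻¹ : Rˣ) : R) • x)
      (hscale c) (hscale c⁻¹) (fun x _ => ?_) (fun x _ => ?_) (fun x _ => by rw [hc])
    · simp [smul_smul]
    · simp [smul_smul]
  · intro v x _
    rw [← AddChar.map_add_eq_mul, dotProduct_smul, smul_eq_mul]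
    congr 1
    ring
  · intro x _
    rw [AddChar.sum_mulShift _ hψ]
    split_ifs <;> simp

lemma norm_unitExpSum_le {R : Type*} [CommRing R] [Fintype R] [DecidableEq R] {ψ : AddChar R ℂ}
    (hψ : ψ.IsPrimitive) {π t : R} (hπ : IsNilpotent π) (ht : t ^ 2 = 0) (a m : Fin 3 → R) :
    ‖unitExpSum ψ a m‖ ≤
      ((unitSols a).filter fun x => t • (m ⨯₃ (a * x)) = 0 ∧ π * (m ⬝ᵥ x) = 0).card := by
  rw [unitExpSum_eq_sum_critical hψ hπ ht]
  refine (norm_sum_le _ _).trans ?_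
  simp [AddChar.norm_apply]

lemma norm_unitExpSum_le_card {R : Type*} [CommRing R] [Fintype R] (ψ : AddChar R ℂ)
    (a m : Fin 3 → R) : ‖unitExpSum ψ a m‖ ≤ (unitSols a).card := by
  refine (norm_sum_le _ _).trans ?_
  simp [AddChar.norm_apply]

/-- A critical point forces the adjoint form to almost vanish at the frequency. -/
lemma mul_diagBilin_adjCoeff_eq_zero {R : Type*} [CommRing R] {π t d : R}
    (hann : ∀ c : R, t * c = 0 → d ∣ c) (hπd : π * d ^ 2 = 0) {a m x : Fin 3 → R}
    (ha : ∀ i, IsUnit (a i)) (hx : ∀ i, IsUnit (x i)) (hQ : diagBilin a x x = 0)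
    (hcr : t • (m ⨯₃ (a * x)) = 0) (hdot : π * (m ⬝ᵥ x) = 0) :
    π * diagBilin (adjCoeff a) m m = 0 := by
  have h1 := congrFun hcr 1
  have h2 := congrFun hcr 2
  simp [cross_apply] at h1 h2
  obtain ⟨v₁, hv₁⟩ := hann _ h2
  obtain ⟨v₂, hv₂⟩ := hann _ h1
  have hu : IsUnit ((a 0 * x 0) ^ 2) := ((ha 0).mul (hx 0)).pow 2
  refine hu.mul_left_cancel ?_
  simp [dotProduct, Fin.sum_univ_three] at hdot
  simp only [diagBilin] at hQ
  simp only [diagBilin, adjCoeff, cons_val_zero, cons_val_one, cons_val]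
  linear_combination (-(π * m 0 ^ 2 * (a 0 * a 1 * a 2))) * hQ
    + 2 * m 0 * (a 0 * a 1 * a 2) * (a 0 * x 0) * hdot
    + (a 0 * a 2 * v₁ ^ 2 + a 0 * a 1 * v₂ ^ 2) * hπd
    + π * (a 0 * a 2) * (m 0 * (a 1 * x 1) - m 1 * (a 0 * x 0) + d * v₁) * hv₁
    + π * (a 0 * a 1) * (m 2 * (a 0 * x 0) - m 0 * (a 2 * x 2) + d * v₂) * hv₂

lemma isUnit_intCast_of_not_dvd {p : ℕ} [Fact p.Prime] (n : ℕ) {u : ℤ} (hu : ¬ (p : ℤ) ∣ u) :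
    IsUnit (u : ZMod (p ^ n)) := by
  rw [ZMod.coe_int_isUnit_iff_isCoprime]
  exact_mod_cast isCoprime_pow_of_not_dvd n hu

lemma isUnit_two_zmod_pow {p : ℕ} [Fact p.Prime] (hp2 : 2 < p) (n : ℕ) :
    IsUnit (2 : ZMod (p ^ n)) := by
  have := isUnit_intCast_of_not_dvd (p := p) n (u := 2) fun h => by
    have := Int.le_of_dvd two_pos h
    omega
  simpa using this

lemma isNilpotent_natCast_zmod_pow (p n : ℕ) : IsNilpotent (p : ZMod (p ^ n)) :=
  ⟨n, by rw [← Nat.cast_pow]; exact ZMod.natCast_self _⟩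

lemma pow_dvd_sub_of_pow_mul_eq_zero {p : ℕ} [Fact p.Prime] {n s : ℕ} {x y : ℤ}
    (h : (p : ZMod (p ^ n)) ^ s * (x - y) = 0) : (p : ℤ) ^ (n - s) ∣ x - y := by
  rcases le_total s n with hs | hs
  · have h1 : (((p : ℤ) ^ s * (x - y) : ℤ) : ZMod (p ^ n)) = 0 := by push_cast; exact h
    rw [ZMod.intCast_zmod_eq_zero_iff_dvd, Nat.cast_pow, ← Nat.add_sub_cancel' hs, pow_add] at h1
    have hp0 : (p : ℤ) ≠ 0 := by exact_mod_cast (Fact.out : p.Prime).ne_zero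
    exact (mul_dvd_mul_iff_left (pow_ne_zero s hp0)).1 h1
  · simp [Nat.sub_eq_zero_of_le hs]

lemma pow_dvd_of_pow_mul_eq_zero {p : ℕ} [Fact p.Prime] {n s : ℕ} {c : ZMod (p ^ n)}
    (h : (p : ZMod (p ^ n)) ^ s * c = 0) : (p : ZMod (p ^ n)) ^ (n - s) ∣ c := by
  have h1 : (p : ℤ) ^ (n - s) ∣ (c.val : ℤ) - 0 := by
    refine pow_dvd_sub_of_pow_mul_eq_zero (n := n) (s := s) ?_
    simpa using h
  rw [sub_zero] at h1
  have h2 := map_dvd (Int.castRingHom (ZMod (p ^ n))) h1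
  simpa using h2

lemma val_mod_eq_of_pow_mul_sub_eq_zero {p : ℕ} [Fact p.Prime] {n s : ℕ} {x y : ZMod (p ^ n)}
    (h : (p : ZMod (p ^ n)) ^ s * (x - y) = 0) : x.val % p ^ (n - s) = y.val % p ^ (n - s) := by
  have h1 : (p : ℤ) ^ (n - s) ∣ (x.val : ℤ) - (y.val : ℤ) := by
    refine pow_dvd_sub_of_pow_mul_eq_zero (n := n) (s := s) ?_
    simpa using h
  have h2 : (y.val : ℤ) ≡ x.val [ZMOD ((p ^ (n - s) : ℕ) : ℤ)] := by
    rw [Int.modEq_iff_dvd]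
    exact_mod_cast h1
  exact ((Int.natCast_modEq_iff).1 h2).symm

/-- A unit solution of `u ^ 2 = c` modulo `p ^ n` is determined by its class modulo `p`. -/
lemma eq_of_sq_eq_of_val_mod_eq {p : ℕ} [Fact p.Prime] (hp2 : 2 < p) {n : ℕ} {x y : ZMod (p ^ n)}
    (hy : IsUnit y) (hsq : x ^ 2 = y ^ 2) (hmod : x.val % p = y.val % p) : x = y := by
  have hc : ∃ c : ZMod (p ^ n), x - y = p * c := by
    have h1 : (y.val : ℤ) ≡ x.val [ZMOD p] := (Int.natCast_modEq_iff).2 hmod.symm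
    obtain ⟨c, hc⟩ := h1.dvd
    refine ⟨c, ?_⟩
    have := congrArg (Int.cast : ℤ → ZMod (p ^ n)) hc
    simpa using this
  obtain ⟨c, hc⟩ := hc
  have hunit : IsUnit (x + y) := by
    have h1 : x + y = 2 * y + p * c := by linear_combination hc
    rw [h1]
    exact ((Commute.all _ _).isNilpotent_mul_right
      (isNilpotent_natCast_zmod_pow p n)).isUnit_add_left_of_commute
      ((isUnit_two_zmod_pow hp2 n).mul hy) (Commute.all _ _)
  have h2 : (x + y) * (x - y) = 0 := by linear_combination hsq
  exact sub_eq_zero.1 ((hunit.mul_right_eq_zero).1 h2)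

lemma mul_sub_eq_zero_of_smul_cross_eq_zero {R : Type*} [CommRing R] {t : R} {x y : Fin 3 → R} :
    t • (x ⨯₃ y) = 0 → ∀ u v, t * (x u * y v - x v * y u) = 0 := by
  intro h
  have h0 := congrFun h 0
  have h1 := congrFun h 1
  have h2 := congrFun h 2
  simp [cross_apply] at h0 h1 h2
  intro u v
  fin_cases u <;> fin_cases v <;> simp <;>
    first | assumption | linear_combination -h0 | linear_combination -h1 | linear_combination -h2

lemma card_critical_le {p : ℕ} [Fact p.Prime] (hp2 : 2 < p) {n s j : ℕ}
    {a m : Fin 3 → ZMod (p ^ n)} (ha : ∀ i, IsUnit (a i)) {i : Fin 3} (hm : IsUnit (m i))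
    {F : Finset (Fin 3 → ZMod (p ^ n))} (hF : F ⊆ unitSols a)
    (hcr : ∀ x ∈ F, (p : ZMod (p ^ n)) ^ s • (((p : ZMod (p ^ n)) ^ j • m) ⨯₃ (a * x)) = 0) :
    F.card ≤ p ^ n * (p ^ (n - (n - (s + j))) * p) := by
  have hp := (Fact.out : p.Prime)
  obtain ⟨k, l, hik, hkl, hil⟩ : ∃ k l : Fin 3, i ≠ k ∧ k ≠ l ∧ i ≠ l := by
    fin_cases i
    · exact ⟨1, 2, by decide⟩
    · exact ⟨0, 2, by decide⟩
    · exact ⟨0, 1, by decide⟩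
  set e := n - (s + j) with he
  have htarget : p ^ n * (p ^ (n - e) * p) = ((Finset.univ : Finset (ZMod (p ^ n))) ×ˢ
      (Finset.range (p ^ (n - e)) ×ˢ Finset.range p)).card := by
    simp [ZMod.card]
  rw [htarget]
  refine Finset.card_le_card_of_injOn (fun x => (x i, ((x k).val / p ^ e, (x l).val % p))) ?_ ?_
  · intro x _
    simp only [Finset.coe_product, Set.mem_prod, Finset.mem_coe, Finset.mem_univ, Finset.mem_range,
      true_and]
    refine ⟨?_, Nat.mod_lt _ hp.pos⟩
    rw [Nat.div_lt_iff_lt_mul (pow_pos hp.pos _), ← pow_add, Nat.sub_add_cancel (Nat.sub_le _ _)]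
    exact ZMod.val_lt _
  · intro x hx y hy hxy
    simp only [Prod.mk.injEq] at hxy
    obtain ⟨hi, hk, hl⟩ := hxy
    have hk' : x k = y k := by
      have h1 := mul_sub_eq_zero_of_smul_cross_eq_zero (hcr x hx) i k
      have h2 := mul_sub_eq_zero_of_smul_cross_eq_zero (hcr y hy) i k
      simp only [Pi.smul_apply, Pi.mul_apply, smul_eq_mul] at h1 h2
      have h3 : (m i * a k) * ((p : ZMod (p ^ n)) ^ (s + j) * (x k - y k)) = 0 := by
        rw [← hi] at h2
        rw [pow_add]
        linear_combination h1 - h2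
      have h4 := ((hm.mul (ha k)).mul_right_eq_zero).1 h3
      have h5 := val_mod_eq_of_pow_mul_sub_eq_zero h4
      apply ZMod.val_injective
      rw [← Nat.div_add_mod (x k).val (p ^ e), ← Nat.div_add_mod (y k).val (p ^ e), hk, h5]
    have hx' := mem_unitSols.1 (hF hx)
    have hy' := mem_unitSols.1 (hF hy)
    have hl' : x l = y l := by
      refine eq_of_sq_eq_of_val_mod_eq hp2 (hy'.1 l) ?_ hl
      have h1 := hx'.2
      have h2 := hy'.2
      rw [diagBilin_eq_of_ne hik hkl hil] at h1 h2
      rw [hi, hk'] at h1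
      refine (ha l).mul_left_cancel ?_
      linear_combination h1 - h2
    have cases3 : ∀ u : Fin 3, u = i ∨ u = k ∨ u = l := by
      have aux : ∀ i k l u : Fin 3, i ≠ k → k ≠ l → i ≠ l → u = i ∨ u = k ∨ u = l := by decide
      exact fun u => aux i k l u hik hkl hil
    ext u
    rcases cases3 u with rfl | rfl | rfl <;> assumption

/-- The exponential sum at the integer frequency `m` for the modulus `p ^ n`. -/
noncomputable def freqSum (p : ℕ) [Fact p.Prime] (n : ℕ) (a m : Fin 3 → ℤ) : ℂ :=
  unitExpSum (ZMod.stdAddChar (N := p ^ n)) (fun i => (a i : ZMod (p ^ n)))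
    (fun i => (m i : ZMod (p ^ n)))

/-- The exponential sum vanishes unless the adjoint form is divisible by `p ^ (n - 1)`. -/
lemma freqSum_ne_zero {p : ℕ} [Fact p.Prime] {n : ℕ} {a m : Fin 3 → ℤ}
    (ha : ∀ i, ¬ (p : ℤ) ∣ a i) (hne : freqSum p n a m ≠ 0) :
    (p : ℤ) ^ (n - 1) ∣ diagBilin (adjCoeff a) m m := by
  have hpn : (p : ZMod (p ^ n)) ^ n = 0 := by rw [← Nat.cast_pow]; exact ZMod.natCast_self _
  have hz : ∀ k, n ≤ k → (p : ZMod (p ^ n)) ^ k = 0 := fun k hk => pow_eq_zero_of_le hk hpn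
  have hne' := hne
  rw [freqSum, unitExpSum_eq_sum_critical (ZMod.isPrimitive_stdAddChar _)
    (isNilpotent_natCast_zmod_pow p n) (t := (p : ZMod (p ^ n)) ^ (n - n / 2))
    (by rw [← pow_mul]; exact hz _ (by omega))] at hne'
  obtain ⟨x, hx, -⟩ := Finset.exists_ne_zero_of_sum_ne_zero hne'
  obtain ⟨hx, hcr, hdot⟩ := Finset.mem_filter.1 hx
  obtain ⟨hu, hQ⟩ := mem_unitSols.1 hx
  have h1 := mul_diagBilin_adjCoeff_eq_zero (d := (p : ZMod (p ^ n)) ^ (n / 2)) (t := (p : ZMod (p ^ n)) ^ (n - n / 2))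
    (fun c hc => by
      have := pow_dvd_of_pow_mul_eq_zero hc
      rwa [Nat.sub_sub_self (Nat.div_le_self n 2)] at this)
    (by rw [← pow_mul, ← pow_succ']; exact hz _ (by omega))
    (fun i => isUnit_intCast_of_not_dvd n (ha i)) hu hQ hcr hdot
  have h2 : (p : ZMod (p ^ n)) ^ 1 * (((diagBilin (adjCoeff a) m m : ℤ) : ZMod (p ^ n)) - ((0 : ℤ) : ZMod (p ^ n))) = 0 := by
    rw [pow_one, Int.cast_zero, sub_zero]
    rw [← h1]
    simp [diagBilin, adjCoeff]
  simpa using pow_dvd_sub_of_pow_mul_eq_zero h2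

lemma norm_freqSum_le {p : ℕ} [Fact p.Prime] (hp2 : 2 < p) {n j : ℕ} {a m : Fin 3 → ℤ}
    (ha : ∀ i, ¬ (p : ℤ) ∣ a i) (hm : ∃ i, ¬ (p : ℤ) ∣ m i) :
    ‖freqSum p n a ((p : ℤ) ^ j • m)‖ ≤ (p : ℝ) ^ n * (p : ℝ) ^ (n - n / 2) * (p : ℝ) ^ j * p := by
  have hp := (Fact.out : p.Prime)
  obtain ⟨i, hi⟩ := hm
  have hpn : (p : ZMod (p ^ n)) ^ n = 0 := by rw [← Nat.cast_pow]; exact ZMod.natCast_self _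
  have hz : ∀ k, n ≤ k → (p : ZMod (p ^ n)) ^ k = 0 := fun k hk => pow_eq_zero_of_le hk hpn
  have hcast : (fun i => ((((p : ℤ) ^ j • m) i : ℤ) : ZMod (p ^ n))) = (p : ZMod (p ^ n)) ^ j • fun i => (m i : ZMod (p ^ n)) := by
    ext i; simp
  have h1 := norm_unitExpSum_le (ZMod.isPrimitive_stdAddChar (p ^ n))
    (isNilpotent_natCast_zmod_pow p n) (t := (p : ZMod (p ^ n)) ^ (n - n / 2))
    (by rw [← pow_mul]; exact hz _ (by omega)) (fun i => (a i : ZMod (p ^ n)))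
    (fun i => ((((p : ℤ) ^ j • m) i : ℤ) : ZMod (p ^ n)))
  refine h1.trans ?_
  have h2 := card_critical_le hp2 (n := n) (s := n - n / 2) (j := j) (a := fun i => (a i : ZMod (p ^ n)))
    (m := fun i => (m i : ZMod (p ^ n))) (fun i => isUnit_intCast_of_not_dvd n (ha i)) (i := i)
    (isUnit_intCast_of_not_dvd n hi)
    (F := (unitSols (fun i => (a i : ZMod (p ^ n)))).filter fun x =>
      (p : ZMod (p ^ n)) ^ (n - n / 2) • ((fun i => ((((p : ℤ) ^ j • m) i : ℤ) : ZMod (p ^ n))) ⨯₃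
        ((fun i => (a i : ZMod (p ^ n))) * x)) = 0 ∧
      (p : ZMod (p ^ n)) * ((fun i => ((((p : ℤ) ^ j • m) i : ℤ) : ZMod (p ^ n))) ⬝ᵥ x) = 0)
    (Finset.filter_subset _ _) (fun x hx => by
      rw [← hcast]
      exact (Finset.mem_filter.1 hx).2.1)
  have h3 : p ^ (n - (n - (n - n / 2 + j))) ≤ p ^ (n - n / 2) * p ^ j := by
    rw [← pow_add]
    exact Nat.pow_le_pow_right hp.pos (by omega)
  have h4 := h2.trans (Nat.mul_le_mul_left (p ^ n) (Nat.mul_le_mul_right p h3))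
  calc _ ≤ (((p ^ n * (p ^ (n - n / 2) * p ^ j * p) : ℕ)) : ℝ) := by exact_mod_cast h4
    _ = _ := by push_cast; ring

section FieldCount

variable {F : Type*} [Field F] [Fintype F] [DecidableEq F]

lemma card_nonzero_sqrts (hF : ringChar F ≠ 2) (v : F) :
    ((Finset.univ.filter fun y : F => y ≠ 0 ∧ y ^ 2 = v).card : ℤ) =
      quadraticChar F v ^ 2 + quadraticChar F v := by
  by_cases hv : v = 0
  · subst hv
    simp
  · have h1 := quadraticChar_card_sqrts hF v
    rw [quadraticChar_sq_one hv, add_comm, ← h1]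
    congr 2
    ext y
    simp only [Finset.mem_filter, Finset.mem_univ, true_and, Set.mem_toFinset, Set.mem_ofPred_eq]
    exact ⟨fun h => h.2, fun h => ⟨fun h0 => hv (by rw [← h, h0]; simp), h⟩⟩

lemma sum_quadraticChar_sq_mul (f : F → ℤ) :
    ∑ u, quadraticChar F u ^ 2 * f u = ∑ u, f u - f 0 := by
  have h1 : ∀ u, quadraticChar F u ^ 2 * f u = f u - if u = 0 then f 0 else 0 := by
    intro u
    split_ifs with h
    · simp [h]
    · rw [quadraticChar_sq_one h]; ring
  rw [Finset.sum_congr rfl fun u _ => h1 u, Finset.sum_sub_distrib]; simp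

lemma sum_quadraticChar_linear (hF : ringChar F ≠ 2) {e : F} (he : e ≠ 0) (f : F) :
    ∑ u, quadraticChar F (e * u + f) = 0 := by
  rw [← quadraticChar_sum_zero hF]
  exact Fintype.sum_equiv ((Equiv.mulLeft₀ e he).trans (Equiv.addRight f)) _ _ fun u => rfl

lemma quadraticChar_mul_sq_right (u : F) {v : F} (hv : v ≠ 0) :
    quadraticChar F (u * v ^ 2) = quadraticChar F u := by
  rw [map_mul, map_pow, quadraticChar_sq_one hv, mul_one]

lemma sum_quadraticChar_mul_linear (hF : ringChar F ≠ 2) {a b d : F} (ha : a ≠ 0) (hd : d ≠ 0) :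
    ∑ u, quadraticChar F u * quadraticChar F (b * (d - a * u)) = -quadraticChar F (-(a * b)) := by
  have hJ : ∑ t : F, quadraticChar F t * quadraticChar F (1 - t) = -quadraticChar F (-1) := by
    have h1 := jacobiSum_nontrivial_inv (χ := quadraticChar F) (quadraticChar_ne_one hF)
    rw [(quadraticChar_isQuadratic F).inv] at h1
    exact h1
  have hda : d / a ≠ 0 := div_ne_zero hd ha
  rw [← Fintype.sum_equiv (Equiv.mulLeft₀ (d / a) hda) (fun t => quadraticChar F (d / a * t) *
    quadraticChar F (b * (d - a * (d / a * t)))) _ fun t => rfl]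
  have h2 : ∀ t, quadraticChar F (d / a * t) * quadraticChar F (b * (d - a * (d / a * t))) =
      quadraticChar F (a * b) * (quadraticChar F t * quadraticChar F (1 - t)) := by
    intro t
    simp only [← map_mul]
    rw [← quadraticChar_mul_sq_right (a * b * (t * (1 - t))) hda]
    congr 1
    field_simp
  simp_rw [h2, ← Finset.mul_sum, hJ]
  rw [mul_neg, ← map_mul]
  congr 2
  ring

lemma sum_nonzero_sq (hF : ringChar F ≠ 2) (f : F → ℤ) :
    ∑ x : F, (if x ≠ 0 then f (x ^ 2) else 0) =
      ∑ u, (quadraticChar F u ^ 2 + quadraticChar F u) * f u := by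
  simp_rw [← card_nonzero_sqrts hF, ← Finset.sum_filter]
  rw [← Finset.sum_fiberwise (Finset.univ.filter fun x : F => x ≠ 0) (fun x => x ^ 2)]
  refine Finset.sum_congr rfl fun u _ => ?_
  rw [Finset.filter_filter, Finset.sum_congr rfl (g := fun _ => f u), Finset.sum_const,
    nsmul_eq_mul]
  intro x hx
  rw [(Finset.mem_filter.1 hx).2.2]

/-- The number of points with nonzero coordinates on an affine diagonal conic. -/
lemma sum_card_conic (hF : ringChar F ≠ 2) {a b d : F} (ha : a ≠ 0) (hb : b ≠ 0) (hd : d ≠ 0) :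
    ∑ x : F, (if x ≠ 0 then
      ((Finset.univ.filter fun y : F => y ≠ 0 ∧ y ^ 2 = b⁻¹ * (d - a * x ^ 2)).card : ℤ) else 0) =
      Fintype.card F - 2 - quadraticChar F (b * d) - quadraticChar F (a * d)
        - quadraticChar F (-(a * b)) := by
  have hχb : ∀ w, quadraticChar F (b⁻¹ * w) = quadraticChar F (b * w) := by
    intro w
    rw [← quadraticChar_mul_sq_right (b⁻¹ * w) hb]
    congr 1
    field_simp
  have hlin : ∀ u, b * (d - a * u) = (-(a * b)) * u + b * d := fun u => by ring
  simp_rw [card_nonzero_sqrts hF, hχb]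
  rw [sum_nonzero_sq hF (fun u => quadraticChar F (b * (d - a * u)) ^ 2 +
    quadraticChar F (b * (d - a * u)))]
  simp_rw [add_mul]
  rw [Finset.sum_add_distrib, sum_quadraticChar_sq_mul]
  simp_rw [mul_add]
  rw [Finset.sum_add_distrib, Finset.sum_add_distrib, sum_quadraticChar_mul_linear hF ha hd]
  have h1 : ∑ u, quadraticChar F (b * (d - a * u)) = 0 := by
    simp_rw [hlin]
    exact sum_quadraticChar_linear hF (neg_ne_zero.2 (mul_ne_zero ha hb)) _
  have hsq : ∀ g : F → ℤ, ∑ u, quadraticChar F (b * (d - a * u)) ^ 2 * g u = ∑ u, g u - g (d / a) := by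
    intro g
    have h1 : ∀ u, quadraticChar F (b * (d - a * u)) ^ 2 * g u =
        g u - if u = d / a then g (d / a) else 0 := by
      intro u
      split_ifs with h
      · subst h
        have : b * (d - a * (d / a)) = 0 := by field_simp; simp
        simp [this]
      · rw [quadraticChar_sq_one, one_mul, sub_zero]
        refine mul_ne_zero hb fun h0 => h ?_
        rw [eq_div_iff ha]
        linear_combination -h0
    rw [Finset.sum_congr rfl fun u _ => h1 u, Finset.sum_sub_distrib]; simp
  have h2 := hsq 1
  have h3 := hsq (quadraticChar F)
  simp only [Pi.one_apply, mul_one, Finset.sum_const, Finset.card_univ, nsmul_eq_mul] at h2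
  simp_rw [mul_comm (quadraticChar F _) (quadraticChar F (b * (d - a * _)) ^ 2)]
  rw [h1, h2, h3, quadraticChar_sum_zero hF]
  have h4 : quadraticChar F (d / a) = quadraticChar F (a * d) := by
    rw [← quadraticChar_mul_sq_right (d / a) ha]
    congr 1
    field_simp
  rw [h4, mul_zero, sub_zero, quadraticChar_sq_one (mul_ne_zero hb hd)]
  ring

end FieldCount

/-- Triples as functions on `Fin 3`. -/
def finThreeEquiv (α : Type*) : (Fin 3 → α) ≃ α × α × α where
  toFun x := (x 0, x 1, x 2)
  invFun t := ![t.1, t.2.1, t.2.2]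
  left_inv x := by ext i; fin_cases i <;> rfl
  right_inv t := rfl

open Classical in
/-- The number of unit solutions with two prescribed coordinates. -/
noncomputable def lastCount {R : Type*} [CommRing R] [Fintype R] (a : Fin 3 → R) (x y : R) : ℕ :=
  if IsUnit x ∧ IsUnit y then (Finset.univ.filter fun z : R => IsUnit z ∧
    a 0 * x * x + a 1 * y * y + a 2 * z * z = 0).card else 0

open Classical in
lemma card_unitSols_eq_sum {R : Type*} [CommRing R] [Fintype R] (a : Fin 3 → R) :
    (unitSols a).card = ∑ x : R, ∑ y : R, lastCount a x y := by
  simp only [lastCount]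
  rw [unitSols, Finset.card_filter, Fintype.sum_equiv (finThreeEquiv R) _ (fun t =>
    if (IsUnit t.1 ∧ IsUnit t.2.1) ∧ IsUnit t.2.2 ∧
      a 0 * t.1 * t.1 + a 1 * t.2.1 * t.2.1 + a 2 * t.2.2 * t.2.2 = 0 then 1 else 0),
    Fintype.sum_prod_type]
  · refine Finset.sum_congr rfl fun x _ => ?_
    rw [Fintype.sum_prod_type]
    refine Finset.sum_congr rfl fun y _ => ?_
    split_ifs with h
    · rw [Finset.card_filter]
      exact Finset.sum_congr rfl fun z _ => if_congr (and_iff_right h) rfl rfl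
    · simp [h]
  · intro x
    have h : (∀ i, IsUnit (x i)) ↔ IsUnit (x 0) ∧ IsUnit (x 1) ∧ IsUnit (x 2) := by
      simp [Fin.forall_fin_succ]
    refine if_congr ?_ rfl rfl
    rw [h, and_assoc, and_assoc, and_assoc]
    rfl

lemma card_unitSols_zmod {p : ℕ} [Fact p.Prime] (hp2 : 2 < p) {a : Fin 3 → ZMod p}
    (ha : ∀ i, a i ≠ 0) :
    ((unitSols a).card : ℤ) = (p - 1) * (p - (2 + quadraticChar (ZMod p) (-(a 0 * a 1)) +
      quadraticChar (ZMod p) (-(a 0 * a 2)) + quadraticChar (ZMod p) (-(a 1 * a 2)))) := by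
  classical
  have hF : ringChar (ZMod p) ≠ 2 := by rw [ZMod.ringChar_zmod_n]; omega
  rw [card_unitSols_eq_sum]
  push_cast
  have h1 : ∀ x : ZMod p, (∑ y : ZMod p, if IsUnit x ∧ IsUnit y then
      ((Finset.univ.filter fun z : ZMod p => IsUnit z ∧
        a 0 * x * x + a 1 * y * y + a 2 * z * z = 0).card : ℤ) else 0) =
      if x = 0 then 0 else (p - (2 + quadraticChar (ZMod p) (-(a 0 * a 1)) +
      quadraticChar (ZMod p) (-(a 0 * a 2)) + quadraticChar (ZMod p) (-(a 1 * a 2)))) := by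
    intro x
    split_ifs with hx
    · simp [hx]
    · have hd : -(a 0 * x ^ 2) ≠ 0 := neg_ne_zero.2 (mul_ne_zero (ha 0) (pow_ne_zero 2 hx))
      have h2 := sum_card_conic hF (ha 1) (ha 2) hd
      have h3 : quadraticChar (ZMod p) (a 2 * -(a 0 * x ^ 2)) =
          quadraticChar (ZMod p) (-(a 0 * a 2)) := by
        rw [← quadraticChar_mul_sq_right (-(a 0 * a 2)) hx]; congr 1; ring
      have h4 : quadraticChar (ZMod p) (a 1 * -(a 0 * x ^ 2)) =
          quadraticChar (ZMod p) (-(a 0 * a 1)) := by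
        rw [← quadraticChar_mul_sq_right (-(a 0 * a 1)) hx]; congr 1; ring
      rw [h3, h4, ZMod.card] at h2
      have h5 : (p - (2 + quadraticChar (ZMod p) (-(a 0 * a 1)) +
          quadraticChar (ZMod p) (-(a 0 * a 2)) + quadraticChar (ZMod p) (-(a 1 * a 2)))) =
          (p : ℤ) - 2 - quadraticChar (ZMod p) (-(a 0 * a 2)) -
          quadraticChar (ZMod p) (-(a 0 * a 1)) - quadraticChar (ZMod p) (-(a 1 * a 2)) := by ring
      rw [h5, ← h2]
      refine Finset.sum_congr rfl fun y _ => ?_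
      simp only [isUnit_iff_ne_zero, ne_eq, hx, not_false_eq_true, true_and]
      congr 3
      ext z
      have : a 0 * x * x + a 1 * y * y + a 2 * z * z = 0 ↔
          z ^ 2 = (a 2)⁻¹ * (-(a 0 * x ^ 2) - a 1 * y ^ 2) := by
        rw [eq_inv_mul_iff_mul_eq₀ (ha 2)]
        constructor <;> intro h <;> linear_combination h
      simp [this]
  refine (Finset.sum_congr rfl (g := fun x : ZMod p => if x = 0 then (0 : ℤ) else
      (p - (2 + quadraticChar (ZMod p) (-(a 0 * a 1)) + quadraticChar (ZMod p) (-(a 0 * a 2)) +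
        quadraticChar (ZMod p) (-(a 1 * a 2))))) fun x _ => ?_).trans ?_
  · rw [← h1 x]
    refine Finset.sum_congr rfl fun y _ => ?_
    rw [lastCount, Nat.cast_ite, Nat.cast_zero]
    congr!
  rw [Finset.sum_ite, Finset.sum_const_zero, zero_add, Finset.sum_const,
    Finset.filter_ne' Finset.univ (0 : ZMod p), Finset.card_erase_of_mem (Finset.mem_univ _),
    Finset.card_univ, ZMod.card, nsmul_eq_mul, Nat.cast_sub (by omega), Nat.cast_one]

section Lift

variable {p : ℕ} [Fact p.Prime] {n : ℕ}

/-- Reduction modulo `p`. -/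
def redHom (p : ℕ) {n : ℕ} (hn : n ≠ 0) : ZMod (p ^ n) →+* ZMod p :=
  ZMod.castHom (dvd_pow_self p hn) (ZMod p)

lemma redHom_eq_zero_iff (hn : n ≠ 0) (x : ZMod (p ^ n)) :
    redHom p hn x = 0 ↔ p ∣ x.val := by
  rw [← CharP.cast_eq_zero_iff (ZMod p) p]
  conv_lhs => rw [← ZMod.natCast_zmod_val x]
  rw [map_natCast]

lemma redHom_ne_zero_iff (hn : n ≠ 0) (x : ZMod (p ^ n)) :
    redHom p hn x ≠ 0 ↔ IsUnit x := by
  rw [ne_eq, redHom_eq_zero_iff]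
  conv_rhs => rw [← ZMod.natCast_zmod_val x]
  rw [ZMod.isUnit_iff_coprime, Nat.coprime_pow_right_iff (Nat.pos_of_ne_zero hn), Nat.coprime_comm,
    Nat.Prime.coprime_iff_not_dvd Fact.out]

lemma eq_of_sq_eq_of_redHom_eq (hp2 : 2 < p) (hn : n ≠ 0) {x y : ZMod (p ^ n)} (hy : IsUnit y)
    (hsq : x ^ 2 = y ^ 2) (h : redHom p hn x = redHom p hn y) : x = y := by
  refine eq_of_sq_eq_of_val_mod_eq hp2 hy hsq ?_
  rw [← ZMod.natCast_zmod_val x, ← ZMod.natCast_zmod_val y, map_natCast, map_natCast,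
    ZMod.natCast_eq_natCast_iff] at h
  exact h

/-- Square roots of units lift from the residue field. -/
lemma exists_sq_eq_of_redHom (hp2 : 2 < p) (hn : n ≠ 0) {w : ZMod (p ^ n)} {ξ : ZMod p}
    (hξ : ξ ≠ 0) (hw : redHom p hn w = ξ ^ 2) : ∃ z, z ^ 2 = w ∧ redHom p hn z = ξ := by
  obtain ⟨y, rfl⟩ := ZMod.castHom_surjective (dvd_pow_self p hn) ξ
  change redHom p hn y ≠ 0 at hξ
  change redHom p hn w = redHom p hn y ^ 2 at hw
  let f : {c : ZMod (p ^ n) // redHom p hn c = 0} → {c : ZMod (p ^ n) // redHom p hn c = 0} :=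
    fun c => ⟨(y + c) ^ 2 - y ^ 2, by simp [c.2]⟩
  have hinj : Function.Injective f := by
    intro c d hcd
    have h1 : (y + (c : ZMod (p ^ n))) ^ 2 = (y + (d : ZMod (p ^ n))) ^ 2 := by
      have := congrArg Subtype.val hcd
      exact sub_left_injective this
    have h2 := eq_of_sq_eq_of_redHom_eq hp2 hn
      ((redHom_ne_zero_iff hn _).1 (by simpa [d.2] using hξ)) h1 (by simp [c.2, d.2])
    exact Subtype.ext (add_left_cancel h2)
  obtain ⟨c, hc⟩ := Finite.surjective_of_injective hinj ⟨w - y ^ 2, by simp [hw]⟩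
  refine ⟨y + c, ?_, ?_⟩
  · have := congrArg Subtype.val hc
    exact sub_left_injective this
  · change redHom p hn (y + c) = redHom p hn y
    simp [c.2]

lemma card_filter_redHom (hn : n ≠ 0) (ξ : ZMod p) :
    (Finset.univ.filter fun x : ZMod (p ^ n) => redHom p hn x = ξ).card = p ^ (n - 1) := by
  have hp := (Fact.out : p.Prime)
  have hsurj : Function.Surjective (redHom p hn) := ZMod.castHom_surjective (dvd_pow_self p hn)
  have heq : ∀ η : ZMod p, (Finset.univ.filter fun x : ZMod (p ^ n) => redHom p hn x = η).card =
      (Finset.univ.filter fun x : ZMod (p ^ n) => redHom p hn x = ξ).card := fun η => by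
    obtain ⟨c, hc⟩ := hsurj (ξ - η)
    refine Finset.card_nbij' (· + c) (· - c) ?_ ?_ ?_ ?_
    · intro x hx; simp at hx ⊢; rw [hx, hc]; ring
    · intro x hx; simp at hx ⊢; rw [hx, hc]; ring
    · intro x _; simp
    · intro x _; simp
  have h1 := Finset.card_eq_sum_card_fiberwise (s := (Finset.univ : Finset (ZMod (p ^ n))))
    (t := Finset.univ) (f := redHom p hn) fun x _ => Finset.mem_univ _
  simp_rw [heq, Finset.sum_const, Finset.card_univ, ZMod.card, smul_eq_mul] at h1
  have h2 : p ^ n = p * p ^ (n - 1) := by rw [← pow_succ', Nat.sub_add_cancel (by omega)]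
  exact (Nat.eq_of_mul_eq_mul_left hp.pos (h2.symm.trans h1)).symm

lemma sum_comp_redHom (hn : n ≠ 0) (f : ZMod p → ℕ) :
    ∑ x : ZMod (p ^ n), f (redHom p hn x) = p ^ (n - 1) * ∑ ξ, f ξ := by
  rw [← Finset.sum_fiberwise (Finset.univ) (redHom p hn), Finset.mul_sum]
  refine Finset.sum_congr rfl fun ξ _ => ?_
  rw [Finset.sum_congr rfl (g := fun _ => f ξ), Finset.sum_const, card_filter_redHom, smul_eq_mul]
  intro x hx
  rw [(Finset.mem_filter.1 hx).2]

lemma card_unitSols_pow (hp2 : 2 < p) (hn : n ≠ 0) {a : Fin 3 → ZMod (p ^ n)}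
    (ha : ∀ i, IsUnit (a i)) :
    (unitSols a).card = (p ^ (n - 1)) ^ 2 * (unitSols fun i => redHom p hn (a i)).card := by
  classical
  have hunit : ∀ x : ZMod (p ^ n), IsUnit x ↔ IsUnit (redHom p hn x) := fun x => by
    rw [isUnit_iff_ne_zero, redHom_ne_zero_iff]
  have hlast : ∀ x y : ZMod (p ^ n), lastCount a x y =
      lastCount (fun i => redHom p hn (a i)) (redHom p hn x) (redHom p hn y) := by
    intro x y
    unfold lastCount
    by_cases h : IsUnit x ∧ IsUnit y
    swap
    · rw [if_neg h, if_neg fun h' => h ⟨(hunit x).2 h'.1, (hunit y).2 h'.2⟩]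
    rw [if_pos h, if_pos ⟨(hunit x).1 h.1, (hunit y).1 h.2⟩]
    refine Finset.card_bij (fun z _ => redHom p hn z) ?_ ?_ ?_
    · intro z hz
      simp only [Finset.mem_filter, Finset.mem_univ, true_and] at hz ⊢
      refine ⟨hz.1.map _, ?_⟩
      simp only [← map_mul, ← map_add, hz.2, map_zero]
    · intro z hz z' hz' h
      simp only [Finset.mem_filter, Finset.mem_univ, true_and] at hz hz'
      refine eq_of_sq_eq_of_redHom_eq hp2 hn hz'.1 ((ha 2).mul_left_cancel ?_) h
      linear_combination hz.2 - hz'.2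
    · intro ζ hζ
      simp only [Finset.mem_filter, Finset.mem_univ, true_and] at hζ
      obtain ⟨c, hc⟩ := ha 2
      have hc' : redHom p hn (a 2) * redHom p hn ((c⁻¹ : (ZMod (p ^ n))ˣ) : ZMod (p ^ n)) = 1 := by
        rw [← map_mul, ← hc]; simp
      obtain ⟨z, hz, rfl⟩ := exists_sq_eq_of_redHom hp2 hn (isUnit_iff_ne_zero.1 hζ.1)
        (w := -((c⁻¹ : (ZMod (p ^ n))ˣ) : ZMod (p ^ n)) * (a 0 * x * x + a 1 * y * y)) (by
          simp only [map_mul, map_add, map_neg]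
          linear_combination (-redHom p hn ((c⁻¹ : (ZMod (p ^ n))ˣ) : ZMod (p ^ n))) * hζ.2 +
            ζ ^ 2 * hc')
      refine ⟨z, ?_, rfl⟩
      simp only [Finset.mem_filter, Finset.mem_univ, true_and]
      refine ⟨(redHom_ne_zero_iff hn z).1 (isUnit_iff_ne_zero.1 hζ.1), ?_⟩
      have hcc : a 2 * ((c⁻¹ : (ZMod (p ^ n))ˣ) : ZMod (p ^ n)) = 1 := by rw [← hc]; simp
      linear_combination a 2 * hz - (a 0 * x * x + a 1 * y * y) * hcc
  rw [card_unitSols_eq_sum, card_unitSols_eq_sum]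
  simp_rw [hlast]
  rw [sum_comp_redHom hn fun ξ => ∑ y : ZMod (p ^ n),
    lastCount (fun i => redHom p hn (a i)) ξ (redHom p hn y)]
  simp_rw [sum_comp_redHom hn, ← Finset.mul_sum]
  ring

lemma card_unitSols_intCast (hp2 : 2 < p) (hn : n ≠ 0) {a : Fin 3 → ℤ}
    (ha : ∀ i, ¬ (p : ℤ) ∣ a i) :
    ((unitSols fun i => (a i : ZMod (p ^ n))).card : ℤ) = ((p : ℤ) ^ (n - 1)) ^ 2 *
      ((p - 1) * (p - (2 + legendreSym p (-(a 0 * a 1)) + legendreSym p (-(a 0 * a 2))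
        + legendreSym p (-(a 1 * a 2))))) := by
  rw [card_unitSols_pow hp2 hn fun i => isUnit_intCast_of_not_dvd n (ha i)]
  push_cast
  simp only [map_intCast]
  rw [card_unitSols_zmod hp2 fun i => by
    rw [ne_eq, ZMod.intCast_zmod_eq_zero_iff_dvd]; exact ha i]
  simp [legendreSym]

end Lift

lemma fourier_comp_mul_left (f : ℝ → ℂ) {c : ℝ} (hc : 0 < c) (w : ℝ) :
    𝓕 (fun t => f (c * t)) w = (c⁻¹ : ℝ) * 𝓕 f (w / c) := by
  rw [Real.fourier_real_eq, Real.fourier_real_eq]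
  have h := MeasureTheory.Measure.integral_comp_mul_left
    (fun v : ℝ => Real.fourierChar (-(v * (w / c))) • f v) c
  rw [abs_of_pos (inv_pos.2 hc), Complex.real_smul] at h
  rw [← h]
  congr 1
  ext v
  congr 3
  field_simp

/-- Poisson summation over a residue class. -/
lemma tsum_residue_eq (f : 𝓢(ℝ, ℂ)) {N : ℝ} (hN : 0 < N) {q : ℕ} [NeZero q] (r : ZMod q) :
    ∑' x : ℤ, (if (x : ZMod q) = r then f (x / N) else 0) =
      (N / q : ℝ) * ∑' m : ℤ, 𝓕 f (m * (N / q)) * ZMod.stdAddChar ((m : ZMod q) * r) := by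
  have hq : (0 : ℝ) < q := by exact_mod_cast Nat.pos_of_ne_zero (NeZero.ne q)
  have hc : (q : ℝ) / N ≠ 0 := (div_pos hq hN).ne'
  let g : 𝓢(ℝ, ℂ) := SchwartzMap.compCLMOfContinuousLinearEquiv ℂ
    (ContinuousLinearEquiv.smulLeft (Units.mk0 ((q : ℝ) / N) hc)) f
  have hg : ∀ t, g t = f (q / N * t) := fun t => rfl
  have hgf : ∀ m : ℝ, 𝓕 g m = (N / q : ℝ) * 𝓕 f (m * (N / q)) := fun m => by
    have := fourier_comp_mul_left (fun t => f t) (div_pos hq hN) m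
    rw [inv_div, div_div_eq_mul_div, mul_div_assoc] at this
    exact this
  have hinj : Function.Injective fun k : ℤ => (r.val : ℤ) + q * k := fun k l h => by
    have hq' : (q : ℤ) ≠ 0 := by exact_mod_cast NeZero.ne q
    exact mul_left_cancel₀ hq' (add_left_cancel h)
  rw [← hinj.tsum_eq]
  · have h1 : ∀ k : ℤ, (if (((r.val : ℤ) + q * k : ℤ) : ZMod q) = r then
        f (((r.val : ℤ) + q * k : ℤ) / N) else 0) = g ((r.val : ℝ) / q + k) := fun k => by
      rw [if_pos (by simp), hg]
      congr 1
      push_cast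
      field_simp
    simp_rw [h1]
    rw [SchwartzMap.tsum_eq_tsum_fourier g, ← tsum_mul_left]
    refine tsum_congr fun m => ?_
    rw [hgf, mul_assoc]
    congr 2
    have h2 : ((m : ZMod q) * r) = ((m * r.val : ℤ) : ZMod q) := by simp
    rw [h2, ZMod.stdAddChar_coe, fourier_coe_apply]
    congr 1
    push_cast
    field_simp
  · intro x hx
    rw [Function.mem_support, ne_eq, ite_eq_right_iff, Classical.not_imp] at hx
    have h1 : ((x - r.val : ℤ) : ZMod q) = 0 := by simp [hx.1]
    obtain ⟨k, hk⟩ := (ZMod.intCast_zmod_eq_zero_iff_dvd _ q).1 h1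
    exact ⟨k, by simp only; linarith⟩

lemma summable_one_div_one_add_sq : Summable fun m : ℤ => 1 / (1 + (m : ℝ) ^ 2) := by
  refine Summable.of_nonneg_of_le (fun m => by positivity) (fun m => ?_)
    ((Real.summable_one_div_int_pow (p := 2)).2 one_lt_two |>.add
      (summable_of_hasFiniteSupport (f := fun m : ℤ => if m = 0 then (1 : ℝ) else 0) ?_))
  · by_cases hm : m = 0
    · simp [hm]
    · have : (0 : ℝ) < (m : ℝ) ^ 2 := by positivity
      simp only [hm, if_false, add_zero]
      exact one_div_le_one_div_of_le this (by linarith)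
  · exact (Set.finite_singleton (0 : ℤ)).subset fun m hm => by
      by_contra h; exact hm (if_neg h)

lemma summable_norm_schwartz_int (f : 𝓢(ℝ, ℂ)) {δ : ℝ} (hδ : 0 < δ) :
    Summable fun m : ℤ => ‖f (m * δ)‖ := by
  obtain ⟨C₀, hC₀⟩ := f.decay 0 0
  obtain ⟨C₂, hC₂⟩ := f.decay 2 0
  refine Summable.of_nonneg_of_le (fun m => norm_nonneg _) (fun m => ?_)
    (summable_one_div_one_add_sq.mul_left (C₀ + C₂ / δ ^ 2))
  have h0 := hC₀.2 (m * δ)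
  have h2 := hC₂.2 (m * δ)
  simp only [pow_zero, norm_iteratedFDeriv_zero, one_mul, Real.norm_eq_abs, sq_abs] at h0 h2
  rw [mul_one_div, le_div_iff₀ (by positivity), mul_add, mul_one, mul_comm ‖_‖ ((m : ℝ) ^ 2)]
  refine add_le_add h0 ?_
  rw [le_div_iff₀ (by positivity)]
  linarith [mul_pow (m : ℝ) δ 2, congrArg (· * ‖f (m * δ)‖) (mul_pow (m : ℝ) δ 2)]

lemma summable_prod_three {𝕜 : Type*} [RCLike 𝕜] {f : Fin 3 → ℤ → 𝕜} (hf : ∀ i, Summable fun x => ‖f i x‖) :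
    Summable fun x : Fin 3 → ℤ => ∏ i, f i (x i) := by
  rw [← (finThreeEquiv ℤ).symm.summable_iff]
  have h12 := (hf 1).mul_norm (hf 2)
  refine (summable_mul_of_summable_norm (hf 0) h12).congr fun x => Eq.symm ?_
  exact (Fin.prod_univ_three _).trans (mul_assoc _ _ _)

lemma tsum_prod_three {𝕜 : Type*} [RCLike 𝕜] {f : Fin 3 → ℤ → 𝕜} (hf : ∀ i, Summable fun x => ‖f i x‖) :
    ∑' x : Fin 3 → ℤ, ∏ i, f i (x i) = ∏ i, ∑' x, f i x := by
  have h12 := (hf 1).mul_norm (hf 2)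
  rw [Fin.prod_univ_three, mul_assoc, tsum_mul_tsum_of_summable_norm (hf 1) (hf 2),
    tsum_mul_tsum_of_summable_norm (hf 0) h12, ← (finThreeEquiv ℤ).symm.tsum_eq]
  refine tsum_congr fun x => ?_
  exact (Fin.prod_univ_three _).trans (mul_assoc _ _ _)

/-- The product of the values of a function at the coordinates of a dilated vector. -/
noncomputable def tensorVal (f : 𝓢(ℝ, ℂ)) (δ : ℝ) (m : Fin 3 → ℤ) : ℂ := ∏ i, f (m i * δ)

lemma ite_mem_eq_sum_prod {q : ℕ} (U : Finset (Fin 3 → ZMod q)) (g : ℤ → ℂ) (x : Fin 3 → ℤ) :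
    (if (fun i => (x i : ZMod q)) ∈ U then ∏ i, g (x i) else 0) =
      ∑ u ∈ U, ∏ i, if (x i : ZMod q) = u i then g (x i) else 0 := by
  have h1 : ∀ u : Fin 3 → ZMod q, (∏ i, if (x i : ZMod q) = u i then g (x i) else 0) =
      if (fun i => (x i : ZMod q)) = u then ∏ i, g (x i) else 0 := fun u => by
    split_ifs with h
    · exact Finset.prod_congr rfl fun i _ => if_pos (congrFun h i)
    · obtain ⟨i, hi⟩ := Function.ne_iff.1 h
      exact Finset.prod_eq_zero (Finset.mem_univ i) (if_neg hi)
  simp_rw [h1, Finset.sum_ite_eq]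

lemma tsum_ite_mem_eq {q : ℕ} (U : Finset (Fin 3 → ZMod q)) {g : ℤ → ℂ}
    (hg : Summable fun x => ‖g x‖) :
    ∑' x : Fin 3 → ℤ, (if (fun i => (x i : ZMod q)) ∈ U then ∏ i, g (x i) else 0) =
      ∑ u ∈ U, ∏ i, ∑' x : ℤ, if (x : ZMod q) = u i then g x else 0 := by
  have hsum : ∀ r : ZMod q, Summable fun x : ℤ => ‖if (x : ZMod q) = r then g x else 0‖ :=
    fun r => Summable.of_nonneg_of_le (fun m => norm_nonneg _) (fun m => by split_ifs <;> simp) hg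
  have hs : ∀ u ∈ U, Summable fun x : Fin 3 → ℤ =>
      ∏ i, if (x i : ZMod q) = u i then g (x i) else 0 := fun u _ => summable_prod_three
    (f := fun i k => if (k : ZMod q) = u i then g k else 0) fun i => hsum (u i)
  simp_rw [ite_mem_eq_sum_prod]
  rw [Summable.tsum_finsetSum hs]
  exact Finset.sum_congr rfl fun u _ => tsum_prod_three
    (f := fun i k => if (k : ZMod q) = u i then g k else 0) fun i => hsum (u i)

lemma tsum_mul_sum_stdAddChar_eq {q : ℕ} [NeZero q] (U : Finset (Fin 3 → ZMod q)) {g : ℤ → ℂ}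
    (hg : Summable fun x => ‖g x‖) :
    ∑' m : Fin 3 → ℤ, (∏ i, g (m i)) * ∑ u ∈ U, ZMod.stdAddChar ((fun i => (m i : ZMod q)) ⬝ᵥ u) =
      ∑ u ∈ U, ∏ i, ∑' m : ℤ, g m * ZMod.stdAddChar ((m : ZMod q) * u i) := by
  have hsum : ∀ r : ZMod q, Summable fun m : ℤ => ‖g m * ZMod.stdAddChar ((m : ZMod q) * r)‖ :=
    fun r => by simpa [AddChar.norm_apply] using hg
  have h2 : ∀ m : Fin 3 → ℤ,
      (∏ i, g (m i)) * ∑ u ∈ U, ZMod.stdAddChar ((fun i => (m i : ZMod q)) ⬝ᵥ u) =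
      ∑ u ∈ U, ∏ i, (g (m i) * ZMod.stdAddChar ((m i : ZMod q) * u i)) := fun m => by
    rw [Finset.mul_sum]
    refine Finset.sum_congr rfl fun u _ => ?_
    rw [Finset.prod_mul_distrib, dotProduct, Fin.sum_univ_three, Fin.prod_univ_three
      (fun i => ZMod.stdAddChar ((m i : ZMod q) * u i)), AddChar.map_add_eq_mul,
      AddChar.map_add_eq_mul]
  have hs : ∀ u ∈ U, Summable fun m : Fin 3 → ℤ =>
      ∏ i, (g (m i) * ZMod.stdAddChar ((m i : ZMod q) * u i)) := fun u _ => summable_prod_three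
    (f := fun i k => g k * ZMod.stdAddChar ((k : ZMod q) * u i)) fun i => hsum (u i)
  simp_rw [h2]
  rw [Summable.tsum_finsetSum hs]
  exact Finset.sum_congr rfl fun u _ => tsum_prod_three
    (f := fun i k => g k * ZMod.stdAddChar ((k : ZMod q) * u i)) fun i => hsum (u i)

/-- Poisson summation over a set of residue classes. -/
lemma tsum_residues_eq (f : 𝓢(ℝ, ℂ)) {N : ℝ} (hN : 0 < N) {q : ℕ} [NeZero q]
    (U : Finset (Fin 3 → ZMod q)) :
    ∑' x : Fin 3 → ℤ, (if (fun i => (x i : ZMod q)) ∈ U then ∏ i, f (x i / N) else 0) =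
      (N / q : ℝ) ^ 3 * ∑' m : Fin 3 → ℤ, tensorVal (𝓕 f) (N / q) m *
        ∑ u ∈ U, ZMod.stdAddChar ((fun i => (m i : ZMod q)) ⬝ᵥ u) := by
  have hq : (0 : ℝ) < q := by exact_mod_cast Nat.pos_of_ne_zero (NeZero.ne q)
  have h1 := tsum_ite_mem_eq U (g := fun x => f (x / N)) (by
    simpa only [div_eq_mul_inv] using summable_norm_schwartz_int f (inv_pos.2 hN))
  have h2 := tsum_mul_sum_stdAddChar_eq U (g := fun x => 𝓕 f (x * (N / q)))
    (summable_norm_schwartz_int (𝓕 f) (div_pos hN hq))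
  simp only [tensorVal]
  rw [h1, h2, Finset.mul_sum]
  refine Finset.sum_congr rfl fun u _ => ?_
  simp_rw [tsum_residue_eq f hN]
  rw [Finset.prod_mul_distrib, Finset.prod_const, Finset.card_univ, Fintype.card_fin]

/-- Poisson summation over the unit solutions of a diagonal congruence. -/
lemma tsum_unitSols_eq (f : 𝓢(ℝ, ℂ)) {N : ℝ} (hN : 0 < N) {p : ℕ} [Fact p.Prime] {n : ℕ}
    (a : Fin 3 → ℤ) :
    (∑' x : Fin 3 → ℤ, (open Classical in
      if (fun i => (x i : ZMod (p ^ n))) ∈ unitSols (fun i => (a i : ZMod (p ^ n))) then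
        ∏ i, f (x i / N) else 0)) =
      (N / (p : ℝ) ^ n : ℝ) ^ 3 *
        ∑' m : Fin 3 → ℤ, tensorVal (𝓕 f) (N / (p : ℝ) ^ n) m * freqSum p n a m := by
  have h := tsum_residues_eq f hN (q := p ^ n) (unitSols fun i => (a i : ZMod (p ^ n)))
  rw [Nat.cast_pow] at h
  convert h using 1
  rfl

lemma exists_eq_pow_smul_not_dvd {p : ℕ} [Fact p.Prime] {m : Fin 3 → ℤ} (hm : m ≠ 0) :
    ∃ (j : ℕ) (y : Fin 3 → ℤ), m = (p : ℤ) ^ j • y ∧ ∃ i, ¬ (p : ℤ) ∣ y i := by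
  have hp := (Fact.out : p.Prime)
  have hpZ : Prime (p : ℤ) := Nat.prime_iff_prime_int.1 hp
  obtain ⟨t, x, ht0, hx, rfl⟩ := exists_smul_isPrimVec hm
  obtain ⟨j, u, hu, rfl⟩ := Nat.exists_eq_pow_mul_and_not_dvd ht0.ne' p hp.ne_one
  obtain ⟨i, hi⟩ := hx.exists_not_dvd hpZ
  refine ⟨j, (u : ℤ) • x, by rw [smul_smul]; push_cast; rfl, i, fun h => ?_⟩
  rcases hpZ.dvd_or_dvd h with h | h
  · exact hu (by exact_mod_cast h)
  · exact hi h

/-- The first moment of the exponential sums over small nonzero frequencies. -/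
lemma sum_norm_freqSum_le {p : ℕ} [Fact p.Prime] (hp2 : 2 < p) {K D H : ℝ} {M n : ℕ}
    (hK : 1 ≤ K) (hD : 0 ≤ D) (hprim : ∀ B ≤ M, PrimBound p K D B)
    (hH : ∀ B ≤ M, ∑ t ∈ Finset.Icc 1 B, 1 / (t : ℝ) ≤ H)
    (hM : K * M ≤ (p : ℝ) ^ ((n - 1) / 2)) {a : Fin 3 → ℤ} (ha : ∀ i, ¬ (p : ℤ) ∣ a i) :
    ∑ m ∈ (box M).erase 0, ‖freqSum p n a m‖ ≤
      (p : ℝ) ^ n * (p : ℝ) ^ (n - n / 2) * p * (((n - 1) / 2 : ℕ) + 1) * (D * H * M) := by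
  classical
  have hpR : (0 : ℝ) < p := by exact_mod_cast (Fact.out : p.Prime).pos
  set c : ℝ := (p : ℝ) ^ n * (p : ℝ) ^ (n - n / 2) * p with hc
  have hc0 : 0 < c := by positivity
  have h1 := sum_weight_le_of_primBound hK hD hprim hH hM (a := adjCoeff a) (not_dvd_adjCoeff ha)
    (T := ((box M).erase 0).filter fun m => freqSum p n a m ≠ 0)
    (wt := fun m => ‖freqSum p n a m‖ / c)
    (fun w hw => Finset.ne_of_mem_erase (Finset.mem_filter.1 hw).1)
    (fun w hw => mem_box.1 (Finset.mem_of_mem_erase (Finset.mem_filter.1 hw).1))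
    (fun w hw => by
      refine dvd_trans ?_ (freqSum_ne_zero ha (Finset.mem_filter.1 hw).2)
      rw [← pow_mul]
      exact pow_dvd_pow _ (by omega))
    (fun w hw => by
      obtain ⟨j, y, rfl, hy⟩ := exists_eq_pow_smul_not_dvd (p := p)
        (Finset.ne_of_mem_erase (Finset.mem_filter.1 hw).1)
      refine ⟨j, y, rfl, ?_⟩
      rw [div_le_iff₀ hc0]
      refine (norm_freqSum_le hp2 ha hy).trans (le_of_eq ?_)
      rw [hc]; ring)
  rw [← Finset.sum_div, div_le_iff₀ hc0] at h1
  have h2 : ∑ m ∈ (box M).erase 0, ‖freqSum p n a m‖ =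
      ∑ m ∈ ((box M).erase 0).filter fun m => freqSum p n a m ≠ 0, ‖freqSum p n a m‖ := by
    rw [Finset.sum_filter]
    refine Finset.sum_congr rfl fun m _ => ?_
    split_ifs with h
    · rfl
    · rw [not_ne_iff.1 h, norm_zero]
  rw [h2]
  exact h1.trans (le_of_eq (by ring))

lemma norm_freqSum_le_trivial {p : ℕ} [Fact p.Prime] (n : ℕ) (a m : Fin 3 → ℤ) :
    ‖freqSum p n a m‖ ≤ ((p : ℝ) ^ n) ^ 3 := by
  refine (norm_unitExpSum_le_card _ _ _).trans ?_
  have h := Finset.card_le_univ (unitSols fun i => (a i : ZMod (p ^ n)))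
  rw [Fintype.card_pi, Finset.prod_const, ZMod.card, Finset.card_univ, Fintype.card_fin] at h
  exact_mod_cast h

lemma prod_one_add_sq_le (m : Fin 3 → ℤ) (hm : 1 ≤ ht m) :
    ∏ i, (1 + (m i : ℝ) ^ 2) ≤ 8 * (ht m : ℝ) ^ 6 := by
  have hm' : (1 : ℝ) ≤ ht m := by exact_mod_cast hm
  have h : ∀ i, 1 + (m i : ℝ) ^ 2 ≤ 2 * (ht m : ℝ) ^ 2 := fun i => by
    have h1 : |(m i : ℝ)| ≤ ht m := by exact_mod_cast abs_le_ht m i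
    have h2 := sq_le_sq' (by linarith [neg_abs_le (m i : ℝ)]) ((le_abs_self (m i : ℝ)).trans h1)
    nlinarith
  calc ∏ i, (1 + (m i : ℝ) ^ 2) ≤ ∏ _i : Fin 3, 2 * (ht m : ℝ) ^ 2 :=
        Finset.prod_le_prod (fun i _ => by positivity) fun i _ => h i
    _ = _ := by rw [Finset.prod_const, Finset.card_univ, Fintype.card_fin]; ring

lemma norm_tensorVal_le {f : 𝓢(ℝ, ℂ)} {C₀ : ℝ} (h0 : ∀ t, ‖f t‖ ≤ C₀) (δ : ℝ) (m : Fin 3 → ℤ) :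
    ‖tensorVal f δ m‖ ≤ C₀ ^ 3 := by
  rw [tensorVal, norm_prod]
  refine (Finset.prod_le_prod (fun i _ => norm_nonneg _) fun i _ => h0 _).trans ?_
  simp

lemma norm_tensorVal_tail_le {f : 𝓢(ℝ, ℂ)} {C₀ C : ℝ} {k : ℕ} (hk : 6 ≤ k) (hC : 0 ≤ C)
    (h0 : ∀ t, ‖f t‖ ≤ C₀)
    (hC' : ∀ t, |t| ^ k * ‖f t‖ ≤ C) {δ : ℝ} (hδ : 0 < δ) {M : ℕ} {m : Fin 3 → ℤ}
    (hm : M < ht m) :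
    ‖tensorVal f δ m‖ ≤ 8 * C₀ ^ 2 * C / (δ ^ k * ((M : ℝ) + 1) ^ (k - 6)) *
      ∏ i, 1 / (1 + (m i : ℝ) ^ 2) := by
  have hC₀ : 0 ≤ C₀ := (norm_nonneg _).trans (h0 0)
  have hm1 : (M : ℝ) + 1 ≤ ht m := by exact_mod_cast hm
  have hh : (0 : ℝ) < ht m := by linarith [(Nat.cast_nonneg M : (0 : ℝ) ≤ M)]
  obtain ⟨i, hi⟩ := exists_natAbs_eq_ht m
  have hi' : |(m i : ℝ) * δ| = ht m * δ := by
    rw [abs_mul, abs_of_pos hδ, ← hi, Nat.cast_natAbs, Int.cast_abs]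
  have h1 : ‖f (m i * δ)‖ ≤ C / (ht m * δ) ^ k := by
    rw [le_div_iff₀ (by positivity), mul_comm, ← hi']
    exact hC' _
  have h2 : ‖tensorVal f δ m‖ ≤ C / (ht m * δ) ^ k * C₀ ^ 2 := by
    rw [tensorVal, norm_prod, ← Finset.mul_prod_erase Finset.univ _ (Finset.mem_univ i)]
    refine mul_le_mul h1 ?_ (Finset.prod_nonneg fun j _ => norm_nonneg _) (by positivity)
    refine (Finset.prod_le_prod (fun i _ => norm_nonneg _) fun i _ => h0 _).trans ?_
    simp
  refine h2.trans ?_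
  have hP : 0 < ∏ i, (1 + (m i : ℝ) ^ 2) := Finset.prod_pos fun i _ => by positivity
  have h3 := prod_one_add_sq_le m (by omega)
  have h4 : ((M : ℝ) + 1) ^ (k - 6) * ∏ i, (1 + (m i : ℝ) ^ 2) ≤ 8 * (ht m : ℝ) ^ k := by
    calc _ ≤ (ht m : ℝ) ^ (k - 6) * (8 * (ht m : ℝ) ^ 6) := by gcongr
      _ = 8 * ((ht m : ℝ) ^ (k - 6) * (ht m : ℝ) ^ 6) := by ring
      _ = _ := by rw [← pow_add, Nat.sub_add_cancel hk]
  rw [Finset.prod_div_distrib, Finset.prod_const_one, mul_one_div, div_div, div_mul_eq_mul_div,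
    div_le_div_iff₀ (by positivity) (by positivity), mul_pow]
  calc C * C₀ ^ 2 * (δ ^ k * ((M : ℝ) + 1) ^ (k - 6) * ∏ i, (1 + (m i : ℝ) ^ 2))
      = C * C₀ ^ 2 * δ ^ k * (((M : ℝ) + 1) ^ (k - 6) * ∏ i, (1 + (m i : ℝ) ^ 2)) := by ring
    _ ≤ C * C₀ ^ 2 * δ ^ k * (8 * (ht m : ℝ) ^ k) := by gcongr
    _ = _ := by ring

/-- The contribution of the nonzero frequencies. -/
lemma norm_tsum_sub_le {f : 𝓢(ℝ, ℂ)} {C₀ C : ℝ} {k : ℕ} (hk : 6 ≤ k) (hC : 0 ≤ C)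
    (h0 : ∀ t, ‖f t‖ ≤ C₀) (hC' : ∀ t, |t| ^ k * ‖f t‖ ≤ C) {δ : ℝ} (hδ : 0 < δ) (M : ℕ)
    {E : (Fin 3 → ℤ) → ℂ} {B : ℝ} (hE : ∀ m, ‖E m‖ ≤ B) :
    ‖∑' m, tensorVal f δ m * E m - tensorVal f δ 0 * E 0‖ ≤
      C₀ ^ 3 * ∑ m ∈ (box M).erase 0, ‖E m‖ +
        8 * C₀ ^ 2 * C / (δ ^ k * ((M : ℝ) + 1) ^ (k - 6)) * B *
          (∑' m : ℤ, 1 / (1 + (m : ℝ) ^ 2)) ^ 3 := by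
  classical
  have hC₀ : 0 ≤ C₀ := (norm_nonneg _).trans (h0 0)
  set A : ℝ := 8 * C₀ ^ 2 * C / (δ ^ k * ((M : ℝ) + 1) ^ (k - 6)) with hA
  have hA0 : 0 ≤ A := by positivity
  have hB : 0 ≤ B := (norm_nonneg _).trans (hE 0)
  set F : (Fin 3 → ℤ) → ℂ := fun m => tensorVal f δ m * E m with hF
  have hw : ∀ _i : Fin 3, Summable fun x : ℤ => ‖1 / (1 + (x : ℝ) ^ 2)‖ := fun _ =>
    summable_one_div_one_add_sq.norm
  have hg : HasSum (fun m : Fin 3 → ℤ => A * B * ∏ i, 1 / (1 + (m i : ℝ) ^ 2))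
      (A * B * (∑' m : ℤ, 1 / (1 + (m : ℝ) ^ 2)) ^ 3) := by
    have h1 := (summable_prod_three (f := fun _ x => 1 / (1 + (x : ℝ) ^ 2)) hw).hasSum
    rw [tsum_prod_three (f := fun _ x => 1 / (1 + (x : ℝ) ^ 2)) hw, Finset.prod_const,
      Finset.card_univ, Fintype.card_fin] at h1
    exact h1.mul_left _
  have hG : ∀ m, ‖if m ∈ box M then 0 else F m‖ ≤ A * B * ∏ i, 1 / (1 + (m i : ℝ) ^ 2) := by
    intro m
    have hP : 0 ≤ ∏ i, 1 / (1 + (m i : ℝ) ^ 2) := Finset.prod_nonneg fun i _ => by positivity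
    split_ifs with h
    · rw [norm_zero]; positivity
    · rw [mem_box, not_le] at h
      rw [hF, norm_mul]
      calc _ ≤ (A * ∏ i, 1 / (1 + (m i : ℝ) ^ 2)) * B :=
            mul_le_mul (norm_tensorVal_tail_le hk hC h0 hC' hδ h) (hE m) (norm_nonneg _)
              (by positivity)
        _ = _ := by ring
  have hGs : Summable fun m => if m ∈ box M then 0 else F m :=
    Summable.of_norm_bounded hg.summable hG
  have hbox : HasSum (fun m => if m ∈ box M then F m else 0) (∑ m ∈ box M, F m) := by
    have : HasSum (fun m => if m ∈ box M then F m else 0)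
        (∑ m ∈ box M, if m ∈ box M then F m else 0) :=
      hasSum_sum_of_ne_finset_zero fun m hm => if_neg hm
    rwa [Finset.sum_congr rfl fun m hm => if_pos hm] at this
  have hsplit : ∑' m, F m = ∑ m ∈ box M, F m + ∑' m, if m ∈ box M then 0 else F m := by
    rw [← hbox.tsum_eq, ← hbox.summable.tsum_add hGs]
    exact tsum_congr fun m => by split_ifs <;> simp
  have h0box : (0 : Fin 3 → ℤ) ∈ box M := mem_box.2 (by rw [(ht_eq_zero_iff 0).2 rfl]; omega)
  have hdiff : ∑' m, F m - F 0 = ∑ m ∈ (box M).erase 0, F m +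
      ∑' m, if m ∈ box M then 0 else F m := by
    rw [hsplit, ← Finset.add_sum_erase _ _ h0box]; ring
  change ‖∑' m, F m - F 0‖ ≤ _
  rw [hdiff]
  refine (norm_add_le _ _).trans (add_le_add ?_ (tsum_of_norm_bounded hg hG))
  rw [Finset.mul_sum]
  refine (norm_sum_le _ _).trans (Finset.sum_le_sum fun m _ => ?_)
  rw [hF, norm_mul]
  exact mul_le_mul_of_nonneg_right (norm_tensorVal_le h0 δ m) (norm_nonneg _)

lemma sum_one_div_le_one_add_log {A : ℕ} {x : ℝ} (hx : 1 ≤ x) (hA : (A : ℝ) ≤ x) :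
    ∑ t ∈ Finset.Icc 1 A, 1 / (t : ℝ) ≤ 1 + Real.log x := by
  rcases Nat.eq_zero_or_pos A with rfl | h
  · simp only [Order.lt_one_iff, Finset.Icc_eq_empty_of_lt, Finset.sum_empty]
    linarith [Real.log_nonneg hx]
  · have h1 := harmonic_le_one_add_log A
    rw [harmonic_eq_sum_Icc] at h1
    push_cast at h1
    simp only [one_div]
    refine h1.trans ?_
    gcongr

lemma tendsto_quadratic_mul_pow {r : ℝ} (h0 : 0 ≤ r) (h1 : r < 1) (u v w : ℝ) :
    Filter.Tendsto (fun n : ℕ => (u + v * n + w * (n : ℝ) ^ 2) * r ^ n) Filter.atTop (nhds 0) := by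
  have hr : |r| < 1 := by rwa [abs_of_nonneg h0]
  have t0 := (tendsto_pow_const_mul_const_pow_of_abs_lt_one 0 hr).const_mul u
  have t1 := (tendsto_pow_const_mul_const_pow_of_abs_lt_one 1 hr).const_mul v
  have t2 := (tendsto_pow_const_mul_const_pow_of_abs_lt_one 2 hr).const_mul w
  have := (t0.add t1).add t2
  simp only [mul_zero, add_zero] at this
  refine this.congr fun n => ?_
  ring

lemma tendsto_quadratic_mul_pow_neg_rpow {b s : ℝ} (hb : 1 < b) (hs : 0 < s) (u v w : ℝ) :
    Filter.Tendsto (fun n : ℕ => (u + v * n + w * (n : ℝ) ^ 2) * (b ^ (-s)) ^ n) Filter.atTop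
      (nhds 0) :=
  tendsto_quadratic_mul_pow (by positivity) (Real.rpow_lt_one_of_one_lt_of_neg hb (by linarith))
    u v w

lemma eventually_quadratic_le_rpow {b s : ℝ} (hb : 1 < b) (hs : 0 < s) (u v w : ℝ) :
    ∀ᶠ n : ℕ in Filter.atTop, u + v * n + w * (n : ℝ) ^ 2 ≤ (b ^ n) ^ s := by
  have hb0 : 0 < b := by linarith
  filter_upwards [(tendsto_quadratic_mul_pow_neg_rpow hb hs u v w).eventually_lt_const one_pos]
    with n hn
  have h1 : (b ^ (-s)) ^ n = ((b ^ n) ^ s)⁻¹ := by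
    rw [← Real.rpow_natCast, ← Real.rpow_mul hb0.le, ← Real.rpow_natCast b n,
      ← Real.rpow_mul hb0.le, ← Real.rpow_neg hb0.le]
    congr 1; ring
  rw [h1, ← div_eq_mul_inv, div_lt_one (by positivity)] at hn
  exact hn.le

/-- The first moment of the exponential sums over frequencies up to `q ^ (7 / 18)`. -/
lemma eventually_sum_norm_freqSum_le {p : ℕ} [Fact p.Prime] (hp2 : 2 < p) :
    ∀ᶠ n : ℕ in Filter.atTop, ∀ a : Fin 3 → ℤ, (∀ i, ¬ (p : ℤ) ∣ a i) →
      ∑ m ∈ (box ⌊((p : ℝ) ^ n) ^ ((7 : ℝ) / 18)⌋₊).erase 0, ‖freqSum p n a m‖ ≤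
        ((p : ℝ) ^ n) ^ 2 * (4 * (p : ℝ) ^ 6 * ((n + 1) * (1 + n * Real.log p)) *
          ((p : ℝ) ^ (-(1 / 12 : ℝ))) ^ n) := by
  have hp := (Fact.out : p.Prime)
  have hb : (1 : ℝ) < p := by exact_mod_cast hp.one_lt
  have hb0 : (0 : ℝ) < p := by linarith
  have hL : 0 ≤ Real.log p := Real.log_nonneg hb.le
  set L := Real.log p with hLdef
  filter_upwards [eventually_quadratic_le_rpow hb (by norm_num : (0 : ℝ) < 1 / 36) 3 0 0,
    eventually_quadratic_le_rpow hb (by norm_num : (0 : ℝ) < 1 / 36) (240 * (p : ℝ) ^ 3)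
      (360 * (p : ℝ) ^ 3 * L) (120 * (p : ℝ) ^ 3 * L ^ 2), Filter.eventually_ge_atTop 12]
    with n h3 hquad hn a ha
  set q : ℝ := (p : ℝ) ^ n with hq
  have hq1 : 1 ≤ q := one_le_pow₀ hb.le
  have hq0 : 0 < q := by linarith
  set M := ⌊q ^ ((7 : ℝ) / 18)⌋₊ with hM
  have hMle : (M : ℝ) ≤ q ^ ((7 : ℝ) / 18) := Nat.floor_le (by positivity)
  have hMq : (M : ℝ) ≤ q := hMle.trans (Real.rpow_le_self_of_one_le hq1 (by norm_num))
  set K : ℝ := q ^ ((1 : ℝ) / 36) with hK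
  set H : ℝ := 1 + n * L with hH
  have hlogq : Real.log q = n * L := by rw [hq, Real.log_pow]
  have hharm : ∀ A ≤ M, ∑ t ∈ Finset.Icc 1 A, 1 / (t : ℝ) ≤ H := fun A hA => by
    have := sum_one_div_le_one_add_log hq1 ((Nat.cast_le.2 hA).trans hMq)
    rwa [hlogq] at this
  have hH0 : 0 ≤ H := by positivity
  have hK3 : 3 ≤ K := by simpa using h3
  have hprim := primBound_of_harmonic hp2 hH0 hharm hK3
    (le_trans (le_of_eq (by rw [hH]; ring)) hquad)
  have hKM' : K * M ≤ q ^ ((15 : ℝ) / 36) := by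
    calc K * M ≤ K * q ^ ((7 : ℝ) / 18) := by gcongr
      _ = _ := by rw [hK, ← Real.rpow_add hq0]; norm_num
  have hqr : ∀ s : ℝ, q ^ s = (p : ℝ) ^ (n * s) := fun s => by
    rw [hq, ← Real.rpow_natCast, ← Real.rpow_mul hb0.le]
  have hnR : (12 : ℝ) ≤ n := by exact_mod_cast hn
  have hKM : K * M ≤ (p : ℝ) ^ ((n - 1) / 2) := by
    refine hKM'.trans ?_
    rw [hqr, ← Real.rpow_natCast]
    refine Real.rpow_le_rpow_of_exponent_le hb.le ?_
    have h1 : n ≤ 2 * ((n - 1) / 2) + 2 := by omega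
    have h2 : (n : ℝ) ≤ 2 * (((n - 1) / 2 : ℕ) : ℝ) + 2 := by exact_mod_cast h1
    linarith
  have hmain := sum_norm_freqSum_le hp2 (by linarith : 1 ≤ K)
    (by positivity : 0 ≤ 4 * (p : ℝ) ^ 4 * K) hprim hharm hKM ha
  refine hmain.trans ?_
  have hr : ((((n - 1) / 2 : ℕ) : ℝ) + 1) ≤ n + 1 := by
    have : (n - 1) / 2 ≤ n := by omega
    gcongr
  have hhalf : (p : ℝ) ^ (n - n / 2) ≤ q ^ ((1 : ℝ) / 2) * p := by
    rw [hqr, ← Real.rpow_natCast]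
    nth_rewrite 3 [← Real.rpow_one (p : ℝ)]
    rw [← Real.rpow_add hb0]
    refine Real.rpow_le_rpow_of_exponent_le hb.le ?_
    have h1 : 2 * (n - n / 2) ≤ n + 2 := by omega
    have h2 : 2 * ((n - n / 2 : ℕ) : ℝ) ≤ n + 2 := by exact_mod_cast h1
    linarith
  have hexp : q ^ ((1 : ℝ) / 2) * q ^ ((15 : ℝ) / 36) = q * ((p : ℝ) ^ (-(1 / 12 : ℝ))) ^ n := by
    rw [← Real.rpow_natCast ((p : ℝ) ^ (-(1 / 12 : ℝ))), ← Real.rpow_mul hb0.le,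
      mul_comm (-(1 / 12 : ℝ)), ← hqr, ← Real.rpow_add hq0]
    nth_rewrite 2 [← Real.rpow_one q]
    rw [← Real.rpow_add hq0]
    norm_num
  calc q * (p : ℝ) ^ (n - n / 2) * p * ((((n - 1) / 2 : ℕ) : ℝ) + 1) *
        (4 * (p : ℝ) ^ 4 * K * H * M)
      = q * (p : ℝ) ^ (n - n / 2) * p * ((((n - 1) / 2 : ℕ) : ℝ) + 1) *
        (4 * (p : ℝ) ^ 4 * H * (K * M)) := by ring
    _ ≤ q * (q ^ ((1 : ℝ) / 2) * p) * p * (n + 1) * (4 * (p : ℝ) ^ 4 * H *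
        q ^ ((15 : ℝ) / 36)) := by gcongr
    _ = q * (q ^ ((1 : ℝ) / 2) * q ^ ((15 : ℝ) / 36)) * (4 * (p : ℝ) ^ 6 * ((n + 1) * H)) := by
        ring
    _ = _ := by rw [hexp]; ring

/-- The nonzero frequencies contribute a negligible amount. -/
lemma exists_tendsto_norm_tsum_sub_le {p : ℕ} [Fact p.Prime] (hp2 : 2 < p) (f : 𝓢(ℝ, ℂ)) {ε : ℝ}
    (hε : 0 < ε) :
    ∃ err : ℕ → ℝ, Filter.Tendsto err Filter.atTop (nhds 0) ∧ ∀ᶠ n : ℕ in Filter.atTop,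
      ∀ a : Fin 3 → ℤ, (∀ i, ¬ (p : ℤ) ∣ a i) → ∀ N : ℝ,
        ((p : ℝ) ^ n) ^ ((11 : ℝ) / 18 + ε) ≤ N →
        ‖∑' m, tensorVal f (N / (p : ℝ) ^ n) m * freqSum p n a m -
          tensorVal f (N / (p : ℝ) ^ n) 0 * freqSum p n a 0‖ ≤ ((p : ℝ) ^ n) ^ 2 * err n := by
  have hp := (Fact.out : p.Prime)
  have hb : (1 : ℝ) < p := by exact_mod_cast hp.one_lt
  have hb0 : (0 : ℝ) < p := by linarith
  obtain ⟨k₀, hk₀⟩ := exists_nat_ge (5 / ε)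
  set k := k₀ + 6 with hk
  have hkε : 5 ≤ k * ε := by
    rw [div_le_iff₀ hε] at hk₀
    rw [hk]; push_cast; nlinarith
  obtain ⟨C₀, hC₀pos, hC₀⟩ := f.decay 0 0
  obtain ⟨C, hCpos, hC⟩ := f.decay k 0
  simp only [pow_zero, norm_iteratedFDeriv_zero, one_mul, Real.norm_eq_abs] at hC₀ hC
  set W := ∑' m : ℤ, 1 / (1 + (m : ℝ) ^ 2) with hW
  have hW0 : 0 ≤ W := tsum_nonneg fun m => by positivity
  set L := Real.log p with hL
  refine ⟨fun n => C₀ ^ 3 * (4 * (p : ℝ) ^ 6 * ((n + 1) * (1 + n * L)) *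
    ((p : ℝ) ^ (-(1 / 12 : ℝ))) ^ n) + 8 * C₀ ^ 2 * C * W ^ 3 * ((p : ℝ) ^ (-(1 : ℝ))) ^ n, ?_, ?_⟩
  · have h1 := tendsto_quadratic_mul_pow_neg_rpow hb (by norm_num : (0 : ℝ) < 1 / 12)
      (C₀ ^ 3 * (4 * (p : ℝ) ^ 6)) (C₀ ^ 3 * (4 * (p : ℝ) ^ 6) * (1 + L))
      (C₀ ^ 3 * (4 * (p : ℝ) ^ 6) * L)
    have h2 := tendsto_quadratic_mul_pow_neg_rpow hb one_pos (8 * C₀ ^ 2 * C * W ^ 3) 0 0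
    have h3 := h1.add h2
    rw [add_zero] at h3
    refine h3.congr fun n => ?_
    ring
  · filter_upwards [eventually_sum_norm_freqSum_le hp2] with n hn a ha N hN
    have hnum := hn a ha
    set q : ℝ := (p : ℝ) ^ n with hq
    have hq1 : 1 ≤ q := one_le_pow₀ hb.le
    have hq0 : 0 < q := by linarith
    set M := ⌊q ^ ((7 : ℝ) / 18)⌋₊ with hM
    have hδ : q ^ (-(7 : ℝ) / 18 + ε) ≤ N / q := by
      rw [le_div_iff₀ hq0]
      refine le_trans (le_of_eq ?_) hN
      nth_rewrite 2 [← Real.rpow_one q]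
      rw [← Real.rpow_add hq0]
      congr 1; ring
    have hδ0 : 0 < N / q := lt_of_lt_of_le (by positivity) hδ
    have hM1 : q ^ ((7 : ℝ) / 18) ≤ (M : ℝ) + 1 := (Nat.lt_floor_add_one _).le
    have hden : q ^ (2 : ℝ) ≤ (N / q) ^ k * ((M : ℝ) + 1) ^ (k - 6) := by
      calc q ^ (2 : ℝ) ≤ q ^ ((-(7 : ℝ) / 18 + ε) * k + (7 : ℝ) / 18 * (k - 6 : ℕ)) := by
            refine Real.rpow_le_rpow_of_exponent_le hq1 ?_
            rw [Nat.cast_sub (by omega)]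
            push_cast
            linarith
        _ = (q ^ (-(7 : ℝ) / 18 + ε)) ^ k * (q ^ ((7 : ℝ) / 18)) ^ (k - 6) := by
            rw [Real.rpow_add hq0, Real.rpow_mul hq0.le, Real.rpow_mul hq0.le, Real.rpow_natCast,
              Real.rpow_natCast]
        _ ≤ _ := by gcongr
    have hmain := norm_tsum_sub_le (f := f) (k := k) (by omega) hCpos.le hC₀ hC hδ0 M
      (norm_freqSum_le_trivial (p := p) n a)
    refine hmain.trans ?_
    rw [mul_add]
    refine add_le_add ?_ ?_
    · calc C₀ ^ 3 * ∑ m ∈ (box M).erase 0, ‖freqSum p n a m‖ ≤ C₀ ^ 3 * _ :=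
            mul_le_mul_of_nonneg_left hnum (by positivity)
        _ = _ := by ring
    · have hinv : ((p : ℝ) ^ (-(1 : ℝ))) ^ n = q⁻¹ := by
        rw [Real.rpow_neg_one, inv_pow]
      rw [hinv]
      rw [Real.rpow_two] at hden
      calc 8 * C₀ ^ 2 * C / ((N / q) ^ k * ((M : ℝ) + 1) ^ (k - 6)) * q ^ 3 * W ^ 3
          ≤ 8 * C₀ ^ 2 * C / q ^ 2 * q ^ 3 * W ^ 3 := by gcongr
        _ = _ := by field_simp

lemma isUnit_intCast_zmod_pow_iff {p : ℕ} [Fact p.Prime] {n : ℕ} (hn : n ≠ 0) (u : ℤ) :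
    IsUnit (u : ZMod (p ^ n)) ↔ ¬ (p : ℤ) ∣ u := by
  rw [← redHom_ne_zero_iff hn, map_intCast, ne_eq, ZMod.intCast_zmod_eq_zero_iff_dvd]

lemma mem_unitSols_intCast_iff {p : ℕ} [Fact p.Prime] {n : ℕ} (hn : n ≠ 0) (a x : Fin 3 → ℤ) :
    (fun i => (x i : ZMod (p ^ n))) ∈ unitSols (fun i => (a i : ZMod (p ^ n))) ↔
      Int.gcd (x 0 * x 1 * x 2) p = 1 ∧
        (p : ℤ) ^ n ∣ a 0 * x 0 ^ 2 + a 1 * x 1 ^ 2 + a 2 * x 2 ^ 2 := by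
  have hp := (Fact.out : p.Prime)
  have hpZ : Prime (p : ℤ) := Nat.prime_iff_prime_int.1 hp
  rw [mem_unitSols]
  refine and_congr ?_ ?_
  · simp only [isUnit_intCast_zmod_pow_iff hn, Fin.forall_fin_succ]
    rw [← Int.isCoprime_iff_gcd_eq_one, isCoprime_comm, hpZ.coprime_iff_not_dvd, hpZ.dvd_mul,
      hpZ.dvd_mul]
    simp
    tauto
  · have h : diagBilin (fun i => (a i : ZMod (p ^ n))) (fun i => (x i : ZMod (p ^ n)))
        (fun i => (x i : ZMod (p ^ n))) =
        ((a 0 * x 0 ^ 2 + a 1 * x 1 ^ 2 + a 2 * x 2 ^ 2 : ℤ) : ZMod (p ^ n)) := by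
      simp only [diagBilin]; push_cast; ring
    rw [h, ZMod.intCast_zmod_eq_zero_iff_dvd, Nat.cast_pow]

lemma freqSum_zero (p : ℕ) [Fact p.Prime] (n : ℕ) (a : Fin 3 → ℤ) :
    freqSum p n a 0 = (unitSols fun i => (a i : ZMod (p ^ n))).card := by
  simp [freqSum, unitExpSum]

/-- The smoothed count of unit solutions as a sum over frequencies. -/
lemma smoothed_count_eq {p : ℕ} [Fact p.Prime] {n : ℕ} (hn : n ≠ 0) (Φ : 𝓢(ℝ, ℝ)) {N : ℝ}
    (hN : 0 < N) (a : Fin 3 → ℤ) :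
    ((∑' x : ℤ × ℤ × ℤ, (if Int.gcd (x.1 * x.2.1 * x.2.2) p = 1 ∧
        (p : ℤ) ^ n ∣ a 0 * x.1 ^ 2 + a 1 * x.2.1 ^ 2 + a 2 * x.2.2 ^ 2
      then Φ ((x.1 : ℝ) / N) * Φ ((x.2.1 : ℝ) / N) * Φ ((x.2.2 : ℝ) / N) else 0) : ℝ) : ℂ) =
      (N / (p : ℝ) ^ n : ℝ) ^ 3 * ∑' m : Fin 3 → ℤ,
        tensorVal (𝓕 (Φ.postcompCLM Complex.ofRealCLM)) (N / (p : ℝ) ^ n) m * freqSum p n a m := by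
  classical
  rw [← tsum_unitSols_eq _ hN, Complex.ofReal_tsum, ← (finThreeEquiv ℤ).tsum_eq]
  refine tsum_congr fun x => ?_
  simp only [mem_unitSols_intCast_iff hn, Fin.prod_univ_three, SchwartzMap.postcompCLM_apply,
    Complex.ofRealCLM_apply]
  change ((if Int.gcd (x 0 * x 1 * x 2) p = 1 ∧
        (p : ℤ) ^ n ∣ a 0 * x 0 ^ 2 + a 1 * x 1 ^ 2 + a 2 * x 2 ^ 2
      then Φ ((x 0 : ℝ) / N) * Φ ((x 1 : ℝ) / N) * Φ ((x 2 : ℝ) / N) else 0 : ℝ) : ℂ) = _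
  split_ifs <;> simp

lemma tensorVal_fourier_zero (Φ : 𝓢(ℝ, ℝ)) (δ : ℝ) :
    tensorVal (𝓕 (Φ.postcompCLM Complex.ofRealCLM)) δ 0 = ((∫ x, Φ x : ℝ) : ℂ) ^ 3 := by
  have h : 𝓕 (Φ.postcompCLM Complex.ofRealCLM) 0 = ((∫ x, Φ x : ℝ) : ℂ) := by
    rw [SchwartzMap.fourier_coe, Real.fourier_real_eq, ← integral_complex_ofReal]
    simp
  simp [tensorVal, h]

/-- Distance of the normalized smoothed count from its expected value. -/
lemma abs_smoothed_count_sub_eq {p : ℕ} [Fact p.Prime] (hp2 : 2 < p) {n : ℕ} (hn : n ≠ 0)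
    (Φ : 𝓢(ℝ, ℝ)) {N : ℝ} (hN : 0 < N) {a : Fin 3 → ℤ} (ha : ∀ i, ¬ (p : ℤ) ∣ a i) :
    |((p : ℝ) ^ n / N ^ 3) * (∑' x : ℤ × ℤ × ℤ, (if Int.gcd (x.1 * x.2.1 * x.2.2) p = 1 ∧
        (p : ℤ) ^ n ∣ a 0 * x.1 ^ 2 + a 1 * x.2.1 ^ 2 + a 2 * x.2.2 ^ 2
      then Φ ((x.1 : ℝ) / N) * Φ ((x.2.1 : ℝ) / N) * Φ ((x.2.2 : ℝ) / N) else 0)) -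
        (∫ x : ℝ, Φ x) ^ 3 *
          (((p : ℝ) - ((2 + legendreSym p (-(a 0 * a 1)) + legendreSym p (-(a 0 * a 2))
              + legendreSym p (-(a 1 * a 2)) : ℤ) : ℝ)) * ((p : ℝ) - 1) / (p : ℝ) ^ 2)| =
    (((p : ℝ) ^ n) ^ 2)⁻¹ * ‖∑' m : Fin 3 → ℤ,
        tensorVal (𝓕 (Φ.postcompCLM Complex.ofRealCLM)) (N / (p : ℝ) ^ n) m * freqSum p n a m -
      tensorVal (𝓕 (Φ.postcompCLM Complex.ofRealCLM)) (N / (p : ℝ) ^ n) 0 * freqSum p n a 0‖ := by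
  have hp0 : (p : ℂ) ≠ 0 := by exact_mod_cast (Fact.out : p.Prime).ne_zero
  have hN0 : (N : ℂ) ≠ 0 := by exact_mod_cast hN.ne'
  have hcard := congrArg (Int.cast : ℤ → ℂ) (card_unitSols_intCast hp2 hn ha)
  rw [Int.cast_natCast] at hcard
  have hpow : (p : ℂ) ^ n = (p : ℂ) ^ (n - 1) * p := by
    rw [← pow_succ, Nat.sub_add_cancel (Nat.pos_of_ne_zero hn)]
  rw [← Real.norm_eq_abs, ← Complex.norm_real, tensorVal_fourier_zero, freqSum_zero, hcard]
  have hq : (((p : ℝ) ^ n) ^ 2)⁻¹ = ‖(((p : ℂ) ^ n) ^ 2)⁻¹‖ := by simp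
  rw [hq, ← norm_mul]
  congr 1
  rw [Complex.ofReal_sub, Complex.ofReal_mul, smoothed_count_eq hn Φ hN a]
  push_cast
  field_simp
  rw [hpow]
  ring

open Filter MeasureTheory

/-- For coefficients allowed to vary with `n`, the difference between the
normalized smoothed count of unit solutions of
`α₁(n)x₁² + α₂(n)x₂² + α₃(n)x₃² ≡ 0 (mod pⁿ)` and `Φ̂(0)³ · C_p(α₁(n),α₂(n),α₃(n))`
tends to `0` as `n → ∞`, provided `N ≥ q^{11/18+ε}`. -/
theorem smoothed_count_varying_coefficients
    (ε : ℝ) (hε : 0 < ε) (p : ℕ) [hp : Fact p.Prime] (hp2 : 2 < p)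
    (Φ : SchwartzMap ℝ ℝ) (hΦ : ∀ x, 0 ≤ Φ x)
    (α₁ α₂ α₃ : ℕ → ℤ)
    (h1 : ∀ n : ℕ, ¬ (p : ℤ) ∣ α₁ n) (h2 : ∀ n : ℕ, ¬ (p : ℤ) ∣ α₂ n)
    (h3 : ∀ n : ℕ, ¬ (p : ℤ) ∣ α₃ n)
    (hs : ∀ n : ℕ, (2 + legendreSym p (-(α₁ n * α₂ n)) + legendreSym p (-(α₁ n * α₃ n))
            + legendreSym p (-(α₂ n * α₃ n))) < (p : ℤ))
    (N : ℕ → ℝ) (hN : ∀ n : ℕ, ((p : ℝ) ^ n) ^ ((11 : ℝ) / 18 + ε) ≤ N n) :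
    Tendsto (fun n : ℕ =>
        ((p : ℝ) ^ n / (N n) ^ 3) *
          (∑' x : ℤ × ℤ × ℤ,
            (if Int.gcd (x.1 * x.2.1 * x.2.2) p = 1 ∧
                (p : ℤ) ^ n ∣ α₁ n * x.1 ^ 2 + α₂ n * x.2.1 ^ 2 + α₃ n * x.2.2 ^ 2
             then Φ ((x.1 : ℝ) / N n) * Φ ((x.2.1 : ℝ) / N n) * Φ ((x.2.2 : ℝ) / N n)
             else 0)) -
        (∫ x : ℝ, Φ x) ^ 3 *
          (((p : ℝ) - ((2 + legendreSym p (-(α₁ n * α₂ n)) + legendreSym p (-(α₁ n * α₃ n))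
              + legendreSym p (-(α₂ n * α₃ n)) : ℤ) : ℝ)) * ((p : ℝ) - 1) / (p : ℝ) ^ 2))
      atTop (nhds 0) := by
  have hp0 : (0 : ℝ) < p := by exact_mod_cast hp.out.pos
  obtain ⟨err, herr, hbound⟩ := exists_tendsto_norm_tsum_sub_le hp2
    (𝓕 (Φ.postcompCLM Complex.ofRealCLM)) hε
  refine squeeze_zero_norm' ?_ herr
  filter_upwards [hbound, eventually_ne_atTop 0] with n hn hn0
  have hNpos : 0 < N n := lt_of_lt_of_le (by positivity) (hN n)
  have ha : ∀ i, ¬ (p : ℤ) ∣ ![α₁ n, α₂ n, α₃ n] i := by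
    intro i
    fin_cases i
    exacts [h1 n, h2 n, h3 n]
  have heq := abs_smoothed_count_sub_eq hp2 hn0 Φ hNpos ha
  refine (le_of_eq heq).trans ?_
  rw [inv_mul_le_iff₀ (by positivity)]
  exact hn _ ha (N n) (hN n)
end

section
/- Let ε > 0 be fixed, let p > 2 be a fixed prime, and let α₁, α₂, α₃ be fixed integers coprime to p. Then there exist a constant C > 0 (depending only on p, α₁, α₂, α₃, ε) and n₀ ∈ ℕ such that for all n ≥ n₀, writing q := pⁿ: if there exists (x₁,x₂,x₃) ∈ ℤ³ with p ∤ x₁x₂x₃ and q | α₁x₁²+α₂x₂²+α₃x₃², then there exists such a triple with max(|x₁|,|x₂|,|x₃|) ≤ C · q^{1/2+ε}. -/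
/-- Truncated division of `x` by `k`: subtracting up to `k` copies of the quotient shrinks `|x|`. -/
theorem Int.exists_approx_quotient (x : ℤ) {k : ℤ} (hk : 0 < k) :
    ∃ u : ℤ, (∀ l : ℤ, 1 ≤ l → l ≤ k → |x - l * u| ≤ |x| - |u|) ∧
      ∀ R : ℤ, R * k ≤ |x| → R ≤ |u| := by
  wlog hx : 0 ≤ x generalizing x
  · obtain ⟨u, hu, hR⟩ := this (-x) (by omega)
    refine ⟨-u, fun l h1 h2 => ?_, fun R h => ?_⟩
    · have := hu l h1 h2
      rw [abs_neg, ← abs_neg (-x - l * u)] at this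
      rw [abs_neg]
      convert this using 2
      ring
    · rw [abs_neg]; exact hR R (by rwa [abs_neg])
  have hu : 0 ≤ x / k := Int.ediv_nonneg hx hk.le
  refine ⟨x / k, fun l h1 h2 => ?_, fun R h => ?_⟩
  · have := Int.ediv_mul_le x hk.ne.symm
    rw [abs_of_nonneg hu, abs_of_nonneg hx, abs_of_nonneg (by nlinarith)]
    nlinarith
  · rw [abs_of_nonneg hx] at h
    rw [abs_of_nonneg hu]
    exact (Int.le_ediv_iff_mul_le hk).mpr h

/-- If a homomorphism from `ℤ^ι` to a finite group `G` is injective at scale `r` and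
`|G| ≤ N (r + 1)^|ι|`, then every value of it is attained at a vector of size `O(N (r + 1))`. -/
theorem exists_small_preimage {ι G : Type*} [Fintype ι] [AddCommGroup G] [Fintype G]
    (f : (ι → ℤ) →+ G) (r N : ℕ)
    (hker : ∀ d : ι → ℤ, f d = 0 → (∀ i, |d i| ≤ r) → d = 0)
    (hcard : Fintype.card G ≤ N * (r + 1) ^ Fintype.card ι) (x : ι → ℤ) :
    ∃ y : ι → ℤ, f y = f x ∧ ∀ i, |y i| ≤ 2 * (N + 1) * (r + 1) := by
  classical
  suffices H : ∀ (M : ℕ) (x : ι → ℤ), (∀ i, |x i| ≤ M) →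
      ∃ y : ι → ℤ, f y = f x ∧ ∀ i, |y i| ≤ 2 * (N + 1) * (r + 1) by
    refine H (∑ i, (x i).natAbs) x fun i => ?_
    have := Finset.single_le_sum (f := fun i => (x i).natAbs) (fun _ _ => Nat.zero_le _)
      (Finset.mem_univ i)
    rw [Int.abs_eq_natAbs]
    exact_mod_cast this
  intro M
  induction M with
  | zero =>
    intro x hx
    refine ⟨x, rfl, fun i => (hx i).trans ?_⟩
    push_cast
    positivity
  | succ M ih =>
    intro x hx
    by_cases hM : (M : ℤ) + 1 ≤ 2 * (N + 1) * (r + 1)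
    · exact ⟨x, rfl, fun i => (hx i).trans (by push_cast; exact hM)⟩
    push Not at hM
    choose w hw using fun c => Int.exists_approx_quotient (x c) (k := (N : ℤ) + 1) (by positivity)
    let g : Fin (N + 1) × (ι → Fin (r + 1)) → G :=
      fun a => f (((a.1 : ℕ) : ℤ) • w + fun c => ((a.2 c : ℕ) : ℤ))
    have hlt : Fintype.card G < Fintype.card (Fin (N + 1) × (ι → Fin (r + 1))) := by
      simp only [Fintype.card_prod, Fintype.card_fin, Fintype.card_fun]
      have : 0 < (r + 1) ^ Fintype.card ι := by positivity
      nlinarith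
    obtain ⟨a, b, hab, hg⟩ := Fintype.exists_ne_map_eq_of_card_lt g hlt
    have key : ∀ a b : Fin (N + 1) × (ι → Fin (r + 1)), a.1 < b.1 → g a = g b →
        ∃ y : ι → ℤ, f y = f x ∧ ∀ i, |y i| ≤ 2 * (N + 1) * (r + 1) := by
      rintro ⟨i, s⟩ ⟨j, t⟩ hij hg
      simp only [g] at hg hij
      obtain ⟨y, hy, hyb⟩ := ih (x - ((((j : ℕ) : ℤ) • w + fun c => ((t c : ℕ) : ℤ)) -
          (((i : ℕ) : ℤ) • w + fun c => ((s c : ℕ) : ℤ)))) (by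
        intro c
        have hs := (s c).2
        have ht := (t c).2
        have hj := j.2
        have hij' : (i : ℕ) < j := hij
        have hxc := hx c
        simp only [Pi.sub_apply, Pi.add_apply, Pi.smul_apply, smul_eq_mul]
        have hlarge := (hw c).2 (r + 1)
        have hshrink := (hw c).1 ((j : ℕ) - (i : ℕ)) (by omega) (by omega)
        generalize w c = u at *
        have hstep : |x c - (((j : ℕ) : ℤ) * u + ((t c : ℕ) : ℤ) -
            (((i : ℕ) : ℤ) * u + ((s c : ℕ) : ℤ)))| ≤ |x c| - |u| + r := by
          have : |((s c : ℕ) : ℤ) - ((t c : ℕ) : ℤ)| ≤ r := by rw [abs_le]; omega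
          calc _ = |(x c - ((j : ℤ) - i) * u) + (((s c : ℕ) : ℤ) - ((t c : ℕ) : ℤ))| := by
                congr 1; ring
            _ ≤ _ := (abs_add_le _ _).trans (add_le_add hshrink this)
        refine hstep.trans ?_
        push_cast at hxc
        by_cases h : ((r : ℤ) + 1) * (N + 1) ≤ |x c|
        · have := hlarge h
          linarith
        · have := abs_nonneg u
          push Not at h
          nlinarith)
      refine ⟨y, ?_, hyb⟩
      rw [hy, map_sub, map_sub, hg, sub_self, sub_zero]
    rcases lt_trichotomy a.1 b.1 with h | h | h
    · exact key a b h hg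
    · refine absurd (Prod.ext h ?_) hab
      have h0 := hker ((fun c => ((a.2 c : ℕ) : ℤ)) - fun c => ((b.2 c : ℕ) : ℤ)) (by
        simp only [g, map_add, h] at hg
        rw [map_sub, add_left_cancel hg, sub_self]) (by
        intro c
        have hs := (a.2 c).2
        have ht := (b.2 c).2
        simp only [Pi.sub_apply]
        rw [abs_le]; omega)
      funext c
      have := congrFun h0 c
      simp only [Pi.sub_apply, Pi.zero_apply] at this
      ext; omega
    · exact key b a h hg.symm

/-- Two orthogonal isotropic vectors of a nondegenerate ternary diagonal form are proportional; in
particular a coordinate vanishes at both or at neither. -/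
theorem fst_ne_zero_of_orthogonal {F : Type*} [Field F] {a b c x y z u v w : F}
    (ha : a ≠ 0) (hb : b ≠ 0) (hc : c ≠ 0) (hx : x ≠ 0)
    (hQ : a * x ^ 2 + b * y ^ 2 + c * z ^ 2 = 0) (h0 : a * u ^ 2 + b * v ^ 2 + c * w ^ 2 = 0)
    (hB : a * x * u + b * y * v + c * z * w = 0) (hne : ¬ (u = 0 ∧ v = 0 ∧ w = 0)) : u ≠ 0 := by
  rintro rfl
  have hw : w ≠ 0 := by
    rintro rfl
    refine hne ⟨rfl, ?_, rfl⟩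
    simpa [hb] using h0
  have hyz : w * y = v * z := by
    have : c * w * (w * y - v * z) = 0 := by linear_combination y * h0 - v * hB
    simpa [hc, hw, sub_eq_zero] using this
  have : w ^ 2 * (a * x ^ 2) = 0 := by
    linear_combination w ^ 2 * hQ - z ^ 2 * h0 - b * (w * y + v * z) * hyz
  simp [hw, ha, hx] at this

/-- If a ternary diagonal form represents zero over `ℤ` nontrivially and represents zero modulo `p`
with unit coordinates, then it represents zero over `ℤ` with coordinates coprime to `p`. -/
theorem exists_unit_zero_of_isotropic {p : ℕ} (hp : p.Prime) (hp2 : 2 < p) {a b c : ℤ}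
    (ha : ¬ (p : ℤ) ∣ a) (hb : ¬ (p : ℤ) ∣ b) (hc : ¬ (p : ℤ) ∣ c)
    {x y z : ℤ} (hxyz : ¬ (p : ℤ) ∣ x * y * z) (hQ : (p : ℤ) ∣ a * x ^ 2 + b * y ^ 2 + c * z ^ 2)
    {u v w : ℤ} (hne : ¬ (u = 0 ∧ v = 0 ∧ w = 0)) (h0 : a * u ^ 2 + b * v ^ 2 + c * w ^ 2 = 0) :
    ∃ u v w : ℤ, ¬ (p : ℤ) ∣ u * v * w ∧ a * u ^ 2 + b * v ^ 2 + c * w ^ 2 = 0 := by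
  have hpp : Prime (p : ℤ) := Nat.prime_iff_prime_int.mp hp
  have : Fact p.Prime := ⟨hp⟩
  by_cases hdvd : (p : ℤ) ∣ u ∧ (p : ℤ) ∣ v ∧ (p : ℤ) ∣ w
  · obtain ⟨⟨u', hu⟩, ⟨v', hv⟩, ⟨w', hw⟩⟩ := hdvd
    have hp0 : p ≠ 0 := hp.ne_zero
    have h0' : a * u' ^ 2 + b * v' ^ 2 + c * w' ^ 2 = 0 := by
      have : (p : ℤ) ^ 2 * (a * u' ^ 2 + b * v' ^ 2 + c * w' ^ 2) = 0 := by
        rw [hu, hv, hw] at h0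
        linear_combination h0
      simpa [hp0] using this
    have hne' : ¬ (u' = 0 ∧ v' = 0 ∧ w' = 0) := by simpa [hu, hv, hw, hp0] using hne
    have hlt : u'.natAbs + v'.natAbs + w'.natAbs <
        u.natAbs + v.natAbs + w.natAbs := by
      simp only [hu, hv, hw, Int.natAbs_mul, Int.natAbs_natCast]
      have : 0 < u'.natAbs + v'.natAbs + w'.natAbs := by omega
      nlinarith
    exact exists_unit_zero_of_isotropic hp hp2 ha hb hc hxyz hQ hne' h0'
  by_cases hB : (p : ℤ) ∣ a * x * u + b * y * v + c * z * w
  · refine ⟨u, v, w, ?_, h0⟩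
    have h0p : (p : ℤ) ∣ a * u ^ 2 + b * v ^ 2 + c * w ^ 2 := h0 ▸ dvd_zero _
    rw [← ZMod.intCast_zmod_eq_zero_iff_dvd] at *
    simp only [← ZMod.intCast_zmod_eq_zero_iff_dvd] at hdvd
    push_cast at *
    simp only [mul_eq_zero, not_or] at hxyz ⊢
    obtain ⟨⟨hx, hy⟩, hz⟩ := hxyz
    refine ⟨⟨fst_ne_zero_of_orthogonal ha hb hc hx hQ h0p hB hdvd,
      fst_ne_zero_of_orthogonal (y := (x : ZMod p)) (z := (z : ZMod p))
        (v := (u : ZMod p)) (w := (w : ZMod p)) hb ha hc hy ?_ ?_ ?_ ?_⟩,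
      fst_ne_zero_of_orthogonal (y := (x : ZMod p)) (z := (y : ZMod p))
        (v := (u : ZMod p)) (w := (v : ZMod p)) hc ha hb hz ?_ ?_ ?_ ?_⟩
    · linear_combination hQ
    · linear_combination h0p
    · linear_combination hB
    · tauto
    · linear_combination hQ
    · linear_combination h0p
    · linear_combination hB
    · tauto
  · set q := a * x ^ 2 + b * y ^ 2 + c * z ^ 2 with hq
    set β := a * x * u + b * y * v + c * z * w with hβ
    refine ⟨q * u - 2 * β * x, q * v - 2 * β * y, q * w - 2 * β * z, fun h => ?_, ?_⟩
    · have h2 : ¬ (p : ℤ) ∣ 2 := fun h => by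
        have := Int.le_of_dvd (by norm_num) h
        omega
      have hmul : ∀ s t : ℤ, ¬ (p : ℤ) ∣ t → ¬ (p : ℤ) ∣ q * s - 2 * β * t := fun s t ht h =>
        hpp.not_dvd_mul (hpp.not_dvd_mul h2 hB) ht ((dvd_sub_right (hQ.mul_right s)).mp h)
      have hxy : ¬ (p : ℤ) ∣ x * y := fun h => hxyz (h.mul_right z)
      refine hpp.not_dvd_mul (hpp.not_dvd_mul (hmul u x ?_) (hmul v y ?_)) (hmul w z ?_) h
      · exact fun h => hxy (h.mul_right y)
      · exact fun h => hxy (h.mul_left x)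
      · exact fun h => hxyz (h.mul_left _)
    · linear_combination q ^ 2 * h0 - 4 * q * β * hβ.symm - 4 * β ^ 2 * hq
termination_by u.natAbs + v.natAbs + w.natAbs
decreasing_by exact hlt

/-- Let `(x, y, z)` be a zero of the form modulo `p ^ n`. A vector proportional to it modulo `p ^ m`,
where `n ≤ 2 * m`, and orthogonal to it modulo `p ^ n` is again a zero modulo `p ^ n`. -/
theorem dvd_of_mem_lattice {p : ℕ} (hp : p.Prime) {m n : ℕ} (hmn : n ≤ 2 * m) (hmn' : m ≤ n)
    {a b c : ℤ} (hc : ¬ (p : ℤ) ∣ c)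
    {x y z : ℤ} (hx : ¬ (p : ℤ) ∣ x) (hz : ¬ (p : ℤ) ∣ z)
    (hQ : (p : ℤ) ^ n ∣ a * x ^ 2 + b * y ^ 2 + c * z ^ 2)
    {u v w : ℤ} (hD : (p : ℤ) ^ m ∣ x * v - y * u)
    (hB : (p : ℤ) ^ n ∣ a * x * u + b * y * v + c * z * w) :
    (p : ℤ) ^ m ∣ x * w - z * u ∧ (p : ℤ) ^ n ∣ a * u ^ 2 + b * v ^ 2 + c * w ^ 2 := by
  have hpp : Prime (p : ℤ) := Nat.prime_iff_prime_int.mp hp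
  have hE : (p : ℤ) ^ m ∣ x * w - z * u := by
    have h : (p : ℤ) ^ m ∣ (c * z) * (x * w - z * u) := by
      have := ((dvd_trans (pow_dvd_pow _ hmn') hB).mul_left x).sub
        ((dvd_trans (pow_dvd_pow _ hmn') hQ).mul_left u) |>.sub (hD.mul_left (b * y))
      have e : c * z * (x * w - z * u) = x * (a * x * u + b * y * v + c * z * w) -
          u * (a * x ^ 2 + b * y ^ 2 + c * z ^ 2) - b * y * (x * v - y * u) := by ring
      rwa [e]
    have hcop : IsCoprime ((p : ℤ) ^ m) (c * z) :=
      ((hpp.coprime_iff_not_dvd.mpr (hpp.not_dvd_mul hc hz))).pow_left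
    exact hcop.dvd_of_dvd_mul_left h
  refine ⟨hE, ?_⟩
  obtain ⟨s, hs⟩ := hD
  obtain ⟨t, ht⟩ := hE
  have hcop : IsCoprime ((p : ℤ) ^ n) (x ^ 2) :=
    (hpp.coprime_iff_not_dvd.mpr hx).pow
  refine hcop.dvd_of_dvd_mul_left ?_
  have h2m : (p : ℤ) ^ n ∣ (p : ℤ) ^ m * (p : ℤ) ^ m := by
    rw [← pow_add]; exact pow_dvd_pow _ (by omega)
  have := ((hB.mul_left (2 * u * x)).sub (hQ.mul_left (u ^ 2))).add
    (h2m.mul_left (b * s ^ 2 + c * t ^ 2))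
  have hv : x * v = y * u + (p : ℤ) ^ m * s := by linarith
  have hw : x * w = z * u + (p : ℤ) ^ m * t := by linarith
  convert this using 1
  have e : x ^ 2 * (a * u ^ 2 + b * v ^ 2 + c * w ^ 2)
      = a * x ^ 2 * u ^ 2 + b * (x * v) ^ 2 + c * (x * w) ^ 2 := by ring
  have e' : 2 * u * x * (a * x * u + b * y * v + c * z * w)
      = 2 * u * (a * x ^ 2 * u + b * y * (x * v) + c * z * (x * w)) := by ring
  rw [e, e', hv, hw]
  ring

/-- If a ternary diagonal form is anisotropic over `ℤ` and has a zero modulo `p ^ n` with unit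
coordinates, then it has one whose size is `O(p ^ (n / 2))`. -/
theorem exists_small_unit_zero_of_anisotropic {p : ℕ} (hp : p.Prime) {a b c : ℤ} (ha : a ≠ 0)
    (hc : ¬ (p : ℤ) ∣ c)
    (haniso : ∀ u v w : ℤ, a * u ^ 2 + b * v ^ 2 + c * w ^ 2 = 0 → u = 0 ∧ v = 0 ∧ w = 0)
    {n : ℕ} (hn : 1 ≤ n) {x y z : ℤ} (hxyz : ¬ (p : ℤ) ∣ x * y * z)
    (hQ : (p : ℤ) ^ n ∣ a * x ^ 2 + b * y ^ 2 + c * z ^ 2) :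
    ∃ (r : ℕ) (u v w : ℤ), r ^ 2 ≤ p ^ n ∧ ¬ (p : ℤ) ∣ u * v * w ∧
      (p : ℤ) ^ n ∣ a * u ^ 2 + b * v ^ 2 + c * w ^ 2 ∧
      max (max |u| |v|) |w| ≤
        2 * ((p * (a.natAbs + b.natAbs + c.natAbs) : ℕ) ^ 3 + 1) * (r + 1) := by
  have hpp : Prime (p : ℤ) := Nat.prime_iff_prime_int.mp hp
  have : NeZero p := ⟨hp.ne_zero⟩
  set A := a.natAbs + b.natAbs + c.natAbs with hA
  have hA0 : 0 < A := by omega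
  have hx : ¬ (p : ℤ) ∣ x := fun h => hxyz ((h.mul_right y).mul_right z)
  have hy : ¬ (p : ℤ) ∣ y := fun h => hxyz ((h.mul_left x).mul_right z)
  have hz : ¬ (p : ℤ) ∣ z := fun h => hxyz (h.mul_left _)
  obtain ⟨m, hnm, hmn, hm, h2m⟩ : ∃ m, n ≤ 2 * m ∧ m ≤ n ∧ 1 ≤ m ∧ 2 * m ≤ n + 1 :=
    ⟨(n + 1) / 2, by omega, by omega, by omega, by omega⟩
  have hpn : 0 < p ^ n := by have := hp.pos; positivity
  set r := Nat.sqrt ((p ^ n - 1) / A)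
  have hr1 : A * r ^ 2 < p ^ n := by
    have h1 : r ^ 2 ≤ (p ^ n - 1) / A := Nat.sqrt_le' _
    have h2 := (Nat.mul_le_mul_left A h1).trans (Nat.mul_div_le _ _)
    omega
  have hr2 : p ^ n ≤ A * (r + 1) ^ 2 := by
    have h1 : (p ^ n - 1) / A < (r + 1) ^ 2 := Nat.lt_succ_sqrt' _
    have h2 := (Nat.div_lt_iff_lt_mul hA0).mp h1
    rw [mul_comm]
    omega
  let f : (Fin 3 → ℤ) →+ ZMod (p ^ m) × ZMod (p ^ n) × ZMod p := AddMonoidHom.mk'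
    (fun t => (((x * t 1 - y * t 0 : ℤ) : ZMod (p ^ m)),
      ((a * x * t 0 + b * y * t 1 + c * z * t 2 : ℤ) : ZMod (p ^ n)), ((t 0 : ℤ) : ZMod p)))
    (fun s t => by
      simp only [Pi.add_apply, Prod.mk_add_mk, ← Int.cast_add]
      congr 3 <;> ring)
  have hf : ∀ s t : Fin 3 → ℤ, f s = f t →
      (p : ℤ) ^ m ∣ x * (s 1 - t 1) - y * (s 0 - t 0) ∧
      (p : ℤ) ^ n ∣ a * x * (s 0 - t 0) + b * y * (s 1 - t 1) + c * z * (s 2 - t 2) ∧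
      (p : ℤ) ∣ s 0 - t 0 := by
    intro s t h
    simp only [f, AddMonoidHom.mk'_apply, Prod.mk.injEq, ZMod.intCast_eq_intCast_iff_dvd_sub,
      Nat.cast_pow] at h
    obtain ⟨⟨k₁, h1⟩, ⟨k₂, h2⟩, ⟨k₃, h3⟩⟩ := h
    exact ⟨⟨-k₁, by linear_combination -h1⟩, ⟨-k₂, by linear_combination -h2⟩,
      ⟨-k₃, by linear_combination -h3⟩⟩
  have hker : ∀ d : Fin 3 → ℤ, f d = 0 → (∀ i, |d i| ≤ r) → d = 0 := by
    intro d hd hdr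
    obtain ⟨h1, h2, -⟩ := hf d 0 (hd.trans (map_zero f).symm)
    simp only [Pi.zero_apply, sub_zero] at h1 h2
    have hdvd := (dvd_of_mem_lattice hp hnm hmn hc hx hz hQ h1 h2).2
    have hsq : ∀ i, d i ^ 2 ≤ (r : ℤ) ^ 2 := fun i => sq_le_sq' (neg_le_of_abs_le (hdr i))
      (le_of_abs_le (hdr i))
    have hlt : |a * d 0 ^ 2 + b * d 1 ^ 2 + c * d 2 ^ 2| < (p : ℤ) ^ n := by
      calc _ ≤ |a * d 0 ^ 2| + |b * d 1 ^ 2| + |c * d 2 ^ 2| := abs_add_three _ _ _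
        _ = |a| * d 0 ^ 2 + |b| * d 1 ^ 2 + |c| * d 2 ^ 2 := by simp only [abs_mul, abs_sq]
        _ ≤ |a| * r ^ 2 + |b| * r ^ 2 + |c| * r ^ 2 := by
          have h0 := mul_le_mul_of_nonneg_left (hsq 0) (abs_nonneg a)
          have h1 := mul_le_mul_of_nonneg_left (hsq 1) (abs_nonneg b)
          have h2 := mul_le_mul_of_nonneg_left (hsq 2) (abs_nonneg c)
          linarith
        _ = ((A * r ^ 2 : ℕ) : ℤ) := by rw [hA]; push_cast; ring
        _ < _ := by exact_mod_cast hr1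
    obtain ⟨e0, e1, e2⟩ := haniso _ _ _ (Int.eq_zero_of_abs_lt_dvd hdvd hlt)
    funext i
    fin_cases i <;> assumption
  have hcard : Fintype.card (ZMod (p ^ m) × ZMod (p ^ n) × ZMod p) ≤
      (p * A) ^ 3 * (r + 1) ^ Fintype.card (Fin 3) := by
    simp only [Fintype.card_prod, ZMod.card, Fintype.card_fin]
    refine (Nat.pow_le_pow_iff_left (two_ne_zero)).mp ?_
    calc (p ^ m * (p ^ n * p)) ^ 2 = p ^ (2 * m) * (p ^ n) ^ 2 * p ^ 2 := by ring
      _ ≤ p ^ (n + 1) * (p ^ n) ^ 2 * p ^ 2 := by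
        gcongr
        exact hp.one_le
      _ = p ^ 3 * (p ^ n) ^ 3 := by ring
      _ ≤ p ^ 3 * (A * (r + 1) ^ 2) ^ 3 := by gcongr
      _ = (p * A) ^ 3 * ((r + 1) ^ 3) ^ 2 := by ring
      _ ≤ ((p * A) ^ 3) ^ 2 * ((r + 1) ^ 3) ^ 2 := by
        exact Nat.mul_le_mul_right _ (Nat.le_self_pow two_ne_zero _)
      _ = _ := by ring
  obtain ⟨t, ht, htb⟩ := exists_small_preimage f r ((p * A) ^ 3) hker hcard ![x, y, z]
  obtain ⟨h1, h2, h3⟩ := hf _ _ ht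
  simp only [Matrix.cons_val] at h1 h2 h3
  have hD : (p : ℤ) ^ m ∣ x * t 1 - y * t 0 := by
    obtain ⟨k, hk⟩ := h1
    exact ⟨k, by linear_combination hk⟩
  have hB : (p : ℤ) ^ n ∣ a * x * t 0 + b * y * t 1 + c * z * t 2 := by
    obtain ⟨k, hk⟩ := h2.add hQ
    exact ⟨k, by linear_combination hk⟩
  obtain ⟨hE, hQt⟩ := dvd_of_mem_lattice hp hnm hmn hc hx hz hQ hD hB
  have hpm : (p : ℤ) ∣ (p : ℤ) ^ m := dvd_pow_self _ (by omega)
  have ht0 : ¬ (p : ℤ) ∣ t 0 := fun h => hx ((dvd_sub_right h).mp h3)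
  have ht1 : ¬ (p : ℤ) ∣ t 1 := fun h =>
    hpp.not_dvd_mul hy ht0 ((dvd_sub_right (h.mul_left x)).mp (hpm.trans hD))
  have ht2 : ¬ (p : ℤ) ∣ t 2 := fun h =>
    hpp.not_dvd_mul hz ht0 ((dvd_sub_right (h.mul_left x)).mp (hpm.trans hE))
  refine ⟨r, t 0, t 1, t 2, ?_, hpp.not_dvd_mul (hpp.not_dvd_mul ht0 ht1) ht2, hQt, ?_⟩
  · nlinarith
  · push_cast at htb ⊢
    exact max_le (max_le (htb 0) (htb 1)) (htb 2)

/-- For fixed `p` and fixed coefficients coprime to `p`, for all large `n`: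
whenever the congruence `α₁x₁² + α₂x₂² + α₃x₃² ≡ 0 (mod pⁿ)` has a solution with all
coordinates coprime to `p`, it has such a solution of size `≤ C · (pⁿ)^{1/2+ε}`. -/
theorem small_unit_solution_fixed_coefficients
    (ε : ℝ) (hε : 0 < ε) (p : ℕ) (hp : p.Prime) (hp2 : 2 < p)
    (α₁ α₂ α₃ : ℤ)
    (h1 : ¬ (p : ℤ) ∣ α₁) (h2 : ¬ (p : ℤ) ∣ α₂) (h3 : ¬ (p : ℤ) ∣ α₃) :
    ∃ C : ℝ, 0 < C ∧ ∃ n₀ : ℕ, ∀ n : ℕ, n₀ ≤ n →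
      ((∃ x₁ x₂ x₃ : ℤ, ¬ (p : ℤ) ∣ x₁ * x₂ * x₃ ∧
          (p : ℤ) ^ n ∣ α₁ * x₁ ^ 2 + α₂ * x₂ ^ 2 + α₃ * x₃ ^ 2) →
        ∃ x₁ x₂ x₃ : ℤ, ¬ (p : ℤ) ∣ x₁ * x₂ * x₃ ∧
          (p : ℤ) ^ n ∣ α₁ * x₁ ^ 2 + α₂ * x₂ ^ 2 + α₃ * x₃ ^ 2 ∧
          ((max (max |x₁| |x₂|) |x₃| : ℤ) : ℝ) ≤ C * ((p : ℝ) ^ n) ^ ((1 : ℝ) / 2 + ε)) := by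
  have hq1 : ∀ n : ℕ, (1 : ℝ) ≤ (p : ℝ) ^ n := fun n =>
    one_le_pow₀ (by exact_mod_cast hp.one_le)
  by_cases hz : ∃ u v w : ℤ, ¬ (p : ℤ) ∣ u * v * w ∧ α₁ * u ^ 2 + α₂ * v ^ 2 + α₃ * w ^ 2 = 0
  · obtain ⟨u, v, w, huvw, h0⟩ := hz
    refine ⟨(max (max |u| |v|) |w| : ℤ) + 1, ?_, 0, fun n _ _ => ⟨u, v, w, huvw, ?_, ?_⟩⟩
    · have : 0 ≤ max (max |u| |v|) |w| := (abs_nonneg w).trans (le_max_right _ _)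
      have : (0 : ℝ) ≤ ((max (max |u| |v|) |w| : ℤ) : ℝ) := by exact_mod_cast this
      linarith
    · rw [h0]; exact dvd_zero _
    · have h := Real.one_le_rpow (hq1 n) (by positivity : 0 ≤ (1 : ℝ) / 2 + ε)
      have : 0 ≤ max (max |u| |v|) |w| := (abs_nonneg w).trans (le_max_right _ _)
      have : (0 : ℝ) ≤ ((max (max |u| |v|) |w| : ℤ) : ℝ) := by exact_mod_cast this
      nlinarith
  · set N : ℕ := (p * (α₁.natAbs + α₂.natAbs + α₃.natAbs)) ^ 3 with hN
    refine ⟨4 * (N + 1), by positivity, 1, fun n hn ⟨x, y, z, hxyz, hQ⟩ => ?_⟩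
    have haniso : ∀ u v w : ℤ, α₁ * u ^ 2 + α₂ * v ^ 2 + α₃ * w ^ 2 = 0 →
        u = 0 ∧ v = 0 ∧ w = 0 := fun u v w h0 => by
      by_contra hne
      exact hz (exists_unit_zero_of_isotropic hp hp2 h1 h2 h3 hxyz
        ((dvd_pow_self _ (by omega)).trans hQ) hne h0)
    obtain ⟨r, u, v, w, hr, huvw, hQ', hle⟩ := exists_small_unit_zero_of_anisotropic hp
      (by rintro rfl; exact h1 (dvd_zero _)) h3 haniso hn hxyz hQ
    refine ⟨u, v, w, huvw, hQ', ?_⟩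
    have hle' : ((max (max |u| |v|) |w| : ℤ) : ℝ) ≤ 2 * (N + 1) * (r + 1) := by
      have := (Int.cast_le (R := ℝ)).mpr hle
      rw [hN]
      push_cast [Nat.cast_natAbs] at this ⊢
      exact this
    set X := ((p : ℝ) ^ n) ^ ((1 : ℝ) / 2 + ε) with hX
    have hX1 : 1 ≤ X := Real.one_le_rpow (hq1 n) (by positivity)
    have hrX : (r : ℝ) ≤ X := by
      calc (r : ℝ) ≤ √((p : ℝ) ^ n) := Real.le_sqrt_of_sq_le (by exact_mod_cast hr)
        _ = ((p : ℝ) ^ n) ^ ((1 : ℝ) / 2) := Real.sqrt_eq_rpow _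
        _ ≤ X := Real.rpow_le_rpow_of_exponent_le (hq1 n) (by linarith)
    calc _ ≤ 2 * ((N : ℝ) + 1) * (r + 1) := hle'
      _ ≤ 2 * ((N : ℝ) + 1) * (X + X) := by gcongr
      _ = _ := by ring
end
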